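/- arXiv:1908.01943 — 2 statements merged into one kernel-verified Lean document; each statement's English description precedes it below -/
import Mathlib

section
/- Let X and Y be random vectors in ℝⁿ that are elliptically distributed with common location 0 and the same characteristic generator φ, i.e., E[exp(i⟨t,X⟩)] = φ(tᵀΣ_x t) and E[exp(i⟨t,Y⟩)] = φ(tᵀΣ_y t) for all t ∈ ℝⁿ, where Σ_x and Σ_y are positive semidefinite. If Σ_y − Σ_x is positive semidefinite, then for every Borel measurable set C ⊆ ℝⁿ that is convex and centrally symmetric (C = −C), one has P(X ∈ C) ≥ P(Y ∈ C). -/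
open MeasureTheory ProbabilityTheory Matrix

/-- Characteristic function of a random vector `X : Ω → ℝⁿ` at `t ∈ ℝⁿ`:
`E[exp(i⟨t,X⟩)]`. -/
noncomputable def charFn {Ω : Type*} [MeasurableSpace Ω] {n : ℕ}
    (P : Measure Ω) (X : Ω → (Fin n → ℝ)) (t : Fin n → ℝ) : ℂ :=
  ∫ ω, Complex.exp (((∑ i, t i * X ω i : ℝ) : ℂ) * Complex.I) ∂P

open scoped ENNReal


/-- One-dimensional Brunn–Minkowski, compact case. -/
lemma bm1_compact {K L S : Set ℝ} (hK : IsCompact K) (hL : IsCompact L) (hKn : K.Nonempty)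
    (hLn : L.Nonempty) (hS : ∀ x ∈ K, ∀ y ∈ L, (x + y) / 2 ∈ S) :
    volume K + volume L ≤ 2 * volume S := by
  obtain ⟨M, hM, hMu⟩ := hK.exists_isGreatest hKn
  obtain ⟨l, hl, hlu⟩ := hL.exists_isLeast hLn
  have e1 : volume ((fun x => x * 2 - l) ⁻¹' K) = 2⁻¹ * volume K := by
    have : (fun x : ℝ => x * 2 - l) ⁻¹' K = (fun x => x * 2) ⁻¹' ((fun x => x + (-l)) ⁻¹' K) := rfl
    rw [this, Real.volume_preimage_mul_right (by norm_num), measure_preimage_add_right]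
    congr 1
    rw [abs_of_pos (by norm_num), ENNReal.ofReal_inv_of_pos (by norm_num)]; norm_num
  have e2 : volume ((fun x => x * 2 - M) ⁻¹' L) = 2⁻¹ * volume L := by
    have : (fun x : ℝ => x * 2 - M) ⁻¹' L = (fun x => x * 2) ⁻¹' ((fun x => x + (-M)) ⁻¹' L) := rfl
    rw [this, Real.volume_preimage_mul_right (by norm_num), measure_preimage_add_right]
    congr 1
    rw [abs_of_pos (by norm_num), ENNReal.ofReal_inv_of_pos (by norm_num)]; norm_num
  have hmeas : MeasurableSet ((fun x => x * 2 - M) ⁻¹' L) :=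
    hL.measurableSet.preimage (by fun_prop)
  have hdis : AEDisjoint volume ((fun x => x * 2 - l) ⁻¹' K) ((fun x => x * 2 - M) ⁻¹' L) := by
    apply measure_mono_null (t := {(M + l) / 2}) _ (by simp)
    rintro x ⟨h1, h2⟩
    have := hMu h1
    have := hlu h2
    simp only [Set.mem_singleton_iff]
    simp only at *
    linarith
  have hsub : ((fun x => x * 2 - l) ⁻¹' K) ∪ ((fun x => x * 2 - M) ⁻¹' L) ⊆ S := by
    rintro x (h | h)
    · have := hS _ h _ hl
      simpa using this
    · have := hS _ hM _ h
      simpa using this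
  have := measure_mono (μ := volume) hsub
  rw [measure_union₀ hmeas.nullMeasurableSet hdis, e1, e2, ← mul_add] at this
  calc volume K + volume L = 2 * (2⁻¹ * (volume K + volume L)) := by
        rw [← mul_assoc, ENNReal.mul_inv_cancel (by norm_num) (by norm_num), one_mul]
    _ ≤ _ := by gcongr

lemma bm1 {A B S : Set ℝ} (hA : MeasurableSet A) (hB : MeasurableSet B) (hAn : A.Nonempty)
    (hBn : B.Nonempty) (hS : ∀ x ∈ A, ∀ y ∈ B, (x + y) / 2 ∈ S) :
    volume A + volume B ≤ 2 * volume S := by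
  obtain ⟨a, ha⟩ := hAn
  obtain ⟨b, hb⟩ := hBn
  rw [hA.measure_eq_iSup_isCompact, hB.measure_eq_iSup_isCompact]
  simp only [iSup_and']
  refine ENNReal.biSup_add_biSup_le' (p := fun K : Set ℝ => K ⊆ A ∧ IsCompact K)
    (q := fun K : Set ℝ => K ⊆ B ∧ IsCompact K) ⟨∅, by simp⟩ ⟨∅, by simp⟩ ?_
  rintro K ⟨hKA, hK⟩ L ⟨hLB, hL⟩
  have := bm1_compact (hK.insert a) (hL.insert b) (Set.insert_nonempty _ _)
    (Set.insert_nonempty _ _) (S := S) (fun x hx y hy => hS _ ?_ _ ?_)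
  · refine le_trans ?_ this
    gcongr <;> exact Set.subset_insert _ _
  · rcases hx with rfl | hx
    · exact ha
    · exact hKA hx
  · rcases hy with rfl | hy
    · exact hb
    · exact hLB hy

lemma layer {f : ℝ → ℝ≥0∞} (hf : Measurable f) (h1 : ∀ x, f x ≤ 1) :
    ∫⁻ x, f x = ∫⁻ t in Set.Ioi (0:ℝ), volume {x | ENNReal.ofReal t < f x} := by
  have hr : ∀ x, f x = ENNReal.ofReal (f x).toReal := fun x =>
    (ENNReal.ofReal_toReal (ne_top_of_le_ne_top ENNReal.one_ne_top (h1 x))).symm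
  calc ∫⁻ x, f x = ∫⁻ x, ENNReal.ofReal (f x).toReal := by
        congr 1; ext x; exact hr x
    _ = _ := by
        rw [lintegral_eq_lintegral_meas_lt volume (by filter_upwards with x using ENNReal.toReal_nonneg)
          hf.ennreal_toReal.aemeasurable]
        refine setLIntegral_congr_fun measurableSet_Ioi ?_
        intro t ht
        simp only
        congr 1
        ext x
        simp only [Set.mem_ofPred_eq]
        rw [ENNReal.ofReal_lt_iff_lt_toReal (le_of_lt ht)
          (ne_top_of_le_ne_top ENNReal.one_ne_top (h1 x))]

lemma pl1_norm {f g h : ℝ → ℝ≥0∞} (hf : Measurable f) (hg : Measurable g) (hh : Measurable h)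
    (hf1 : ∀ x, f x ≤ 1) (hg1 : ∀ x, g x ≤ 1) (hfs : ∀ t < 1, ∃ x, t < f x)
    (hgs : ∀ t < 1, ∃ x, t < g x) (H : ∀ x y, f x * g y ≤ h ((x + y) / 2) ^ 2) :
    (∫⁻ x, f x) + ∫⁻ x, g x ≤ 2 * ∫⁻ x, h x := by
  have : ∫⁻ x, min (h x) 1 ≤ ∫⁻ x, h x := lintegral_mono fun x => min_le_left _ _
  refine le_trans ?_ (mul_le_mul_right this 2)
  rw [layer hf hf1, layer hg hg1, layer (f := fun x => min (h x) 1) (by fun_prop) (fun x => min_le_right _ _)]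
  have mm : ∀ f : ℝ → ℝ≥0∞, Measurable fun t : ℝ => volume {x | ENNReal.ofReal t < f x} := by
    intro f
    have : Antitone fun t : ℝ => volume {x | ENNReal.ofReal t < f x} := fun s t hst =>
      measure_mono fun x hx => lt_of_le_of_lt (ENNReal.ofReal_le_ofReal hst) hx
    exact this.measurable
  rw [← lintegral_add_left (mm f), ← lintegral_const_mul _ (mm _)]
  refine setLIntegral_mono ((mm _).const_mul _) ?_
  intro t ht
  by_cases h1 : ENNReal.ofReal t < 1
  · refine bm1 (measurableSet_lt measurable_const hf) (measurableSet_lt measurable_const hg) (hfs _ h1) (hgs _ h1) ?_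
    intro x hx y hy
    simp only [Set.mem_ofPred_eq] at *
    refine lt_min ?_ h1
    by_contra hc
    push Not at hc
    have h2 : ENNReal.ofReal t ^ 2 < f x * g y := by
      rw [sq]; exact ENNReal.mul_lt_mul hx hy
    have := (h2.trans_le (H x y)).trans_le (pow_le_pow_left' hc 2)
    exact lt_irrefl _ this
  · have e : ∀ f : ℝ → ℝ≥0∞, (∀ x, f x ≤ 1) → volume {x | ENNReal.ofReal t < f x} = 0 := by
      intro f hf
      have : {x | ENNReal.ofReal t < f x} = ∅ := by
        ext x; simp only [Set.mem_ofPred_eq, Set.mem_empty_iff_false, iff_false, not_lt]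
        exact (hf x).trans (not_lt.1 h1)
      simp [this]
    simp [e f hf1, e g hg1]

lemma ennreal_amgm {a b c : ℝ≥0∞} (h : a + b ≤ 2 * c) : a * b ≤ c ^ 2 := by
  by_cases hc : c = ⊤
  · simp [hc]
  have h2 : 2 * c ≠ ⊤ := ENNReal.mul_ne_top (by simp) hc
  have ha : a ≠ ⊤ := ne_top_of_le_ne_top h2 (le_self_add.trans h)
  have hb : b ≠ ⊤ := ne_top_of_le_ne_top h2 (le_add_self.trans h)
  lift a to NNReal using ha
  lift b to NNReal using hb
  lift c to NNReal using hc
  norm_cast at *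
  have h' : (a:ℝ) + b ≤ 2 * c := by exact_mod_cast h
  have : (a:ℝ) * b ≤ c ^ 2 := by
    nlinarith [sq_nonneg ((a:ℝ) - b), a.2, b.2, c.2, mul_self_le_mul_self (by positivity) h']
  exact_mod_cast this

lemma pl1_bdd {f g h : ℝ → ℝ≥0∞} (hf : Measurable f) (hg : Measurable g) (hh : Measurable h)
    {N : ℝ≥0∞} (hN : N ≠ ⊤) (hf1 : ∀ x, f x ≤ N) (hg1 : ∀ x, g x ≤ N)
    (H : ∀ x y, f x * g y ≤ h ((x + y) / 2) ^ 2) :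
    (∫⁻ x, f x) * ∫⁻ x, g x ≤ (∫⁻ x, h x) ^ 2 := by
  set a := ⨆ x, f x with ha
  set b := ⨆ x, g x with hb
  have haN : a ≤ N := iSup_le hf1
  have hbN : b ≤ N := iSup_le hg1
  have haT : a ≠ ⊤ := ne_top_of_le_ne_top hN haN
  have hbT : b ≠ ⊤ := ne_top_of_le_ne_top hN hbN
  by_cases ha0 : a = 0
  · have : ∀ x, f x = 0 := fun x => le_antisymm (ha0 ▸ le_iSup f x) bot_le
    simp [this]
  by_cases hb0 : b = 0
  · have : ∀ x, g x = 0 := fun x => le_antisymm (hb0 ▸ le_iSup g x) bot_le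
    simp [this]
  set c := (a * b) ^ (1/2 : ℝ) with hc
  have hc2 : c ^ 2 = a * b := by
    rw [hc, ← ENNReal.rpow_natCast, ← ENNReal.rpow_mul]; norm_num
  have habT : a * b ≠ ⊤ := ENNReal.mul_ne_top haT hbT
  have hab0 : a * b ≠ 0 := mul_ne_zero ha0 hb0
  have hc0 : c ≠ 0 := by intro h; rw [h] at hc2; exact hab0 (by rw [← hc2]; simp)
  have hcT : c ≠ ⊤ := by intro h; rw [h] at hc2; exact habT (by rw [← hc2]; simp)
  have hsup : ∀ (f : ℝ → ℝ≥0∞) (a : ℝ≥0∞), a = ⨆ x, f x → a ≠ 0 → a ≠ ⊤ →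
      ∀ t < 1, ∃ x, t < a⁻¹ * f x := by
    intro f a haa h0 hT t ht
    have : a * t < ⨆ x, f x := by
      rw [← haa]
      calc a * t < a * 1 := (ENNReal.mul_lt_mul_iff_right h0 hT).2 ht
        _ = a := mul_one a
    obtain ⟨x, hx⟩ := lt_iSup_iff.1 this
    refine ⟨x, ?_⟩
    rw [mul_comm, ← div_eq_mul_inv, ENNReal.lt_div_iff_mul_lt (Or.inl h0) (Or.inl hT), mul_comm]
    exact hx
  have key := ennreal_amgm (pl1_norm (f := fun x => a⁻¹ * f x) (g := fun x => b⁻¹ * g x)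
    (h := fun x => c⁻¹ * h x) (by fun_prop) (by fun_prop) (by fun_prop)
    (fun x => by
      calc a⁻¹ * f x ≤ a⁻¹ * a := by gcongr; exact le_iSup f x
        _ = 1 := ENNReal.inv_mul_cancel ha0 haT)
    (fun x => by
      calc b⁻¹ * g x ≤ b⁻¹ * b := by gcongr; exact le_iSup g x
        _ = 1 := ENNReal.inv_mul_cancel hb0 hbT)
    (hsup f a ha ha0 haT) (hsup g b hb hb0 hbT)
    (fun x y => by
      calc a⁻¹ * f x * (b⁻¹ * g y) = (a * b)⁻¹ * (f x * g y) := by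
            rw [ENNReal.mul_inv (Or.inl ha0) (Or.inl haT)]; ring
        _ ≤ (a * b)⁻¹ * h ((x + y) / 2) ^ 2 := by gcongr; exact H x y
        _ = _ := by rw [← hc2, mul_pow, ENNReal.inv_pow]))
  rw [lintegral_const_mul _ hf, lintegral_const_mul _ hg, lintegral_const_mul _ hh, mul_pow,
    ← ENNReal.inv_pow, hc2] at key
  calc (∫⁻ x, f x) * ∫⁻ x, g x
      = (a * b) * ((a⁻¹ * ∫⁻ x, f x) * (b⁻¹ * ∫⁻ x, g x)) := by
        rw [show (a * b) * ((a⁻¹ * ∫⁻ x, f x) * (b⁻¹ * ∫⁻ x, g x)) =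
          (a * a⁻¹) * (b * b⁻¹) * ((∫⁻ x, f x) * ∫⁻ x, g x) by ring,
          ENNReal.mul_inv_cancel ha0 haT, ENNReal.mul_inv_cancel hb0 hbT]; simp
    _ ≤ (a * b) * ((a * b)⁻¹ * (∫⁻ x, h x) ^ 2) := by gcongr
    _ = _ := by rw [← mul_assoc, ENNReal.mul_inv_cancel hab0 habT, one_mul]

lemma pl1 {f g h : ℝ → ℝ≥0∞} (hf : Measurable f) (hg : Measurable g) (hh : Measurable h)
    (H : ∀ x y, f x * g y ≤ h ((x + y) / 2) ^ 2) :
    (∫⁻ x, f x) * ∫⁻ x, g x ≤ (∫⁻ x, h x) ^ 2 := by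
  have key : ∀ f : ℝ → ℝ≥0∞, Measurable f →
      ∫⁻ x, f x = ⨆ N : ℕ, ∫⁻ x, min (f x) N := by
    intro f hf
    rw [← lintegral_iSup (f := fun (N : ℕ) x => min (f x) (N : ℝ≥0∞)) (fun N => hf.min measurable_const)
      (fun i j hij x => min_le_min_left _ (by exact_mod_cast hij))]
    congr 1; ext x
    have : (⨆ n : ℕ, min (f x) n) = min (f x) (⨆ n : ℕ, (n : ℝ≥0∞)) := by
      exact (inf_iSup_eq (f x) fun n : ℕ => (n : ℝ≥0∞)).symm
    rw [this, ENNReal.iSup_natCast]; simp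
  have mono : ∀ f : ℝ → ℝ≥0∞, Monotone fun N : ℕ => ∫⁻ x, min (f x) N := fun f i j hij =>
    lintegral_mono fun x => min_le_min_left _ (by exact_mod_cast hij)
  rw [key f hf, key g hg, ENNReal.iSup_mul]
  refine iSup_le fun N₁ => ?_
  rw [ENNReal.mul_iSup]
  refine iSup_le fun N₂ => ?_
  set N := max N₁ N₂
  refine le_trans (mul_le_mul' (mono f (le_max_left N₁ N₂)) (mono g (le_max_right N₁ N₂))) ?_
  refine pl1_bdd (N := N) (hf.min measurable_const) (hg.min measurable_const) hh (by simp) (fun x => min_le_right _ _)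
    (fun x => min_le_right _ _) (fun x y => le_trans ?_ (H x y))
  gcongr <;> exact min_le_left _ _

/-- Prékopa–Leindler (midpoint version). -/
lemma pl : ∀ (n : ℕ) {f g h : (Fin n → ℝ) → ℝ≥0∞}, Measurable f → Measurable g → Measurable h →
    (∀ x y, f x * g y ≤ h (fun i => (x i + y i) / 2) ^ 2) →
    (∫⁻ x, f x) * ∫⁻ x, g x ≤ (∫⁻ x, h x) ^ 2 := by
  intro n
  induction n with
  | zero =>
    intro f g h hf hg hh H
    have : (volume : Measure (Fin 0 → ℝ)) = Measure.dirac 0 := Measure.volume_pi_eq_dirac 0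
    rw [this, lintegral_dirac, lintegral_dirac, lintegral_dirac]
    convert H 0 0
  | succ n ih =>
    intro f g h hf hg hh H
    have e := volume_preserving_piFinSuccAbove (fun _ : Fin (n+1) => ℝ) 0
    have key : ∀ f : (Fin (n+1) → ℝ) → ℝ≥0∞, Measurable f →
        ∫⁻ x, f x = ∫⁻ s : ℝ, ∫⁻ y : Fin n → ℝ, f (Fin.cons s y) := by
      intro f hf
      rw [← e.symm.lintegral_comp hf]
      rw [Measure.volume_eq_prod, lintegral_prod _ (by
        exact (hf.comp (MeasurableEquiv.measurable _)).aemeasurable)]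
      refine lintegral_congr fun s => lintegral_congr fun y => ?_
      congr 1
      ext i
      refine Fin.cases ?_ (fun j => ?_) i <;>
        simp [MeasurableEquiv.piFinSuccAbove, Fin.insertNthEquiv]
    have mc : Measurable fun p : ℝ × (Fin n → ℝ) => (Fin.cons p.1 p.2 : Fin (n+1) → ℝ) := by
      refine measurable_pi_lambda _ fun i => ?_
      refine Fin.cases ?_ (fun j => ?_) i
      · simpa using measurable_fst
      · simp only [Fin.cons_succ]; fun_prop
    rw [key f hf, key g hg, key h hh]
    have mm : ∀ f : (Fin (n+1) → ℝ) → ℝ≥0∞, Measurable f →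
      Measurable fun s : ℝ => ∫⁻ y : Fin n → ℝ, f (Fin.cons s y) := by
      intro f hf
      exact (hf.comp mc).lintegral_prod_right'
    have ms : ∀ (f : (Fin (n+1) → ℝ) → ℝ≥0∞) (s : ℝ), Measurable f →
      Measurable fun y : Fin n → ℝ => f (Fin.cons s y) := by
      intro f s hf
      exact hf.comp (mc.comp (by fun_prop : Measurable fun y => (s, y)))
    refine pl1 (mm f hf) (mm g hg) (mm h hh) ?_
    intro s t
    refine ih (ms f s hf) (ms g t hg) (ms h _ hh) ?_
    intro x y
    convert H (Fin.cons s x) (Fin.cons t y) using 3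
    ext i
    refine Fin.cases ?_ (fun j => ?_) i <;> simp


/-- Sum of squares. -/
def ss {k : ℕ} (x : Fin k → ℝ) : ℝ := ∑ i, x i ^ 2

/-- The vector `t eᵢ`. -/
abbrev sg {k : ℕ} (i : Fin k) (t : ℝ) : Fin k → ℝ := Pi.single i t

lemma ss_nonneg {k : ℕ} (x : Fin k → ℝ) : 0 ≤ ss x := Finset.sum_nonneg fun _ _ => sq_nonneg _

lemma ss_cont {k : ℕ} : Continuous (ss : (Fin k → ℝ) → ℝ) := by unfold ss; fun_prop

lemma sq_le_ss {k : ℕ} (x : Fin k → ℝ) (i : Fin k) : x i ^ 2 ≤ ss x :=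
  Finset.single_le_sum (f := fun i => x i ^ 2) (fun _ _ => sq_nonneg _) (Finset.mem_univ i)

lemma integrable_exp_ss {k : ℕ} {b : ℝ} (hb : 0 < b) :
    Integrable (fun x : Fin k → ℝ => Real.exp (-b * ss x)) := by
  have : (fun x : Fin k → ℝ => Real.exp (-b * ss x)) =
      fun x => ∏ i, (fun t : ℝ => Real.exp (-b * t ^ 2)) (x i) := by
    ext x; rw [← Real.exp_sum, ss, Finset.mul_sum]
  rw [this]
  exact Integrable.fintype_prod (fun _ => integrable_exp_neg_mul_sq hb)

/-- Anderson inequality for a log-concave even weight. -/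
lemma anderson {k : ℕ} {W : (Fin k → ℝ) → ℝ} (hc : Continuous W) (h0 : ∀ x, 0 ≤ W x)
    (heven : ∀ x, W (-x) = W x) (hinteg : ∀ y, Integrable (fun x => W (x + y)))
    (hlc : ∀ x y, W x * W y ≤ W (fun i => (x i + y i) / 2) ^ 2)
    {C : Set (Fin k → ℝ)} (hC : MeasurableSet C) (hconv : Convex ℝ C) (hsym : ∀ x ∈ C, -x ∈ C)
    (y : Fin k → ℝ) : ∫ x in C, W (x + y) ≤ ∫ x in C, W x := by
  have hW0 : Integrable W := by simpa using hinteg 0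
  rw [integral_eq_lintegral_of_nonneg_ae (by filter_upwards with x using h0 _)
    (by fun_prop), integral_eq_lintegral_of_nonneg_ae (by filter_upwards with x using h0 _)
    (by fun_prop)]
  refine ENNReal.toReal_mono ?_ ?_
  · exact (hW0.integrableOn (s := C)).lintegral_lt_top.ne
  set f : (Fin k → ℝ) → ℝ≥0∞ := C.indicator fun x => ENNReal.ofReal (W (x + y)) with hf
  set g : (Fin k → ℝ) → ℝ≥0∞ := C.indicator fun x => ENNReal.ofReal (W (x - y)) with hg
  set h : (Fin k → ℝ) → ℝ≥0∞ := C.indicator fun x => ENNReal.ofReal (W x) with hh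
  have mf : Measurable f := Measurable.indicator (by fun_prop) hC
  have mg : Measurable g := Measurable.indicator (by fun_prop) hC
  have mh : Measurable h := Measurable.indicator (by fun_prop) hC
  have hfg : ∫⁻ x, g x = ∫⁻ x, f x := by
    rw [← (Measure.measurePreserving_neg (volume : Measure (Fin k → ℝ))).lintegral_comp mf]
    congr 1; ext x
    have hiff : -x ∈ C ↔ x ∈ C := ⟨fun h => by simpa using hsym _ h, hsym x⟩
    by_cases hx : x ∈ C
    · simp only [hf, hg, Set.indicator_of_mem hx, Set.indicator_of_mem (hiff.2 hx)]
      rw [← heven]; congr 2; abel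
    · simp only [hf, hg, Set.indicator_of_notMem hx, Set.indicator_of_notMem (fun h => hx (hiff.1 h))]
  have key := pl k mf mg mh (by
    intro x z
    by_cases hx : x ∈ C
    swap
    · simp [hf, Set.indicator_of_notMem hx]
    by_cases hz : z ∈ C
    swap
    · simp [hg, Set.indicator_of_notMem hz]
    have hm : (fun i => (x i + z i) / 2) ∈ C := by
      have := hconv hx hz (a := 1/2) (b := 1/2) (by norm_num) (by norm_num) (by norm_num)
      convert this using 1
      ext i; simp; ring
    simp only [hf, hg, hh, Set.indicator_of_mem hx, Set.indicator_of_mem hz, Set.indicator_of_mem hm]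
    rw [← ENNReal.ofReal_mul (h0 _), ← ENNReal.ofReal_pow (h0 _)]
    apply ENNReal.ofReal_le_ofReal
    convert hlc (x + y) (z - y) using 4
    simp)
  rw [hfg, ← sq] at key
  have := (ENNReal.pow_right_strictMono (n := 2) (by norm_num)).le_iff_le.1 key
  rwa [lintegral_indicator hC, lintegral_indicator hC] at this

/-- Differentiation of translated integrals. -/
lemma deriv_translate {k : ℕ} {f f' : (Fin k → ℝ) → ℝ} (hf : Continuous f) (hf' : Continuous f')
    {B : ℝ} (hB : 0 ≤ B) (bf : ∀ x, |f x| ≤ B * Real.exp (-(1/4) * ss x))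
    (bf' : ∀ x, |f' x| ≤ B * Real.exp (-(1/4) * ss x)) (i : Fin k)
    (hd : ∀ x (t : ℝ), HasDerivAt (fun t : ℝ => f (x + sg i t)) (f' (x + sg i t)) t)
    (C : Set (Fin k → ℝ)) (t : ℝ) :
    Integrable (fun x => f (x + sg i t)) ∧
    HasDerivAt (fun t : ℝ => ∫ x in C, f (x + sg i t)) (∫ x in C, f' (x + sg i t)) t := by
  have hss : ∀ (x : Fin k → ℝ) (t : ℝ), ss x / 2 - t ^ 2 ≤ ss (x + sg i t) := by
    intro x t
    have h1 : ∑ j, (x j ^ 2 / 2 - (sg i t) j ^ 2) ≤ ss (x + sg i t) := by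
      refine Finset.sum_le_sum fun j _ => ?_
      simp only [Pi.add_apply]
      nlinarith [sq_nonneg (x j + 2 * (sg i t) j)]
    rw [Finset.sum_sub_distrib, ← Finset.sum_div] at h1
    have : ∑ j, (sg i t) j ^ 2 = t ^ 2 := by
      rw [Finset.sum_eq_single i] <;> simp +contextual
    rw [this] at h1
    exact h1
  have hexp : ∀ (x : Fin k → ℝ) (t T : ℝ), |t| ≤ T →
      B * Real.exp (-(1/4) * ss (x + sg i t)) ≤
        (B * Real.exp (T ^ 2 / 4)) * Real.exp (-(1/8) * ss x) := by
    intro x t T hT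
    rw [mul_assoc, ← Real.exp_add]
    gcongr
    have := sq_le_sq' (abs_le.1 hT).1 (abs_le.1 hT).2
    linarith [hss x t]
  have hinteg : ∀ t : ℝ, Integrable (fun x => f (x + sg i t)) := fun t =>
    Integrable.mono' ((integrable_exp_ss (by norm_num : (0:ℝ) < 1/8)).const_mul
      (B * Real.exp (|t| ^ 2 / 4))) (by fun_prop)
      (by filter_upwards with x using (bf _).trans (hexp x t |t| le_rfl))
  refine ⟨hinteg t, ?_⟩
  refine (hasDerivAt_integral_of_dominated_loc_of_deriv_le (μ := volume.restrict C)
    (F := fun t x => f (x + sg i t)) (F' := fun t x => f' (x + sg i t)) (s := Metric.ball t 1)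
    (bound := fun x => (B * Real.exp ((|t| + 1) ^ 2 / 4)) * Real.exp (-(1/8) * ss x))
    (Metric.ball_mem_nhds t one_pos) ?_ (hinteg t).restrict ?_ ?_ ?_ ?_).2
  · filter_upwards with s
    fun_prop
  · fun_prop
  · filter_upwards with x s hs
    refine (bf' _).trans (hexp x s _ ?_)
    rw [Metric.mem_ball, Real.dist_eq] at hs
    have := abs_sub_abs_le_abs_sub s t
    linarith
  · exact ((integrable_exp_ss (by norm_num : (0:ℝ) < 1/8)).const_mul _).restrict
  · filter_upwards with x s _
    exact hd x s

structure Radial (ψ κ κ' : ℝ → ℝ) (B : ℝ) : Prop where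
  dψ : ∀ s, HasDerivAt ψ (-(κ s) / 2) s
  dκ : ∀ s, HasDerivAt κ (κ' s) s
  cκ' : Continuous κ'
  bψ : ∀ s, 0 ≤ s → |ψ s| ≤ B * Real.exp (-(1/2) * s)
  bκ : ∀ s, 0 ≤ s → |κ s| ≤ B * Real.exp (-(1/2) * s)
  bκ' : ∀ s, 0 ≤ s → |κ' s| ≤ B * Real.exp (-(1/2) * s)
  ψ0 : ∀ s, 0 ≤ s → 0 ≤ ψ s
  ψlc : ∀ s t u, 0 ≤ s → 0 ≤ t → 0 ≤ u → u ≤ (s + t) / 2 → ψ s * ψ t ≤ ψ u ^ 2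

namespace Radial
variable {ψ κ κ' : ℝ → ℝ} {B : ℝ}

lemma cψ (h : Radial ψ κ κ' B) : Continuous ψ :=
  continuous_iff_continuousAt.2 fun s => (h.dψ s).continuousAt

lemma cκ (h : Radial ψ κ κ' B) : Continuous κ :=
  continuous_iff_continuousAt.2 fun s => (h.dκ s).continuousAt

lemma hB (h : Radial ψ κ κ' B) : 0 ≤ B := by
  have := (abs_nonneg _).trans (h.bψ 0 le_rfl)
  simpa using this

lemma aux_exp {s : ℝ} (hs : 0 ≤ s) : (1 + 2 * s) * Real.exp (-(1/2) * s) ≤ 8 * Real.exp (-(1/4) * s) := by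
  have h1 : 1 + s / 4 ≤ Real.exp (s / 4) := by linarith [Real.add_one_le_exp (s/4)]
  have h2 : 1 + 2 * s ≤ 8 * Real.exp (s / 4) := by linarith
  calc (1 + 2 * s) * Real.exp (-(1/2) * s) ≤ (8 * Real.exp (s / 4)) * Real.exp (-(1/2) * s) := by gcongr
    _ = _ := by rw [mul_assoc, ← Real.exp_add]; congr 2; ring

lemma aux_exp1 {s : ℝ} (hs : 0 ≤ s) : Real.exp (-(1/2) * s) ≤ 8 * Real.exp (-(1/4) * s) := by
  refine le_trans ?_ (aux_exp hs)
  have := Real.exp_pos (-(1/2) * s)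
  nlinarith

/-- `J = -∂ᵢ∂ᵢ W`. -/
def J (κ κ' : ℝ → ℝ) {k : ℕ} (i : Fin k) (x : Fin k → ℝ) : ℝ := κ (ss x) + 2 * x i ^ 2 * κ' (ss x)

lemma J_cont (h : Radial ψ κ κ' B) {k : ℕ} (i : Fin k) : Continuous (J κ κ' i) := by
  have := h.cκ; have := h.cκ'; have := ss_cont (k := k)
  unfold J; fun_prop

lemma J_bound (h : Radial ψ κ κ' B) {k : ℕ} (i : Fin k) (x : Fin k → ℝ) :
    |J κ κ' i x| ≤ 8 * B * Real.exp (-(1/4) * ss x) := by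
  have hs := ss_nonneg x
  have hB := h.hB
  calc |J κ κ' i x| ≤ |κ (ss x)| + |2 * x i ^ 2 * κ' (ss x)| := abs_add_le _ _
    _ = |κ (ss x)| + 2 * x i ^ 2 * |κ' (ss x)| := by rw [abs_mul, abs_of_nonneg (by positivity : 0 ≤ 2 * x i ^ 2)]
    _ ≤ B * Real.exp (-(1/2) * ss x) + 2 * ss x * (B * Real.exp (-(1/2) * ss x)) := by
        gcongr
        · exact h.bκ _ hs
        · exact sq_le_ss x i
        · exact h.bκ' _ hs
    _ = B * ((1 + 2 * ss x) * Real.exp (-(1/2) * ss x)) := by ring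
    _ ≤ B * (8 * Real.exp (-(1/4) * ss x)) := mul_le_mul_of_nonneg_left (aux_exp hs) hB
    _ = _ := by ring

lemma ss_single {k : ℕ} (i : Fin k) (x : Fin k → ℝ) (t : ℝ) :
    ss (x + sg i t) = ss x + 2 * t * x i + t ^ 2 := by
  unfold ss
  have : ∀ j, (x + sg i t) j ^ 2 = x j ^ 2 + (if j = i then 2 * t * x i + t ^ 2 else 0) := by
    intro j
    by_cases hj : j = i
    · subst hj; simp; ring
    · simp [hj]
  simp_rw [this]
  rw [Finset.sum_add_distrib]; simp; ring

lemma J_int_nonneg (h : Radial ψ κ κ' B) {k : ℕ} (i : Fin k)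
    {C : Set (Fin k → ℝ)} (hC : MeasurableSet C) (hconv : Convex ℝ C) (hsym : ∀ x ∈ C, -x ∈ C) :
    0 ≤ ∫ x in C, J κ κ' i x := by
  have cs := ss_cont (k := k)
  have c1 := h.cψ; have c2 := h.cκ; have c3 := h.cκ'; have hB := h.hB
  have dss : ∀ (x : Fin k → ℝ) (t : ℝ), HasDerivAt (fun t : ℝ => ss (x + sg i t))
      (2 * (x + sg i t) i) t := by
    intro x t
    simp_rw [ss_single]
    have := (((hasDerivAt_id t).const_mul 2).mul_const (x i)).const_add (ss x) |>.add
      ((hasDerivAt_id t).pow 2)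
    refine HasDerivAt.congr_deriv this ?_
    simp; ring
  have b1 : ∀ x : Fin k → ℝ, |ψ (ss x)| ≤ 8 * B * Real.exp (-(1/4) * ss x) := fun x => by
    refine (h.bψ _ (ss_nonneg x)).trans ?_
    have := aux_exp1 (ss_nonneg x)
    nlinarith
  have b2 : ∀ x : Fin k → ℝ, |-(x i * κ (ss x))| ≤ 8 * B * Real.exp (-(1/4) * ss x) := fun x => by
    rw [abs_neg, abs_mul]
    have hx : |x i| ≤ 1 + 2 * ss x := by
      have := sq_le_ss x i
      rw [← sq_abs] at this
      nlinarith [sq_nonneg (|x i| - 1)]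
    calc |x i| * |κ (ss x)| ≤ (1 + 2 * ss x) * (B * Real.exp (-(1/2) * ss x)) := by
          exact mul_le_mul hx (h.bκ _ (ss_nonneg x)) (abs_nonneg _) (by linarith [ss_nonneg x])
      _ = B * ((1 + 2 * ss x) * Real.exp (-(1/2) * ss x)) := by ring
      _ ≤ B * (8 * Real.exp (-(1/4) * ss x)) := mul_le_mul_of_nonneg_left (aux_exp (ss_nonneg x)) hB
      _ = _ := by ring
  have D1 := deriv_translate (f := fun x => ψ (ss x)) (f' := fun x => -(x i * κ (ss x)))
    (by fun_prop) (by fun_prop) (by positivity : 0 ≤ 8 * B) b1 b2 i (by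
      intro x t
      have := (h.dψ (ss (x + sg i t))).comp t (dss x t)
      refine HasDerivAt.congr_deriv this ?_
      ring) C
  have D2 := deriv_translate (f := fun x => -(x i * κ (ss x))) (f' := fun x => -J κ κ' i x)
    (by fun_prop) (h.J_cont i).neg (by positivity : 0 ≤ 8 * B) b2
    (fun x => by rw [abs_neg]; exact h.J_bound i x) i (by
      intro x t
      have h1 : HasDerivAt (fun t : ℝ => (x + sg i t) i) 1 t := by
        simp only [Pi.add_apply, Pi.single_eq_same]
        exact (hasDerivAt_id t).const_add (x i)
      have := (h1.mul ((h.dκ (ss (x + sg i t))).comp t (dss x t))).neg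
      refine HasDerivAt.congr_deriv this ?_
      simp only [J, Function.comp]
      ring) C
  set G := fun t : ℝ => ∫ x in C, ψ (ss (x + sg i t)) with hG
  by_contra hneg
  push Not at hneg
  have hdG : deriv G = fun t => ∫ x in C, -((x + sg i t) i * κ (ss (x + sg i t))) :=
    funext fun t => (D1 t).2.deriv
  have hG0 : G 0 = ∫ x in C, ψ (ss x) := by simp [hG]
  have hmax : ∀ t, G t ≤ G 0 := by
    intro t
    rw [hG0]
    refine anderson (W := fun x => ψ (ss x)) (by fun_prop) (fun x => h.ψ0 _ (ss_nonneg x))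
      (fun x => by simp [ss]) ?_ ?_ hC hconv hsym _
    · intro y
      have := (D1 0).1
      simp only [Pi.single_zero, add_zero] at this
      exact this.comp_add_right y
    · intro x y
      refine h.ψlc _ _ _ (ss_nonneg x) (ss_nonneg y) (ss_nonneg _) ?_
      unfold ss
      rw [← Finset.sum_add_distrib, Finset.sum_div]
      refine Finset.sum_le_sum fun j _ => ?_
      nlinarith [sq_nonneg (x j - y j)]
  have hcrit : deriv G 0 = 0 :=
    (IsLocalMax.deriv_eq_zero (Filter.Eventually.of_forall hmax))
  have hdd : deriv (deriv G) 0 = - ∫ x in C, J κ κ' i x := by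
    rw [hdG, (D2 0).2.deriv]
    simp [integral_neg]
  have hpos : 0 < deriv (deriv G) 0 := by rw [hdd]; linarith
  have hmin := isLocalMin_of_deriv_deriv_pos hpos hcrit (D1 0).2.continuousAt
  have hconst : G =ᶠ[nhds 0] fun _ => G 0 := by
    filter_upwards [hmin] with t ht
    exact le_antisymm (hmax t) ht
  have := hconst.deriv.deriv_eq
  simp at this
  linarith

end Radial


lemma cov_diag {k : ℕ} (c : Fin k → ℝ) (hc : ∀ j, c j ≠ 0) {G : (Fin k → ℝ) → ℝ}
    (hG : Measurable G) : ∫ x, G x = |∏ j, c j| * ∫ x, G (c * x) := by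
  have hdet : (diagonal c).det = ∏ j, c j := det_diagonal
  have h0 : (diagonal c).det ≠ 0 := by rw [hdet]; exact Finset.prod_ne_zero_iff.2 fun j _ => hc j
  have := Real.smul_map_diagonal_volume_pi h0
  conv_lhs => rw [← this]
  rw [integral_smul_measure, integral_map (by
    exact (LinearMap.continuous_of_finiteDimensional _).aemeasurable) hG.aestronglyMeasurable, hdet,
    ENNReal.toReal_ofReal (abs_nonneg _), smul_eq_mul]
  congr 2
  ext x
  congr 1
  ext j
  simp [Matrix.mulVec_diagonal]

/-- Coordinate scaling vector. -/
def us {k : ℕ} (i : Fin k) (t : ℝ) : Fin k → ℝ := Function.update 1 i t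

lemma us_prod {k : ℕ} (i : Fin k) (t : ℝ) : ∏ j, us i t j = t := by
  unfold us
  rw [Finset.prod_update_of_mem (Finset.mem_univ i)]; simp

lemma us_ne {k : ℕ} (i : Fin k) {t : ℝ} (ht : t ≠ 0) (j : Fin k) : us i t j ≠ 0 := by
  unfold us
  by_cases h : j = i
  · subst h; simpa
  · simp [h]

lemma us_mul {k : ℕ} (i : Fin k) {t : ℝ} (ht : t ≠ 0) : us i t⁻¹ * us i t = 1 := by
  ext j
  unfold us
  by_cases h : j = i
  · subst h; simp [ht]
  · simp [h]

lemma ss_us {k : ℕ} (i : Fin k) (t : ℝ) (x : Fin k → ℝ) :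
    ss (us i t * x) = ss x + (t ^ 2 - 1) * x i ^ 2 := by
  unfold ss
  have : ∀ j, (us i t * x) j ^ 2 = x j ^ 2 + (if j = i then (t ^ 2 - 1) * x i ^ 2 else 0) := by
    intro j
    unfold us
    by_cases hj : j = i
    · subst hj; simp; ring
    · simp [hj]
  simp_rw [this]
  rw [Finset.sum_add_distrib]; simp

lemma ss_us_ge {k : ℕ} (i : Fin k) {t c : ℝ} (x : Fin k → ℝ) (hc1 : c ≤ 1) (hct : c ≤ t ^ 2) :
    c * ss x ≤ ss (us i t * x) := by
  rw [ss_us]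
  have h1 := sq_le_ss x i
  have h2 := sq_nonneg (x i)
  nlinarith [mul_nonneg (sub_nonneg.2 hc1) (sub_nonneg.2 h1), mul_nonneg (sub_nonneg.2 hct) h2]

lemma convex_scale {k : ℕ} {C : Set (Fin k → ℝ)} (hconv : Convex ℝ C) (c : Fin k → ℝ) :
    Convex ℝ {x | c * x ∈ C} := by
  have : {x | c * x ∈ C} = (LinearMap.mulLeft ℝ c) ⁻¹' C := rfl
  rw [this]
  exact hconv.linear_preimage _

namespace Radial
variable {ψ κ κ' : ℝ → ℝ} {B : ℝ}

lemma kint (h : Radial ψ κ κ' B) {k : ℕ} : Integrable (fun x : Fin k → ℝ => κ (ss x)) := by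
  have := h.cκ; have := ss_cont (k := k)
  refine Integrable.mono' ((integrable_exp_ss (by norm_num : (0:ℝ) < 1/2)).const_mul B)
    (by fun_prop) (by filter_upwards with x using h.bκ _ (ss_nonneg x))

lemma deriv_scale (h : Radial ψ κ κ' B) {k : ℕ} (i : Fin k) (C : Set (Fin k → ℝ)) {t : ℝ}
    (ht : 0 < t) : HasDerivAt (fun t : ℝ => ∫ x in C, t * κ (ss (us i t * x)))
      (∫ x in C, J κ κ' i (us i t * x)) t := by
  have cs := ss_cont (k := k)
  have c2 := h.cκ; have c3 := h.cκ'; have hB := h.hB; have cJ := h.J_cont i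
  set c := min 1 (t ^ 2 / 4) with hc
  have hc0 : 0 < c := lt_min one_pos (by positivity)
  refine (hasDerivAt_integral_of_dominated_loc_of_deriv_le (μ := volume.restrict C)
    (F := fun t x => t * κ (ss (us i t * x))) (F' := fun t x => J κ κ' i (us i t * x))
    (s := Set.Ioi (t / 2))
    (bound := fun x => (8 * B) * Real.exp (-(c/4) * ss x))
    (Ioi_mem_nhds (by linarith)) ?_ ?_ ?_ ?_ ?_ ?_).2
  · filter_upwards with s
    fun_prop
  · refine Integrable.restrict ?_
    refine Integrable.mono' (((integrable_exp_ss (by positivity : (0:ℝ) < c/2)).const_mul B).const_mul |t|)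
      (by fun_prop) ?_
    filter_upwards with x
    rw [Real.norm_eq_abs, abs_mul]
    gcongr
    refine (h.bκ _ (ss_nonneg _)).trans ?_
    refine mul_le_mul_of_nonneg_left (Real.exp_le_exp.2 ?_) hB
    have := ss_us_ge i (t := t) (c := c) x (min_le_left _ _) ((min_le_right _ _).trans (by nlinarith))
    linarith
  · fun_prop
  · filter_upwards with x s hs
    refine (h.J_bound i _).trans ?_
    refine mul_le_mul_of_nonneg_left (Real.exp_le_exp.2 ?_) (by positivity)
    have hs' : t / 2 < s := hs
    have := ss_us_ge i (t := s) (c := c) x (min_le_left _ _) ((min_le_right _ _).trans (by nlinarith))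
    linarith
  · exact ((integrable_exp_ss (by positivity : (0:ℝ) < c/4)).const_mul _).restrict
  · filter_upwards with x s _
    have d1 : HasDerivAt (fun s : ℝ => ss (us i s * x)) (2 * s * x i ^ 2) s := by
      simp_rw [ss_us]
      have := ((((hasDerivAt_id s).pow 2).sub_const 1).mul_const (x i ^ 2)).const_add (ss x)
      refine HasDerivAt.congr_deriv this ?_
      simp
    have := (hasDerivAt_id s).mul ((h.dκ (ss (us i s * x))).comp s d1)
    refine HasDerivAt.congr_deriv this ?_
    simp [J, us]
    ring

lemma core1 (h : Radial ψ κ κ' B) {k : ℕ} (i : Fin k)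
    {C : Set (Fin k → ℝ)} (hC : MeasurableSet C) (hconv : Convex ℝ C) (hsym : ∀ x ∈ C, -x ∈ C)
    {l : ℝ} (hl0 : 0 < l) (hl1 : l ≤ 1) :
    ∫ x in C, κ (ss x) ≤ ∫ x in {x | us i l * x ∈ C}, κ (ss x) := by
  have cs := ss_cont (k := k)
  have c2 := h.cκ; have cJ := h.J_cont i
  have mset : ∀ t, MeasurableSet {x | us i t * x ∈ C} := fun t =>
    hC.preimage (by fun_prop : Measurable fun x => us i t * x)
  have key : ∀ (G : (Fin k → ℝ) → ℝ), Continuous G → ∀ t, 0 < t →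
      ∫ x in {x | us i t⁻¹ * x ∈ C}, G x = t * ∫ x in C, G (us i t * x) := by
    intro G hG t ht
    rw [← integral_indicator (mset _), cov_diag (us i t) (us_ne i ht.ne')
      (hG.measurable.indicator (mset _)), us_prod, abs_of_pos ht, ← integral_indicator hC]
    congr 2
    ext x
    have : us i t⁻¹ * (us i t * x) = x := by rw [← mul_assoc, us_mul i ht.ne', one_mul]
    by_cases hx : x ∈ C
    · have hm : us i t * x ∈ {x | us i t⁻¹ * x ∈ C} := by
        change us i t⁻¹ * (us i t * x) ∈ C
        rwa [this]
      rw [Set.indicator_of_mem hx, Set.indicator_of_mem hm]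
    · have hm : us i t * x ∉ {x | us i t⁻¹ * x ∈ C} := by
        change ¬ us i t⁻¹ * (us i t * x) ∈ C
        rwa [this]
      rw [Set.indicator_of_notMem hx, Set.indicator_of_notMem hm]
  set F := fun t : ℝ => ∫ x in C, t * κ (ss (us i t * x)) with hF
  have hFmono : MonotoneOn F (Set.Ioi 0) := by
    refine monotoneOn_of_deriv_nonneg (convex_Ioi 0) ?_ ?_ ?_
    · exact fun t ht => (h.deriv_scale i C ht).continuousAt.continuousWithinAt
    · rw [interior_Ioi]
      exact fun t ht => (h.deriv_scale i C ht).differentiableAt.differentiableWithinAt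
    · rw [interior_Ioi]
      intro t ht
      rw [(h.deriv_scale i C ht).deriv]
      have ht' : 0 < t := ht
      have h1 := key _ cJ t ht
      have h2 := h.J_int_nonneg i (mset t⁻¹) (convex_scale hconv _) (fun x hx => by
        have := hsym _ hx
        change us i t⁻¹ * (-x) ∈ C
        rwa [mul_neg])
      rw [h1] at h2
      exact nonneg_of_mul_nonneg_right h2 ht'
  have hFt : ∀ t, 0 < t → F t = ∫ x in {x | us i t⁻¹ * x ∈ C}, κ (ss x) := by
    intro t ht
    rw [key (fun x => κ (ss x)) (by fun_prop) t ht, ← integral_const_mul]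
  have h1 := hFt 1 one_pos
  have h2 := hFt l⁻¹ (inv_pos.2 hl0)
  have h3 := hFmono (Set.mem_Ioi.2 one_pos) (Set.mem_Ioi.2 (inv_pos.2 hl0)) ((one_le_inv₀ hl0).2 hl1)
  have e0 : us i (1:ℝ)⁻¹ = 1 := by simp [us]
  have e : {x | us i (1:ℝ)⁻¹ * x ∈ C} = C := by ext x; rw [e0]; simp
  rw [h1, h2, inv_inv, e] at h3
  exact h3

lemma core (h : Radial ψ κ κ' B) {k : ℕ}
    {C : Set (Fin k → ℝ)} (hC : MeasurableSet C) (hconv : Convex ℝ C) (hsym : ∀ x ∈ C, -x ∈ C)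
    {c : Fin k → ℝ} (hc0 : ∀ j, 0 < c j) (hc1 : ∀ j, c j ≤ 1) :
    ∫ x in C, κ (ss x) ≤ ∫ x in {x | c * x ∈ C}, κ (ss x) := by
  have main : ∀ T : Finset (Fin k),
      ∫ x in C, κ (ss x) ≤ ∫ x in {x | (fun j => if j ∈ T then c j else 1) * x ∈ C}, κ (ss x) := by
    intro T
    induction T using Finset.induction_on with
    | empty =>
      apply le_of_eq
      congr 2
      ext x
      have : (fun j : Fin k => (1:ℝ)) * x = x := by ext j; simp
      simp [this]
    | insert i T hi ih =>
      refine ih.trans ?_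
      refine (h.core1 i (C := {x | (fun j => if j ∈ T then c j else 1) * x ∈ C})
        (hC.preimage (by fun_prop : Measurable fun x => _ * x)) (convex_scale hconv _) (fun x hx => by
        have := hsym _ hx
        change _ * (-x) ∈ C
        rwa [mul_neg]) (hc0 i) (hc1 i)).trans (le_of_eq ?_)
      congr 2
      ext x
      have : (fun j => if j ∈ T then c j else 1) * (us i (c i) * x) =
          (fun j => if j ∈ insert i T then c j else 1) * x := by
        ext j
        unfold us
        by_cases hj : j = i
        · subst hj; simp [hi]
        · simp [hj]
      simp [this]
  simpa using main Finset.univ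

end Radial


/-- The weights. -/
noncomputable def psim (m : ℕ) (s : ℝ) : ℝ := Real.exp (-s ^ (m + 1))
/-- The weights. -/
noncomputable def kapm (m : ℕ) (s : ℝ) : ℝ := 2 * (m + 1) * (s ^ m * Real.exp (-s ^ (m + 1)))
/-- The weights. -/
noncomputable def kapm' (m : ℕ) (s : ℝ) : ℝ :=
  2 * (m + 1) * (m * (s ^ (m - 1) * Real.exp (-s ^ (m + 1))) - (m + 1) * (s ^ (2 * m) * Real.exp (-s ^ (m + 1))))

lemma pow_exp_bound (m j : ℕ) {s : ℝ} (hs : 0 ≤ s) :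
    s ^ j * Real.exp (-s ^ (m + 1)) ≤ (2 ^ j * j.factorial * Real.exp 1) * Real.exp (-(1 / 2) * s) := by
  have h1 : s - 1 ≤ s ^ (m + 1) := by
    rcases le_total s 1 with h | h
    · have := pow_nonneg hs (m + 1); linarith
    · have := le_self_pow₀ h (Nat.succ_ne_zero m)
      simp only [Nat.succ_eq_add_one] at this
      linarith
  have h2 : Real.exp (-s ^ (m + 1)) ≤ Real.exp (1 - s) := Real.exp_le_exp.2 (by linarith)
  have h3 := Real.pow_div_factorial_le_exp (s / 2) (by positivity) j
  have h4 : s ^ j ≤ 2 ^ j * j.factorial * Real.exp (s / 2) := by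
    rw [div_le_iff₀ (by positivity), div_pow, div_le_iff₀ (by positivity)] at h3
    linarith
  calc _ ≤ (2 ^ j * j.factorial * Real.exp (s / 2)) * Real.exp (1 - s) := by gcongr
    _ = _ := by
      rw [mul_assoc, ← Real.exp_add, mul_assoc _ (Real.exp 1), ← Real.exp_add]
      congr 2; ring

lemma kap_radial (m : ℕ) : ∃ B, Radial (psim m) (kapm m) (kapm' m) B := by
  set K : ℕ → ℝ := fun j => 2 ^ j * j.factorial * Real.exp 1 with hK
  have K0 : ∀ j, 0 ≤ K j := fun j => by positivity
  have dpow : ∀ (j : ℕ) (s : ℝ), HasDerivAt (fun s : ℝ => s ^ j) (j * s ^ (j - 1)) s := fun j s => hasDerivAt_pow j s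
  have dexp : ∀ (s : ℝ), HasDerivAt (psim m) (-((m + 1) * s ^ m * Real.exp (-s ^ (m + 1)))) s := by
    intro s
    have := ((dpow (m + 1) s).neg).exp
    refine HasDerivAt.congr_deriv this ?_
    simp
    ring
  have hb : ∀ j s, 0 ≤ s → s ^ j * Real.exp (-s ^ (m + 1)) ≤ K j * Real.exp (-(1 / 2) * s) := fun j s hs => pow_exp_bound m j hs
  have hp : ∀ j s, (0:ℝ) ≤ s → 0 ≤ s ^ j * Real.exp (-s ^ (m + 1)) := fun j s hs => by positivity
  refine ⟨K 0 + 2 * (m + 1) * K m + 2 * (m + 1) * (m * K (m - 1) + (m + 1) * K (2 * m)), ?_, ?_, ?_, ?_, ?_, ?_, ?_, ?_⟩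
  · intro s
    refine HasDerivAt.congr_deriv (dexp s) ?_
    unfold kapm; ring
  · intro s
    have := ((dpow m s).mul (dexp s)).const_mul (2 * ((m:ℝ) + 1))
    refine HasDerivAt.congr_deriv this ?_
    unfold kapm' psim; ring
  · unfold kapm'; fun_prop
  · intro s hs
    have h1 := hb 0 s hs
    have h2 := mul_nonneg (K0 m) (Real.exp_pos (-(1 / 2) * s)).le
    have h3 := mul_nonneg (K0 (m-1)) (Real.exp_pos (-(1 / 2) * s)).le
    have h4 := mul_nonneg (K0 (2*m)) (Real.exp_pos (-(1 / 2) * s)).le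
    rw [abs_of_nonneg (by unfold psim; positivity)]
    unfold psim
    have hm : (0:ℝ) ≤ m := by positivity
    simp only [pow_zero, one_mul] at h1
    have : 0 ≤ (2 * (m + 1) * K m + 2 * (m + 1) * (m * K (m - 1) + (m + 1) * K (2 * m))) * Real.exp (-(1 / 2) * s) := by
      have := K0 m; have := K0 (m-1); have := K0 (2*m)
      positivity
    nlinarith
  · intro s hs
    have h1 := mul_le_mul_of_nonneg_left (hb m s hs) (by positivity : 0 ≤ 2 * ((m:ℝ) + 1))
    rw [abs_of_nonneg (by unfold kapm; positivity)]
    unfold kapm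
    have : 0 ≤ (K 0 + 2 * (m + 1) * (m * K (m - 1) + (m + 1) * K (2 * m))) * Real.exp (-(1 / 2) * s) := by
      have := K0 0; have := K0 (m-1); have := K0 (2*m)
      positivity
    linarith
  · intro s hs
    have h1 := mul_le_mul_of_nonneg_left (hb (m-1) s hs) (by positivity : 0 ≤ (m:ℝ))
    have h2 := mul_le_mul_of_nonneg_left (hb (2*m) s hs) (by positivity : 0 ≤ (m:ℝ) + 1)
    have : 0 ≤ (K 0 + 2 * (m + 1) * K m) * Real.exp (-(1 / 2) * s) := by
      have := K0 0; have := K0 m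
      positivity
    unfold kapm'
    rw [abs_mul, abs_of_nonneg (by positivity : 0 ≤ 2 * ((m:ℝ) + 1))]
    have h3 : |(m * (s ^ (m - 1) * Real.exp (-s ^ (m + 1))) - (m + 1) * (s ^ (2 * m) * Real.exp (-s ^ (m + 1))))| ≤
      m * (K (m-1) * Real.exp (-(1 / 2) * s)) + (m+1) * (K (2 *m) * Real.exp (-(1 / 2) * s)) := by
      refine (abs_sub _ _).trans ?_
      rw [abs_of_nonneg (by positivity), abs_of_nonneg (by positivity)]
      linarith
    have h4 := mul_le_mul_of_nonneg_left h3 (by positivity : 0 ≤ 2 * ((m:ℝ) + 1))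
    linarith
  · intro s _; unfold psim; positivity
  · intro s t u hs ht hu h
    unfold psim
    rw [← Real.exp_add, ← Real.exp_nat_mul, Real.exp_le_exp]
    have h1 : u ^ (m+1) ≤ ((s + t) / 2) ^ (m+1) := by gcongr
    have h2 := (convexOn_pow (m+1)).2 (Set.mem_Ici.2 hs) (Set.mem_Ici.2 ht) (by norm_num : (0:ℝ) ≤ 1/2) (by norm_num : (0:ℝ) ≤ 1/2) (by norm_num)
    simp only [smul_eq_mul] at h2
    rw [show (1/2 * s + 1/2 * t : ℝ) = (s+t)/2 by ring] at h2
    push_cast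
    linarith


lemma kapm_nonneg (m : ℕ) {s : ℝ} (hs : 0 ≤ s) : 0 ≤ kapm m s := by unfold kapm; positivity

lemma kapm_cont (m : ℕ) : Continuous (kapm m) := by unfold kapm; fun_prop

/-- Weight on Euclidean space. -/
noncomputable def wm (m : ℕ) {k : ℕ} (x : EuclideanSpace ℝ (Fin k)) : ℝ := kapm m (‖x‖ ^ 2)

lemma wm_eq (m : ℕ) {k : ℕ} (x : EuclideanSpace ℝ (Fin k)) : wm m x = kapm m (ss (WithLp.ofLp x)) := by
  unfold wm ss
  rw [EuclideanSpace.norm_sq_eq]; simp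

lemma wm_nonneg (m : ℕ) {k : ℕ} (x : EuclideanSpace ℝ (Fin k)) : 0 ≤ wm m x := kapm_nonneg m (by positivity)

lemma wm_cont (m : ℕ) {k : ℕ} : Continuous (wm m (k := k)) := by
  have := kapm_cont m
  unfold wm; fun_prop

lemma wm_int (m : ℕ) {k : ℕ} : Integrable (wm m (k := k)) := by
  obtain ⟨B, hB⟩ := kap_radial m
  have := ((PiLp.volume_preserving_ofLp (Fin k)).integrable_comp_emb
    (MeasurableEquiv.toLp 2 (Fin k → ℝ)).symm.measurableEmbedding).2 (hB.kint (k := k))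
  refine this.congr (Filter.Eventually.of_forall fun x => ?_)
  exact (wm_eq m x).symm

/-- Normalising constant. -/
noncomputable def Zm (m k : ℕ) : ℝ := ∫ x : EuclideanSpace ℝ (Fin k), wm m x

lemma Zm_pos (m k : ℕ) [NeZero k] : 0 < Zm m k := by
  unfold Zm
  let x : EuclideanSpace ℝ (Fin k) := EuclideanSpace.single 0 1
  rw [integral_pos_iff_support_of_nonneg (wm_nonneg m) (wm_int m)]
  refine IsOpen.measure_pos _ ((wm_cont m).isOpen_support) ⟨x, ?_⟩
  have hx : ‖x‖ = 1 := by simp [x]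
  rw [Function.mem_support, wm, hx, kapm]
  positivity

/-- The approximating radial measure. -/
noncomputable def num (m k : ℕ) : Measure (EuclideanSpace ℝ (Fin k)) :=
  volume.withDensity (fun x => ENNReal.ofReal (wm m x / Zm m k))

lemma num_int (m k : ℕ) [NeZero k] (g : EuclideanSpace ℝ (Fin k) → ℂ) :
    ∫ x, g x ∂(num m k) = (Zm m k)⁻¹ • ∫ x, wm m x • g x := by
  unfold num
  have := wm_cont m (k := k)
  rw [integral_withDensity_eq_integral_toReal_smul (by fun_prop) (by simp), ← integral_smul]
  congr 1
  ext x
  rw [ENNReal.toReal_ofReal (div_nonneg (wm_nonneg _ _) (Zm_pos _ _).le), smul_smul, div_eq_inv_mul]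

lemma num_set (m k : ℕ) [NeZero k] {C : Set (EuclideanSpace ℝ (Fin k))} (hC : MeasurableSet C) :
    num m k C = ENNReal.ofReal (∫ x in C, wm m x / Zm m k) := by
  unfold num
  rw [withDensity_apply _ hC, ofReal_integral_eq_lintegral_ofReal]
  · exact ((wm_int m).div_const _).restrict
  · filter_upwards with x using div_nonneg (wm_nonneg _ _) (Zm_pos _ _).le

instance (m k : ℕ) [NeZero k] : IsProbabilityMeasure (num m k) := by
  constructor
  rw [num_set m k MeasurableSet.univ, Measure.restrict_univ, integral_div]
  change ENNReal.ofReal (Zm m k / Zm m k) = 1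
  rw [div_self (Zm_pos m k).ne']; simp

lemma wm_set (m k : ℕ) {C : Set (EuclideanSpace ℝ (Fin k))} :
    ∫ x in C, wm m x = ∫ x in (WithLp.toLp 2) ⁻¹' C, kapm m (ss x) := by
  rw [← (PiLp.volume_preserving_toLp (Fin k)).setIntegral_preimage_emb
    (MeasurableEquiv.toLp 2 (Fin k → ℝ)).measurableEmbedding]
  congr 1
  ext x
  rw [wm_eq]

lemma num_core (m k : ℕ) [NeZero k] {C : Set (EuclideanSpace ℝ (Fin k))} (hC : MeasurableSet C)
    (hconv : Convex ℝ C) (hsym : ∀ x ∈ C, -x ∈ C) {c : Fin k → ℝ}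
    (hc0 : ∀ j, 0 < c j) (hc1 : ∀ j, c j ≤ 1) :
    num m k C ≤ num m k {x | WithLp.toLp 2 (c * WithLp.ofLp x) ∈ C} := by
  obtain ⟨B, hB⟩ := kap_radial m
  have mt : Measurable (WithLp.toLp 2 : (Fin k → ℝ) → _) := WithLp.measurable_toLp 2 _
  have mo : Measurable (WithLp.ofLp : EuclideanSpace ℝ (Fin k) → _) := WithLp.measurable_ofLp 2 _
  have hC2 : MeasurableSet {x : EuclideanSpace ℝ (Fin k) | WithLp.toLp 2 (c * WithLp.ofLp x) ∈ C} :=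
    hC.preimage (by fun_prop : Measurable fun x : EuclideanSpace ℝ (Fin k) => WithLp.toLp 2 (c * WithLp.ofLp x))
  rw [num_set m k hC, num_set m k hC2]
  rw [integral_div, integral_div, wm_set, wm_set]
  have := Zm_pos m k
  refine ENNReal.ofReal_le_ofReal (div_le_div_of_nonneg_right ?_ this.le)
  have := hB.core (C := (WithLp.toLp 2) ⁻¹' C) (hC.preimage mt)
    (hconv.linear_preimage (WithLp.linearEquiv 2 ℝ (Fin k → ℝ)).symm.toLinearMap)
    (fun x hx => by have := hsym _ hx; exact this) hc0 hc1
  exact this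

lemma num_charFun (m k : ℕ) [NeZero k] {u v : EuclideanSpace ℝ (Fin k)} (h : ‖u‖ = ‖v‖) :
    charFun (num m k) u = charFun (num m k) v := by
  rw [charFun_apply, charFun_apply, num_int, num_int]
  congr 1
  have hR := Submodule.reflection_sub h
  set R := (ℝ ∙ (u - v))ᗮ.reflection
  rw [← (R.measurePreserving).integral_comp R.toHomeomorph.measurableEmbedding (fun x => wm m x • Complex.exp (inner ℝ x v * Complex.I))]
  congr 1
  ext x
  have h2 : inner ℝ (R x) v = inner ℝ x u := by rw [← hR, R.inner_map_map]
  rw [h2]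
  simp [wm]

/-- One dimensional radial integral. -/
noncomputable def Nm (m k : ℕ) (g : ℝ → ℂ) : ℂ :=
  ∫ y in Set.Ioi (0:ℝ), (y ^ (((k:ℝ) - 2) / (2 * (m + 1))) * Real.exp (-y)) • g (y ^ (1 / (2 * ((m:ℝ) + 1))))

lemma wm_polar (m k : ℕ) [NeZero k] (g : ℝ → ℂ) :
    ∫ x : EuclideanSpace ℝ (Fin k), wm m x • g ‖x‖ =
      ((k : ℝ) * volume.real (Metric.ball (0 : EuclideanSpace ℝ (Fin k)) 1)) • Nm m k g := by
  have := integral_fun_norm_addHaar (volume : Measure (EuclideanSpace ℝ (Fin k)))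
    (fun r => kapm m (r ^ 2) • g r)
  unfold wm
  rw [this, finrank_euclideanSpace_fin, mul_smul, Nat.cast_smul_eq_nsmul]
  congr 2
  unfold Nm
  have hp : (0:ℝ) < 2 * (m + 1) := by positivity
  rw [← integral_comp_rpow_Ioi_of_pos (g := fun y : ℝ => (y ^ (((k:ℝ) - 2) / (2 * (m + 1))) * Real.exp (-y)) • g (y ^ (1 / (2 * ((m:ℝ) + 1))))) hp]
  refine setIntegral_congr_fun measurableSet_Ioi fun x hx => ?_
  have hx : 0 < x := hx
  have e1 : (x ^ (2 * ((m:ℝ) + 1))) ^ (1 / (2 * ((m:ℝ) + 1))) = x := by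
    rw [← Real.rpow_mul hx.le, mul_one_div_cancel hp.ne', Real.rpow_one]
  have e2 : (x ^ (2 * ((m:ℝ) + 1))) ^ (((k:ℝ) - 2) / (2 * (m + 1))) = x ^ ((k:ℝ) - 2) := by
    rw [← Real.rpow_mul hx.le, mul_div_cancel₀ _ hp.ne']
  have e3 : x ^ (2 * ((m:ℝ) + 1)) = x ^ (2 * (m + 1)) := by
    rw [← Real.rpow_natCast]; push_cast; rfl
  simp only [e1, e2, smul_smul]
  congr 1
  unfold kapm
  rw [e3, ← pow_mul, ← pow_mul]
  have e4 : x ^ (k - 1) * x ^ (2 * m) = x ^ (2 * ((m:ℝ) + 1) - 1) * x ^ ((k:ℝ) - 2) := by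
    rw [← Real.rpow_add hx, ← pow_add, ← Real.rpow_natCast]
    congr 1
    have : 1 ≤ k := NeZero.one_le
    push_cast [this]
    ring
  linear_combination (2 * ((m:ℝ) + 1)) * Real.exp (-x ^ (2 * (m + 1))) * e4

lemma Nm_tendsto (k : ℕ) [NeZero k] {f : ℝ → ℂ} (hf : Continuous f) {M : ℝ} (hM : ∀ r, ‖f r‖ ≤ M)
    {q : ℕ → ℝ} {q0 : ℝ} (hq : Filter.Tendsto q Filter.atTop (nhds q0)) :
    Filter.Tendsto (fun m => Nm m k (fun r => f (r * q m))) Filter.atTop (nhds (f q0)) := by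
  have hM0 : 0 ≤ M := (norm_nonneg _).trans (hM 0)
  have hlim : ∫ y in Set.Ioi (0:ℝ), Real.exp (-y) • f q0 = f q0 := by
    rw [integral_smul_const, integral_exp_neg_Ioi_zero, one_smul]
  conv => rhs; rw [← hlim]
  have t0 : Filter.Tendsto (fun m : ℕ => 1 / (2 * ((m:ℝ) + 1))) Filter.atTop (nhds 0) := by
    have := (tendsto_one_div_add_atTop_nhds_zero_nat (𝕜 := ℝ)).const_mul (1/2)
    rw [mul_zero] at this
    refine this.congr fun m => ?_
    field_simp
  refine tendsto_integral_of_dominated_convergence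
    (fun y => (Real.exp (-y) * y ^ ((1/2 : ℝ) - 1) + Real.exp (-y) * y ^ (((k:ℝ) + 1) - 1)) * M) ?_ ?_ ?_ ?_
  · intro m
    refine Measurable.aestronglyMeasurable ?_
    have := hf.measurable
    fun_prop
  · exact ((Real.GammaIntegral_convergent (by norm_num)).add (Real.GammaIntegral_convergent (by positivity))).mul_const M
  · intro m
    refine (ae_restrict_iff' measurableSet_Ioi).2 (Filter.Eventually.of_forall fun y hy => ?_)
    have hy : 0 < y := hy
    rw [norm_smul]
    refine mul_le_mul ?_ (hM _) (norm_nonneg _) (by positivity)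
    rw [Real.norm_eq_abs, abs_of_nonneg (by positivity), mul_comm, ← mul_add]
    refine mul_le_mul_of_nonneg_left ?_ (Real.exp_pos _).le
    have hk : (1:ℝ) ≤ k := by exact_mod_cast NeZero.one_le
    have hm : (0:ℝ) ≤ m := by positivity
    rcases le_total y 1 with h | h
    · have : y ^ (((k:ℝ) - 2) / (2 * (m + 1))) ≤ y ^ ((1/2 : ℝ) - 1) := by
        refine Real.rpow_le_rpow_of_exponent_ge hy h ?_
        rw [le_div_iff₀ (by positivity)]; nlinarith
      have : 0 ≤ y ^ (((k:ℝ) + 1) - 1) := by positivity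
      linarith
    · have : y ^ (((k:ℝ) - 2) / (2 * (m + 1))) ≤ y ^ (((k:ℝ) + 1) - 1) := by
        refine Real.rpow_le_rpow_of_exponent_le h ?_
        rw [div_le_iff₀ (by positivity)]; nlinarith
      have : 0 ≤ y ^ ((1/2 : ℝ) - 1) := by positivity
      linarith
  · refine (ae_restrict_iff' measurableSet_Ioi).2 (Filter.Eventually.of_forall fun y hy => ?_)
    have hy : 0 < y := hy
    have h1 : Filter.Tendsto (fun m : ℕ => y ^ (1 / (2 * ((m:ℝ) + 1)))) Filter.atTop (nhds 1) := by
      have := ((Real.continuous_const_rpow hy.ne').tendsto 0).comp t0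
      rw [Real.rpow_zero] at this
      exact this
    have h2 : Filter.Tendsto (fun m : ℕ => y ^ (((k:ℝ) - 2) / (2 * ((m:ℝ) + 1)))) Filter.atTop (nhds 1) := by
      have t1 := t0.const_mul ((k:ℝ) - 2)
      rw [mul_zero] at t1
      have := ((Real.continuous_const_rpow hy.ne').tendsto 0).comp t1
      rw [Real.rpow_zero] at this
      refine this.congr fun m => ?_
      simp [div_eq_mul_inv]
    have h3 := (hf.tendsto _).comp (h1.mul hq)
    rw [one_mul] at h3
    have h4 := (h2.mul_const (Real.exp (-y))).smul h3
    rw [one_mul] at h4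
    exact h4

lemma num_conc (k : ℕ) [NeZero k] {f : ℝ → ℂ} (hf : Continuous f) {M : ℝ} (hM : ∀ r, ‖f r‖ ≤ M)
    {q : ℕ → ℝ} {q0 : ℝ} (hq : Filter.Tendsto q Filter.atTop (nhds q0)) :
    Filter.Tendsto (fun m => ∫ x, f (‖x‖ * q m) ∂(num m k)) Filter.atTop (nhds (f q0)) := by
  have h1 := Nm_tendsto k hf hM hq
  have h2 := Nm_tendsto k (f := fun _ => (1:ℂ)) continuous_const (M := 1) (by simp) hq
  have h3 := h1.div h2 one_ne_zero
  rw [div_one] at h3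
  refine h3.congr fun m => ?_
  simp only [Pi.div_apply]
  rw [num_int, wm_polar m k (fun r => f (r * q m))]
  have e := wm_polar m k (fun _ => (1:ℂ))
  have e' : ∫ x : EuclideanSpace ℝ (Fin k), wm m x • (1:ℂ) = (Zm m k : ℂ) := by
    unfold Zm
    rw [← integral_complex_ofReal]
    simp
  rw [e'] at e
  have hZ := (Zm_pos m k).ne'
  have hZ' : (Zm m k : ℂ) ≠ 0 := by exact_mod_cast hZ
  generalize Nm m k (fun r => f (r * q m)) = N2
  set N1 := Nm m k (fun _ => (1:ℂ))
  set a := (k : ℝ) * volume.real (Metric.ball (0 : EuclideanSpace ℝ (Fin k)) 1)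
  simp only [Complex.real_smul] at e ⊢
  push_cast
  rw [e]
  have ha : (a:ℂ) ≠ 0 := by rintro h; rw [h] at e; simp [hZ] at e
  have hN : N1 ≠ 0 := by rintro h; rw [h] at e; simp [hZ] at e
  field_simp


lemma diag_real {ι : Type*} [Fintype ι] [DecidableEq ι] {M : Matrix ι ι ℝ} (hM : M.IsHermitian) :
    ∃ (U : Matrix ι ι ℝ) (L : ι → ℝ), Uᵀ * U = 1 ∧ U * Uᵀ = 1 ∧ M = U * diagonal L * Uᵀ := by
  have h1 := (Matrix.mem_unitaryGroup_iff).1 hM.eigenvectorUnitary.2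
  have h2 := (Matrix.mem_unitaryGroup_iff').1 hM.eigenvectorUnitary.2
  refine ⟨hM.eigenvectorUnitary, hM.eigenvalues, h2, h1, ?_⟩
  have := hM.spectral_theorem
  conv_lhs => rw [this]
  simp [Unitary.conjStarAlgAut_apply]
  rfl

lemma full_rank_fact {n : ℕ} {S : Matrix (Fin n) (Fin n) ℝ} (hS : S.PosSemidef) :
    ∃ (k : ℕ) (A B : Matrix (Fin n) (Fin k) ℝ), Bᵀ * A = 1 ∧ S = A * Aᵀ := by
  obtain ⟨U, L, h1, h2, h3⟩ := diag_real hS.1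
  have hL : ∀ i, 0 ≤ L i := by
    intro i
    have h4 := (hS.conjTranspose_mul_mul_same U).diag_nonneg (i := i)
    rw [h3] at h4
    have : Uᴴ * (U * diagonal L * Uᵀ) * U = diagonal L := by
      rw [conjTranspose_eq_transpose_of_trivial, Matrix.mul_assoc, Matrix.mul_assoc, h1, Matrix.mul_one, ← Matrix.mul_assoc, h1, Matrix.one_mul]
    rw [this] at h4
    simpa using h4
  let ι := {i // L i ≠ 0}
  let e : Fin (Fintype.card ι) ≃ ι := (Fintype.equivFin ι).symm
  have hs : ∀ j, Real.sqrt (L (e j).1) ≠ 0 := fun j =>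
    (Real.sqrt_pos.2 (lt_of_le_of_ne (hL _) (e j).2.symm)).ne'
  refine ⟨Fintype.card ι, of fun a j => U a (e j).1 * Real.sqrt (L (e j).1),
    of fun a j => U a (e j).1 / Real.sqrt (L (e j).1), ?_, ?_⟩
  · ext i j
    rw [mul_apply]
    simp only [transpose_apply, of_apply]
    have h4 : (Uᵀ * U) (e i).1 (e j).1 = (1 : Matrix (Fin n) (Fin n) ℝ) (e i).1 (e j).1 := by rw [h1]
    rw [mul_apply] at h4
    simp only [transpose_apply] at h4
    have : ∀ x, U x (e i).1 / Real.sqrt (L (e i).1) * (U x (e j).1 * Real.sqrt (L (e j).1)) =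
        (U x (e i).1 * U x (e j).1) * (Real.sqrt (L (e j).1) / Real.sqrt (L (e i).1)) := by
      intro x; ring
    simp_rw [this]
    rw [← Finset.sum_mul, h4]
    by_cases hij : i = j
    · subst hij; simp [hs i]
    · have : (e i).1 ≠ (e j).1 := fun h => hij (e.injective (Subtype.ext h))
      simp [hij, this]
  · ext a b
    rw [h3, mul_apply, mul_apply]
    simp only [mul_diagonal, transpose_apply, of_apply]
    have : ∀ j : Fin (Fintype.card ι), U a (e j).1 * Real.sqrt (L (e j).1) * (U b (e j).1 * Real.sqrt (L (e j).1)) =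
        (fun i : ι => U a i.1 * L i.1 * U b i.1) (e j) := by
      intro j
      have := Real.mul_self_sqrt (hL (e j).1)
      simp only
      linear_combination U a (e j).1 * U b (e j).1 * this
    simp_rw [this]
    rw [e.sum_comp (fun i : ι => U a i.1 * L i.1 * U b i.1)]
    rw [← Finset.sum_subtype (Finset.univ.filter fun i => L i ≠ 0) (by simp)
      (fun i => U a i * L i * U b i)]
    symm
    refine Finset.sum_subset (Finset.filter_subset _ _) fun i _ hi => ?_
    have : L i = 0 := by simpa using hi
    simp [this]

lemma simul_diag {n : ℕ} {Sx Sy : Matrix (Fin n) (Fin n) ℝ} (hSx : Sx.PosSemidef) (hSy : Sy.PosSemidef)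
    (hle : (Sy - Sx).PosSemidef) :
    ∃ (k : ℕ) (A B : Matrix (Fin n) (Fin k) ℝ) (d : Fin k → ℝ), (∀ j, 0 ≤ d j) ∧ (∀ j, d j ≤ 1) ∧
      Bᵀ * A = 1 ∧ Sy = A * Aᵀ ∧ Sx = (A * diagonal d) * (A * diagonal d)ᵀ := by
  obtain ⟨k, A, B, hBA, hA⟩ := full_rank_fact hSy
  have hAB : Aᵀ * B = 1 := by
    have := congrArg transpose hBA
    rwa [transpose_mul, transpose_transpose, transpose_one] at this
  have hker : ∀ v, Sy *ᵥ v = 0 → Sx *ᵥ v = 0 := by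
    intro v hv
    rw [← hSx.dotProduct_mulVec_zero_iff]
    have h1 := hle.dotProduct_mulVec_nonneg v
    have h2 := hSx.dotProduct_mulVec_nonneg v
    rw [sub_mulVec, dotProduct_sub, hv, dotProduct_zero] at h1
    linarith
  have hz : Sx * (1 - B * Aᵀ) = 0 := by
    ext i j
    have h1 : Sy * (1 - B * Aᵀ) = 0 := by
      rw [hA, Matrix.mul_sub, Matrix.mul_one, Matrix.mul_assoc, ← Matrix.mul_assoc Aᵀ, hAB, Matrix.one_mul, sub_self]
    have h2 : Sy *ᵥ (fun i => (1 - B * Aᵀ : Matrix (Fin n) (Fin n) ℝ) i j) = 0 := by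
      ext i
      exact congrFun (congrFun h1 i) j
    exact congrFun (hker _ h2) i
  have hz1 : Sx = Sx * (B * Aᵀ) := by
    rw [Matrix.mul_sub, Matrix.mul_one, sub_eq_zero] at hz; exact hz
  have hz2 : Sx = A * Bᵀ * Sx := by
    have h := congrArg transpose hz1
    have hsymm : Sxᵀ = Sx := hSx.1
    rw [transpose_mul, transpose_mul, transpose_transpose, hsymm] at h
    exact h
  set M := Bᵀ * Sx * B with hM
  have hSxM : Sx = A * M * Aᵀ := by
    conv_lhs => rw [hz2, hz1]
    simp only [hM, Matrix.mul_assoc]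
  have hMp : M.PosSemidef := hSx.conjTranspose_mul_mul_same B
  have hM1 : (1 - M).PosSemidef := by
    have := hle.conjTranspose_mul_mul_same B
    convert this using 1
    rw [conjTranspose_eq_transpose_of_trivial, Matrix.mul_sub, Matrix.sub_mul, hA, ← Matrix.mul_assoc, hBA, Matrix.one_mul, hAB]
  obtain ⟨U, L, h1, h2, h3⟩ := diag_real hMp.1
  have hL : ∀ i, 0 ≤ L i := by
    intro i
    have h4 := (hMp.conjTranspose_mul_mul_same U).diag_nonneg (i := i)
    rw [h3] at h4
    have : Uᴴ * (U * diagonal L * Uᵀ) * U = diagonal L := by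
      rw [conjTranspose_eq_transpose_of_trivial, Matrix.mul_assoc, Matrix.mul_assoc, h1, Matrix.mul_one, ← Matrix.mul_assoc, h1, Matrix.one_mul]
    rw [this] at h4
    simpa using h4
  have hL1 : ∀ i, L i ≤ 1 := by
    intro i
    have h4 := (hM1.conjTranspose_mul_mul_same U).diag_nonneg (i := i)
    rw [h3] at h4
    have : Uᴴ * (1 - U * diagonal L * Uᵀ) * U = 1 - diagonal L := by
      rw [Matrix.mul_sub, Matrix.sub_mul, Matrix.mul_one, conjTranspose_eq_transpose_of_trivial, Matrix.mul_assoc, Matrix.mul_assoc, Matrix.mul_assoc, h1, Matrix.mul_one, ← Matrix.mul_assoc, h1, Matrix.one_mul]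
    rw [this] at h4
    simpa using h4
  refine ⟨k, A * U, B * U, fun j => Real.sqrt (L j), fun j => Real.sqrt_nonneg _,
    fun j => Real.sqrt_le_one.2 (hL1 j), ?_, ?_, ?_⟩
  · rw [transpose_mul, Matrix.mul_assoc, ← Matrix.mul_assoc Bᵀ, hBA, Matrix.one_mul, h1]
  · rw [transpose_mul, Matrix.mul_assoc, ← Matrix.mul_assoc U, h2, Matrix.one_mul, hA]
  · have : diagonal L = diagonal (fun j => Real.sqrt (L j)) * diagonal (fun j => Real.sqrt (L j)) := by
      rw [diagonal_mul_diagonal]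
      congr 1; ext j; exact (Real.mul_self_sqrt (hL j)).symm
    rw [hSxM, h3, this]
    simp only [transpose_mul, diagonal_transpose, Matrix.mul_assoc]


lemma compact_hull {E : Type*} [NormedAddCommGroup E] [NormedSpace ℝ E] [FiniteDimensional ℝ E]
    {s : Set E} (hs : IsCompact s) : IsCompact (convexHull ℝ s) := by
  have : convexHull ℝ s = ⋃ m ∈ Finset.range (Module.finrank ℝ E + 2),
      (fun p : (Fin m → ℝ) × (Fin m → E) => ∑ i, p.1 i • p.2 i) ''
        (stdSimplex ℝ (Fin m) ×ˢ Set.pi Set.univ (fun _ => s)) := by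
    ext x
    constructor
    · intro hx
      obtain ⟨ι, _, z, w, hz, hai, hw, hw1, hx⟩ := eq_pos_convex_span_of_mem_convexHull hx
      simp only [Set.mem_iUnion]
      let e := (Fintype.equivFin ι).symm
      refine ⟨Fintype.card ι, ?_, (w ∘ e, z ∘ e), ⟨⟨?_, ?_⟩, ?_⟩, ?_⟩
      · have h1 := hai.card_le_finrank_succ
        have h2 := Submodule.finrank_le (vectorSpan ℝ (Set.range z))
        rw [Finset.mem_range]; lia
      · intro i; exact (hw _).le
      · exact (e.sum_comp w).trans hw1
      · intro i _; exact hz ⟨_, rfl⟩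
      · exact (e.sum_comp (fun i => w i • z i)).trans hx
    · intro hx
      simp only [Set.mem_iUnion] at hx
      obtain ⟨m, _, p, ⟨⟨h1, h2⟩, h3⟩, rfl⟩ := hx
      exact (convex_convexHull ℝ s).sum_mem (fun i _ => h1 i) h2
        (fun i _ => subset_convexHull ℝ s (h3 i trivial))
  rw [this]
  refine (Finset.finite_toSet _).isCompact_biUnion fun m _ => ?_
  refine ((isCompact_stdSimplex ℝ (Fin m)).prod (isCompact_univ_pi fun _ => hs)).image ?_
  fun_prop

section
variable {E : Type*} [NormedAddCommGroup E] [InnerProductSpace ℝ E] [FiniteDimensional ℝ E]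
  [MeasurableSpace E] [BorelSpace E]

lemma portm_compact {X Y : ProbabilityMeasure E} {Xm Ym : ℕ → ProbabilityMeasure E}
    (hX : Filter.Tendsto Xm Filter.atTop (nhds X)) (hY : Filter.Tendsto Ym Filter.atTop (nhds Y))
    (h : ∀ m (C : Set E), MeasurableSet C → Convex ℝ C → (∀ x ∈ C, -x ∈ C) →
      (Ym m : Measure E) C ≤ (Xm m : Measure E) C) {K : Set E} (hK : IsCompact K)
    (hconv : Convex ℝ K) (hsym : ∀ x ∈ K, -x ∈ K) : (Y : Measure E) K ≤ (X : Measure E) K := by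
  have h1 : Filter.Tendsto (fun r => (X : Measure E) (Metric.cthickening r K)) (nhdsWithin 0 (Set.Ioi 0))
      (nhds ((X : Measure E) K)) :=
    (tendsto_measure_cthickening_of_isCompact hK).mono_left nhdsWithin_le_nhds
  refine ge_of_tendsto h1 ?_
  filter_upwards [self_mem_nhdsWithin] with r hr
  have hr : 0 < r := hr
  have hs : ∀ x ∈ Metric.cthickening r K, -x ∈ Metric.cthickening r K := by
    intro x hx
    have e : -K = K := by
      ext y
      exact ⟨fun hy => by have := hsym _ hy; rwa [neg_neg] at this, fun hy => hsym y hy⟩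
    rw [Metric.mem_cthickening_iff] at hx ⊢
    rwa [← e, infEDist_neg_neg]
  calc (Y : Measure E) K ≤ (Y : Measure E) (Metric.thickening r K) :=
        measure_mono (Metric.self_subset_thickening hr K)
    _ ≤ Filter.atTop.liminf fun m => (Ym m : Measure E) (Metric.thickening r K) :=
        ProbabilityMeasure.le_liminf_measure_open_of_tendsto hY Metric.isOpen_thickening
    _ ≤ Filter.atTop.liminf fun m => (Xm m : Measure E) (Metric.cthickening r K) := by
        refine Filter.liminf_le_liminf (Filter.Eventually.of_forall fun m => ?_)
        exact (measure_mono (Metric.thickening_subset_cthickening r K)).trans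
          (h m _ Metric.isClosed_cthickening.measurableSet (hconv.cthickening r) hs)
    _ ≤ Filter.atTop.limsup fun m => (Xm m : Measure E) (Metric.cthickening r K) :=
        Filter.liminf_le_limsup
    _ ≤ _ := ProbabilityMeasure.limsup_measure_closed_le_of_tendsto hX Metric.isClosed_cthickening

lemma portm {X Y : ProbabilityMeasure E} {Xm Ym : ℕ → ProbabilityMeasure E}
    (hX : Filter.Tendsto Xm Filter.atTop (nhds X)) (hY : Filter.Tendsto Ym Filter.atTop (nhds Y))
    (h : ∀ m (C : Set E), MeasurableSet C → Convex ℝ C → (∀ x ∈ C, -x ∈ C) →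
      (Ym m : Measure E) C ≤ (Xm m : Measure E) C) {C : Set E} (hC : MeasurableSet C)
    (hconv : Convex ℝ C) (hsym : ∀ x ∈ C, -x ∈ C) : (Y : Measure E) C ≤ (X : Measure E) C := by
  rw [hC.measure_eq_iSup_isCompact_of_ne_top (measure_ne_top _ _)]
  refine iSup_le fun K => iSup_le fun hKC => iSup_le fun hK => ?_
  have hsub : convexHull ℝ (K ∪ -K) ⊆ C := by
    refine convexHull_min (Set.union_subset hKC fun x hx => ?_) hconv
    have := hsym _ (hKC hx)
    rwa [neg_neg] at this
  have hsy : ∀ x ∈ convexHull ℝ (K ∪ -K), -x ∈ convexHull ℝ (K ∪ -K) := by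
    intro x hx
    rw [← Set.mem_neg, ← convexHull_neg]
    rwa [Set.union_neg, neg_neg, Set.union_comm]
  calc (Y : Measure E) K ≤ (Y : Measure E) (convexHull ℝ (K ∪ -K)) :=
        measure_mono (Set.subset_union_left.trans (subset_convexHull ℝ _))
    _ ≤ (X : Measure E) (convexHull ℝ (K ∪ -K)) :=
        portm_compact hX hY h (compact_hull (hK.union hK.neg)) (convex_convexHull ℝ _) hsy
    _ ≤ _ := measure_mono hsub
end


section
variable {n k : ℕ} [NeZero k]

/-- Approximating scale mixture. -/
noncomputable def mixm (ζ : Measure (EuclideanSpace ℝ (Fin k))) (m : ℕ)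
    (L : EuclideanSpace ℝ (Fin k) →ₗ[ℝ] EuclideanSpace ℝ (Fin n)) : Measure (EuclideanSpace ℝ (Fin n)) :=
  (ζ.prod (num m k)).map (fun p => ‖p.1‖ • L p.2)

lemma mix_meas (L : EuclideanSpace ℝ (Fin k) →ₗ[ℝ] EuclideanSpace ℝ (Fin n)) :
    Measurable (fun p : EuclideanSpace ℝ (Fin k) × EuclideanSpace ℝ (Fin k) => ‖p.1‖ • L p.2) := by
  have := L.continuous_of_finiteDimensional
  exact (by fun_prop : Continuous _).measurable

lemma mix_prob (ζ : Measure (EuclideanSpace ℝ (Fin k))) [IsProbabilityMeasure ζ] (m : ℕ)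
    (L : EuclideanSpace ℝ (Fin k) →ₗ[ℝ] EuclideanSpace ℝ (Fin n)) : IsProbabilityMeasure (mixm ζ m L) :=
  Measure.isProbabilityMeasure_map (mix_meas L).aemeasurable

lemma int_exp {E : Type*} [MeasurableSpace E] {μ : Measure E} [IsFiniteMeasure μ] {g : E → ℝ} (hg : Measurable g) :
    Integrable (fun x => Complex.exp (g x * Complex.I)) μ := by
  refine Integrable.of_bound (C := 1) (Measurable.aestronglyMeasurable (by fun_prop)) ?_
  exact Filter.Eventually.of_forall fun x => by rw [Complex.norm_exp_ofReal_mul_I]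

lemma mix_charFun (ζ : Measure (EuclideanSpace ℝ (Fin k))) [IsProbabilityMeasure ζ] (m : ℕ)
    (L : EuclideanSpace ℝ (Fin k) →ₗ[ℝ] EuclideanSpace ℝ (Fin n)) (t : EuclideanSpace ℝ (Fin n))
    (u : EuclideanSpace ℝ (Fin k)) (hu : ∀ x, inner ℝ (L x) t = inner ℝ x u) :
    charFun (mixm ζ m L) t = ∫ x, charFun ζ (‖u‖ • x) ∂(num m k) := by
  rw [charFun_apply, mixm, integral_map (mix_meas L).aemeasurable
    (Measurable.aestronglyMeasurable (by fun_prop))]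
  have hL := (L.continuous_of_finiteDimensional).measurable
  rw [integral_prod _ (int_exp (by fun_prop))]
  have e1 : ∀ z : EuclideanSpace ℝ (Fin k),
      ∫ x, Complex.exp ((inner ℝ (‖z‖ • L x) t : ℝ) * Complex.I) ∂(num m k) =
      ∫ x, Complex.exp ((inner ℝ x (‖u‖ • z) : ℝ) * Complex.I) ∂(num m k) := by
    intro z
    have := num_charFun m k (u := ‖z‖ • u) (v := ‖u‖ • z) (by simp [norm_smul, mul_comm])
    rw [charFun_apply, charFun_apply] at this
    rw [← this]
    congr 1
    ext x
    rw [inner_smul_left, inner_smul_right, hu]; rfl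
  simp only [e1]
  rw [integral_integral_swap (int_exp (by fun_prop))]
  congr 1
  ext x
  rw [charFun_apply]
  congr 1
  ext z
  rw [inner_smul_right, inner_smul_right, real_inner_comm]

/-- Diagonal scaling on Euclidean space. -/
noncomputable def Dg (c : Fin k → ℝ) : EuclideanSpace ℝ (Fin k) →ₗ[ℝ] EuclideanSpace ℝ (Fin k) where
  toFun x := WithLp.toLp 2 (c * WithLp.ofLp x)
  map_add' x y := by ext i; simp [mul_add]
  map_smul' r x := by ext i; simp [mul_left_comm]

lemma Dg_inner (c : Fin k → ℝ) (x y : EuclideanSpace ℝ (Fin k)) :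
    inner ℝ (Dg c x) y = inner ℝ x (Dg c y) := by
  simp only [PiLp.inner_apply, Dg]
  refine Finset.sum_congr rfl fun i _ => ?_
  simp; ring

lemma mix_le (ζ : Measure (EuclideanSpace ℝ (Fin k))) [IsProbabilityMeasure ζ] (m : ℕ)
    (L : EuclideanSpace ℝ (Fin k) →ₗ[ℝ] EuclideanSpace ℝ (Fin n)) {c : Fin k → ℝ}
    (hc0 : ∀ j, 0 < c j) (hc1 : ∀ j, c j ≤ 1) {C : Set (EuclideanSpace ℝ (Fin n))} (hC : MeasurableSet C)
    (hconv : Convex ℝ C) (hsym : ∀ x ∈ C, -x ∈ C) :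
    mixm ζ m L C ≤ mixm ζ m (L ∘ₗ Dg c) C := by
  unfold mixm
  rw [Measure.map_apply (mix_meas _) hC, Measure.map_apply (mix_meas _) hC,
    Measure.prod_apply (hC.preimage (mix_meas _)), Measure.prod_apply (hC.preimage (mix_meas _))]
  refine lintegral_mono fun z => ?_
  exact num_core m k (C := (‖z‖ • L) ⁻¹' C)
    (hC.preimage (LinearMap.continuous_of_finiteDimensional (‖z‖ • L)).measurable)
    (hconv.linear_preimage _) (fun x hx => by
      have := hsym _ hx
      rwa [← map_neg] at this) hc0 hc1

lemma main_pos (ζ : Measure (EuclideanSpace ℝ (Fin k))) [IsProbabilityMeasure ζ] {φ : ℝ → ℂ}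
    (hζ : ∀ t, charFun ζ t = φ (‖t‖ ^ 2))
    (L : EuclideanSpace ℝ (Fin k) →ₗ[ℝ] EuclideanSpace ℝ (Fin n))
    (Ls : EuclideanSpace ℝ (Fin n) → EuclideanSpace ℝ (Fin k))
    (hL : ∀ x t, inner ℝ (L x) t = inner ℝ x (Ls t))
    {d : Fin k → ℝ} (hd0 : ∀ j, 0 ≤ d j) (hd1 : ∀ j, d j ≤ 1)
    (X Y : ProbabilityMeasure (EuclideanSpace ℝ (Fin n)))
    (hX : ∀ t, charFun (X : Measure _) t = φ (‖Dg d (Ls t)‖ ^ 2))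
    (hY : ∀ t, charFun (Y : Measure _) t = φ (‖Ls t‖ ^ 2))
    {C : Set (EuclideanSpace ℝ (Fin n))} (hC : MeasurableSet C)
    (hconv : Convex ℝ C) (hsym : ∀ x ∈ C, -x ∈ C) : (Y : Measure _) C ≤ (X : Measure _) C := by
  let e : EuclideanSpace ℝ (Fin k) := EuclideanSpace.single 0 1
  have he : ‖e‖ = 1 := by simp [e]
  let f : ℝ → ℂ := fun r => charFun ζ (r • e)
  have hf : Continuous f := by
    have : Continuous (charFun ζ) := continuous_charFun
    fun_prop
  have hfb : ∀ r, ‖f r‖ ≤ 1 := fun r => norm_charFun_le_one _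
  have hfφ : ∀ r, f r = φ (r ^ 2) := by
    intro r
    simp only [f]
    rw [hζ, norm_smul, he, mul_one, Real.norm_eq_abs, sq_abs]
  let c : ℕ → Fin k → ℝ := fun m j => d j + (1 - d j) * (1 / ((m:ℝ) + 1))
  have hm0 : ∀ m : ℕ, 0 < 1 / ((m:ℝ) + 1) := fun m => by positivity
  have hm1 : ∀ m : ℕ, 1 / ((m:ℝ) + 1) ≤ 1 := fun m => by
    rw [div_le_one (by positivity)]; linarith [(by positivity : (0:ℝ) ≤ m)]
  have hc0 : ∀ m j, 0 < c m j := by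
    intro m j
    simp only [c]
    rcases (hd0 j).eq_or_lt with h | h
    · rw [← h]; have := hm0 m; linarith
    · have := mul_nonneg (sub_nonneg.2 (hd1 j)) (hm0 m).le; linarith
  have hc1 : ∀ m j, c m j ≤ 1 := by
    intro m j
    simp only [c]
    have := mul_le_mul_of_nonneg_left (hm1 m) (sub_nonneg.2 (hd1 j)); linarith
  have hct : Filter.Tendsto c Filter.atTop (nhds d) := by
    rw [tendsto_pi_nhds]
    intro j
    have := ((tendsto_one_div_add_atTop_nhds_zero_nat (𝕜 := ℝ)).const_mul (1 - d j)).const_add (d j)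
    rw [mul_zero, add_zero] at this
    exact this
  have gen : ∀ (M : ℕ → EuclideanSpace ℝ (Fin k) →ₗ[ℝ] EuclideanSpace ℝ (Fin n)) (t : EuclideanSpace ℝ (Fin n))
      (u : ℕ → EuclideanSpace ℝ (Fin k)) (u0 : EuclideanSpace ℝ (Fin k)),
      (∀ m x, inner ℝ (M m x) t = inner ℝ x (u m)) → Filter.Tendsto u Filter.atTop (nhds u0) →
      Filter.Tendsto (fun m => charFun (mixm ζ m (M m)) t) Filter.atTop (nhds (φ (‖u0‖ ^ 2))) := by
    intro M t u u0 hu hut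
    rw [← hfφ]
    refine (num_conc k hf hfb hut.norm).congr fun m => ?_
    rw [mix_charFun ζ m (M m) t (u m) (hu m)]
    congr 1
    ext x
    rw [hfφ, hζ, norm_smul, norm_norm, mul_comm]
  let Xm : ℕ → ProbabilityMeasure (EuclideanSpace ℝ (Fin n)) := fun m => ⟨mixm ζ m (L ∘ₗ Dg (c m)), mix_prob _ _ _⟩
  let Ym : ℕ → ProbabilityMeasure (EuclideanSpace ℝ (Fin n)) := fun m => ⟨mixm ζ m L, mix_prob _ _ _⟩
  have hXt : Filter.Tendsto Xm Filter.atTop (nhds X) := by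
    rw [ProbabilityMeasure.tendsto_iff_tendsto_charFun]
    intro t
    rw [hX]
    refine gen (fun m => L ∘ₗ Dg (c m)) t (fun m => Dg (c m) (Ls t)) _ ?_ ?_
    · intro m x
      rw [LinearMap.comp_apply, hL, Dg_inner]
    · have : Continuous fun c : Fin k → ℝ => Dg c (Ls t) := by
        change Continuous fun c : Fin k → ℝ => WithLp.toLp 2 (c * WithLp.ofLp (Ls t))
        fun_prop
      exact (this.tendsto d).comp hct
  have hYt : Filter.Tendsto Ym Filter.atTop (nhds Y) := by
    rw [ProbabilityMeasure.tendsto_iff_tendsto_charFun]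
    intro t
    rw [hY]
    exact gen (fun m => L) t (fun m => Ls t) _ (fun m x => hL x t) tendsto_const_nhds
  exact portm hXt hYt (fun m C hC h1 h2 => mix_le ζ m L (hc0 m) (hc1 m) hC h1 h2) hC hconv hsym
end

lemma charFn_map {Ω : Type*} [MeasurableSpace Ω] (P : Measure Ω) {n k : ℕ}
    (X : Ω → Fin n → ℝ) (hX : Measurable X) (B : Matrix (Fin n) (Fin k) ℝ) (t : EuclideanSpace ℝ (Fin k)) :
    charFun (P.map (fun ω => (WithLp.toLp 2 (Bᵀ *ᵥ X ω) : EuclideanSpace ℝ (Fin k)))) t =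
      charFn P X (B *ᵥ WithLp.ofLp t) := by
  have hm : Measurable (fun ω => (WithLp.toLp 2 (Bᵀ *ᵥ X ω) : EuclideanSpace ℝ (Fin k))) := by
    have : Measurable fun v : Fin n → ℝ => (WithLp.toLp 2 (Bᵀ *ᵥ v) : EuclideanSpace ℝ (Fin k)) :=
      (by fun_prop : Continuous _).measurable
    exact this.comp hX
  rw [charFun_apply, integral_map hm.aemeasurable (Measurable.aestronglyMeasurable (by fun_prop)), charFn]
  congr 1
  ext ω
  congr 3
  have h1 : inner ℝ (WithLp.toLp 2 (Bᵀ *ᵥ X ω) : EuclideanSpace ℝ (Fin k)) t = WithLp.ofLp t ⬝ᵥ (Bᵀ *ᵥ X ω) := by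
    rw [EuclideanSpace.inner_eq_star_dotProduct]; simp
  rw [h1, dotProduct_mulVec, vecMul_transpose]
  rfl

lemma nsq {k : ℕ} (v : Fin k → ℝ) : ‖(WithLp.toLp 2 v : EuclideanSpace ℝ (Fin k))‖ ^ 2 = v ⬝ᵥ v := by
  rw [EuclideanSpace.norm_sq_eq]
  simp [dotProduct, sq]

lemma quad {n k : ℕ} (A : Matrix (Fin n) (Fin k) ℝ) (t : Fin n → ℝ) :
    t ⬝ᵥ (A * Aᵀ) *ᵥ t = (Aᵀ *ᵥ t) ⬝ᵥ (Aᵀ *ᵥ t) := by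
  rw [← mulVec_mulVec, dotProduct_mulVec, ← mulVec_transpose]

/-- If `X`, `Y` are elliptically distributed with location `0`, common
characteristic generator `φ` and dispersion matrices `Sx ⪯ Sy`, then for every
measurable, convex, centrally symmetric set `C`, `P(X ∈ C) ≥ P(Y ∈ C)`. -/
theorem elliptical_anderson {Ω : Type*} [MeasurableSpace Ω]
    (P : Measure Ω) [IsProbabilityMeasure P] {n : ℕ}
    (X Y : Ω → Fin n → ℝ) (hX : Measurable X) (hY : Measurable Y)
    (Sx Sy : Matrix (Fin n) (Fin n) ℝ)
    (hSx : Sx.PosSemidef) (hSy : Sy.PosSemidef)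
    (φ : ℝ → ℂ)
    (hXell : ∀ t : Fin n → ℝ, charFn P X t = φ (t ⬝ᵥ Sx *ᵥ t))
    (hYell : ∀ t : Fin n → ℝ, charFn P Y t = φ (t ⬝ᵥ Sy *ᵥ t))
    (hle : (Sy - Sx).PosSemidef)
    (C : Set (Fin n → ℝ)) (hCmeas : MeasurableSet C)
    (hCconv : Convex ℝ C) (hCsymm : C = -C) :
    P (Y ⁻¹' C) ≤ P (X ⁻¹' C) := by
  have hsym : ∀ x ∈ C, -x ∈ C := fun x hx => by rw [hCsymm] at hx; exact hx
  obtain ⟨k, A, B, d, hd0, hd1, hBA, hA, hAd⟩ := simul_diag hSx hSy hle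
  have law : ∀ Z : Ω → Fin n → ℝ, Measurable Z →
      Measurable (fun ω => (WithLp.toLp 2 (Z ω) : EuclideanSpace ℝ (Fin n))) :=
    fun Z hZ => (WithLp.measurable_toLp 2 _).comp hZ
  have lawc : ∀ Z : Ω → Fin n → ℝ, Measurable Z → ∀ t : EuclideanSpace ℝ (Fin n),
      charFun (P.map (fun ω => (WithLp.toLp 2 (Z ω) : EuclideanSpace ℝ (Fin n)))) t =
      charFn P Z (WithLp.ofLp t) := by
    intro Z hZ t
    have := charFn_map P Z hZ 1 t
    simpa using this
  have pX := Measure.isProbabilityMeasure_map (μ := P) (law X hX).aemeasurable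
  have pY := Measure.isProbabilityMeasure_map (μ := P) (law Y hY).aemeasurable
  have hC' : MeasurableSet ((WithLp.ofLp : EuclideanSpace ℝ (Fin n) → _) ⁻¹' C) :=
    hCmeas.preimage (WithLp.measurable_ofLp 2 _)
  have eX : P (X ⁻¹' C) = P.map (fun ω => (WithLp.toLp 2 (X ω) : EuclideanSpace ℝ (Fin n))) (WithLp.ofLp ⁻¹' C) := by
    rw [Measure.map_apply (law X hX) hC']; rfl
  have eY : P (Y ⁻¹' C) = P.map (fun ω => (WithLp.toLp 2 (Y ω) : EuclideanSpace ℝ (Fin n))) (WithLp.ofLp ⁻¹' C) := by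
    rw [Measure.map_apply (law Y hY) hC']; rfl
  rw [eX, eY]
  rcases Nat.eq_zero_or_pos k with rfl | hk
  · have hSy0 : Sy = 0 := by rw [hA]; ext i j; simp [mul_apply]
    have hSx0 : Sx = 0 := by rw [hAd]; ext i j; simp [mul_apply]
    refine le_of_eq ?_
    congr 1
    refine Measure.ext_of_charFun ?_
    ext t
    rw [lawc X hX, lawc Y hY, hXell, hYell, hSx0, hSy0]
  · have : NeZero k := ⟨hk.ne'⟩
    have hAB : Aᵀ * B = 1 := by
      have := congrArg transpose hBA
      rwa [transpose_mul, transpose_transpose, transpose_one] at this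
    have mζ : Measurable (fun ω => (WithLp.toLp 2 (Bᵀ *ᵥ Y ω) : EuclideanSpace ℝ (Fin k))) := by
      have : Measurable fun v : Fin n → ℝ => (WithLp.toLp 2 (Bᵀ *ᵥ v) : EuclideanSpace ℝ (Fin k)) :=
        (by fun_prop : Continuous _).measurable
      exact this.comp hY
    have pζ := Measure.isProbabilityMeasure_map (μ := P) mζ.aemeasurable
    let L : EuclideanSpace ℝ (Fin k) →ₗ[ℝ] EuclideanSpace ℝ (Fin n) :=
      { toFun := fun x => WithLp.toLp 2 (A *ᵥ WithLp.ofLp x)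
        map_add' := fun x y => by simp [mulVec_add]
        map_smul' := fun r x => by simp [mulVec_smul] }
    refine main_pos (φ := φ) (P.map (fun ω => (WithLp.toLp 2 (Bᵀ *ᵥ Y ω) : EuclideanSpace ℝ (Fin k)))) ?_
      L (fun t => WithLp.toLp 2 (Aᵀ *ᵥ WithLp.ofLp t)) ?_ hd0 hd1 ⟨_, pX⟩ ⟨_, pY⟩ ?_ ?_ hC' ?_ ?_
    · intro t
      rw [charFn_map P Y hY, hYell, hA, quad, mulVec_mulVec, hAB, one_mulVec, ← nsq]
    · intro x t
      rw [EuclideanSpace.inner_eq_star_dotProduct, EuclideanSpace.inner_eq_star_dotProduct]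
      simp only [L, LinearMap.coe_mk, AddHom.coe_mk, star_trivial]
      rw [dotProduct_mulVec, ← mulVec_transpose]
    · intro t
      rw [ProbabilityMeasure.coe_mk, lawc X hX, hXell, hAd, quad, ← nsq]
      congr 3
      ext i
      simp [Dg, transpose_mul, ← mulVec_mulVec, mulVec_diagonal]
    · intro t
      rw [ProbabilityMeasure.coe_mk, lawc Y hY, hYell, hA, quad, ← nsq]
    · exact hCconv.linear_preimage (WithLp.linearEquiv 2 ℝ (Fin n → ℝ)).toLinearMap
    · intro x hx; exact hsym _ hx
end

section
/- Let X and Y be random vectors in ℝⁿ that are elliptically distributed with the same location μ ∈ ℝⁿ and the same characteristic generator φ, with dispersion matrices Σ_x and Σ_y respectively. If Σ_x ⪯ Σ_y, then G_n(X − μ) ≤_st G_n(Y − μ), i.e., P(G_n(X − μ) > t) ≤ P(G_n(Y − μ) > t) for all t ∈ ℝ. In particular, if μ = c·1_n for some c ∈ ℝ (including μ = 0), then G_n(X) ≤_st G_n(Y). -/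
open MeasureTheory ProbabilityTheory Matrix

/-- Gini index of `x ∈ ℝⁿ`: `G_n(x) = (1/n²) ∑_i ∑_j |x_i − x_j|`. -/
noncomputable def gini {n : ℕ} (x : Fin n → ℝ) : ℝ :=
  (1 / (n : ℝ) ^ 2) * ∑ i, ∑ j, |x i - x j|

/-- One-dimensional Brunn-Minkowski for compact sets. -/
lemma bm_compact (A B : Set ℝ) (hA : IsCompact A) (hB : IsCompact B) (hA0 : A.Nonempty)
    (hB0 : B.Nonempty) (S : Set ℝ) (hS : ∀ a ∈ A, ∀ b ∈ B, (a + b) / 2 ∈ S) :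
    volume A + volume B ≤ 2 * volume S := by
  obtain ⟨a0, ha0, ha0'⟩ := hA.exists_isGreatest hA0
  obtain ⟨b0, hb0, hb0'⟩ := hB.exists_isLeast hB0
  have e1 : ∀ (c : ℝ) (D : Set ℝ),
      volume ((fun x : ℝ => (x + c) / 2) '' D) = volume D / 2 := by
    intro c D
    have h1 : (fun x : ℝ => (x + c) / 2) '' D
        = (fun x : ℝ => x + c / 2) '' ((fun x : ℝ => (1/2 : ℝ) • x) '' D) := by
      rw [Set.image_image]
      congr 1
      ext x
      simp; ring
    rw [h1, Set.image_add_right, measure_preimage_add_right]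
    rw [Set.image_smul, Measure.addHaar_smul]
    simp [ENNReal.div_eq_inv_mul, ENNReal.ofReal_inv_of_pos]
  have hd : AEDisjoint volume ((fun x : ℝ => (x + b0) / 2) '' A)
      ((fun x : ℝ => (x + a0) / 2) '' B) := by
    refine measure_mono_null (t := {(a0 + b0) / 2}) ?_ (by simp)
    rintro _ ⟨⟨a, ha, rfl⟩, ⟨b, hb, hab⟩⟩
    have h1 := ha0' ha
    have h2 := hb0' hb
    simp only at hab
    simp only [Set.mem_singleton_iff]
    linarith
  have hm : MeasurableSet ((fun x : ℝ => (x + a0) / 2) '' B) :=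
    (hB.image (by fun_prop)).measurableSet
  have h3 := measure_union₀ hm.nullMeasurableSet hd
  rw [e1, e1] at h3
  have h4 : volume (((fun x : ℝ => (x + b0) / 2) '' A) ∪ ((fun x : ℝ => (x + a0) / 2) '' B))
      ≤ volume S := by
    apply measure_mono
    rintro _ (⟨a, ha, rfl⟩ | ⟨b, hb, rfl⟩)
    · exact hS a ha b0 hb0
    · have := hS a0 ha0 b hb
      rwa [add_comm] at this
  rw [h3] at h4
  calc volume A + volume B = 2 * (volume A / 2 + volume B / 2) := by
        rw [mul_add, ENNReal.mul_div_cancel (by simp) (by simp),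
          ENNReal.mul_div_cancel (by simp) (by simp)]
    _ ≤ _ := by gcongr

lemma bm_meas (A B : Set ℝ) (hA : MeasurableSet A) (hB : MeasurableSet B) (hA0 : A.Nonempty)
    (hB0 : B.Nonempty) (S : Set ℝ) (hS : ∀ a ∈ A, ∀ b ∈ B, (a + b) / 2 ∈ S) :
    volume A + volume B ≤ 2 * volume S := by
  obtain ⟨a0, ha0⟩ := hA0
  obtain ⟨b0, hb0⟩ := hB0
  have key : ∀ K ⊆ A, IsCompact K → ∀ K' ⊆ B, IsCompact K' →
      volume K + volume K' ≤ 2 * volume S := by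
    intro K hK hKc K' hK' hKc'
    calc volume K + volume K' ≤ volume (insert a0 K) + volume (insert b0 K') := by
          gcongr <;> simp
      _ ≤ _ := by
        apply bm_compact _ _ (hKc.insert a0) (hKc'.insert b0) (by simp) (by simp)
        intro a ha b hb
        apply hS
        · exact Set.insert_subset ha0 hK ha
        · exact Set.insert_subset hb0 hK' hb
  have key2 : ∀ K ⊆ A, IsCompact K → volume K + volume B ≤ 2 * volume S := by
    intro K hK hKc
    by_contra hcon
    push Not at hcon
    have hfin : volume K ≠ ⊤ := hKc.measure_lt_top.ne
    have h5 : 2 * volume S - volume K < volume B := by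
      rw [ENNReal.sub_lt_iff_lt_right hfin]
      · rwa [add_comm]
      · have := key K hK hKc ∅ (by simp) isCompact_empty
        simpa using this
    obtain ⟨K', hK', hKc', h6⟩ := hB.exists_lt_isCompact h5
    have := key K hK hKc K' hK' hKc'
    rw [ENNReal.sub_lt_iff_lt_right hfin (le_trans le_self_add this)] at h6
    rw [add_comm] at this
    exact absurd this (not_le.mpr h6)
  by_cases hBf : volume B = ⊤
  · have := key2 ∅ (by simp) isCompact_empty
    rw [hBf] at this
    simp only [measure_empty, zero_add, top_le_iff] at this
    rw [this]; exact le_top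
  by_contra hcon
  push Not at hcon
  have h0 := key2 ∅ (by simp) isCompact_empty
  have h5 : 2 * volume S - volume B < volume A := by
    rw [ENNReal.sub_lt_iff_lt_right hBf]
    · exact hcon
    · simpa using h0
  obtain ⟨K, hK, hKc, h6⟩ := hA.exists_lt_isCompact h5
  have := key2 K hK hKc
  rw [ENNReal.sub_lt_iff_lt_right hBf (by simpa using h0)] at h6
  exact absurd this (not_le.mpr h6)

lemma enn_amgm (x y z : ENNReal) (h : x + y ≤ 2 * z) : x * y ≤ z ^ 2 := by
  by_cases hz : z = ⊤
  · simp [hz]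
  have h2 : x + y ≠ ⊤ := (lt_of_le_of_lt h (ENNReal.mul_lt_top (by simp) (lt_top_iff_ne_top.2 hz))).ne
  have hx : x ≠ ⊤ := fun hx => h2 (by simp [hx])
  have hy : y ≠ ⊤ := fun hy => h2 (by simp [hy])
  lift x to NNReal using hx
  lift y to NNReal using hy
  lift z to NNReal using hz
  norm_cast at h ⊢
  rw [← NNReal.coe_le_coe] at h ⊢
  push_cast at h ⊢
  nlinarith [sq_nonneg ((x:ℝ) - y), x.coe_nonneg, y.coe_nonneg, z.coe_nonneg]

/-- One-dimensional midpoint Prekopa-Leindler, normalised. -/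
lemma pl_norm (a b c : ℝ → ℝ) (ha : Measurable a) (hb : Measurable b) (hc : Measurable c)
    (ha0 : ∀ x, 0 ≤ a x) (hb0 : ∀ x, 0 ≤ b x) (hc0 : ∀ x, 0 ≤ c x)
    (ha1 : ∀ x, a x ≤ 1) (hb1 : ∀ x, b x ≤ 1)
    (ha2 : ∀ t < 1, ∃ x, t < a x) (hb2 : ∀ t < 1, ∃ x, t < b x)
    (h : ∀ x y, a x * b y ≤ c ((x + y) / 2) ^ 2) :
    (∫⁻ x, ENNReal.ofReal (a x)) * (∫⁻ x, ENNReal.ofReal (b x)) ≤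
      (∫⁻ x, ENNReal.ofReal (c x)) ^ 2 := by
  apply enn_amgm
  rw [lintegral_eq_lintegral_meas_lt _ (Filter.Eventually.of_forall ha0) ha.aemeasurable,
    lintegral_eq_lintegral_meas_lt _ (Filter.Eventually.of_forall hb0) hb.aemeasurable,
    lintegral_eq_lintegral_meas_lt _ (Filter.Eventually.of_forall hc0) hc.aemeasurable]
  have hm : ∀ f : ℝ → ℝ, Measurable (fun t : ℝ => volume {x : ℝ | t < f x}) := by
    intro f
    apply Antitone.measurable
    intro s t hst
    apply measure_mono
    intro x hx
    exact lt_of_le_of_lt hst hx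
  rw [← lintegral_add_left (hm a), ← lintegral_const_mul _ (hm c)]
  apply lintegral_mono_ae
  filter_upwards [ae_restrict_mem measurableSet_Ioi] with t ht
  by_cases ht1 : t < 1
  · apply bm_meas
    · exact measurableSet_lt measurable_const ha
    · exact measurableSet_lt measurable_const hb
    · exact ha2 t ht1
    · exact hb2 t ht1
    · intro x hx y hy
      simp only [Set.mem_ofPred_eq, Set.mem_Ioi] at *
      have h1 := h x y
      have h2 : t ^ 2 < c ((x + y) / 2) ^ 2 := by nlinarith
      exact lt_of_pow_lt_pow_left₀ 2 (hc0 _) h2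
  · have e : ∀ f : ℝ → ℝ, (∀ x, f x ≤ 1) → volume {x : ℝ | t < f x} = 0 := by
      intro f hf
      have : {x : ℝ | t < f x} = ∅ := by
        ext x
        simp only [Set.mem_ofPred_eq, Set.mem_empty_iff_false, iff_false, not_lt]
        linarith [hf x]
      simp [this]
    rw [e a ha1, e b hb1]
    simp

/-- One-dimensional midpoint Prekopa-Leindler, bounded functions. -/
lemma pl_bdd (u v w : ℝ → ℝ) (hu : Measurable u) (hv : Measurable v) (hw : Measurable w)
    (hu0 : ∀ x, 0 ≤ u x) (hv0 : ∀ x, 0 ≤ v x) (hw0 : ∀ x, 0 ≤ w x) (N : ℝ)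
    (hu1 : ∀ x, u x ≤ N) (hv1 : ∀ x, v x ≤ N)
    (h : ∀ x y, u x * v y ≤ w ((x + y) / 2) ^ 2) :
    (∫⁻ x, ENNReal.ofReal (u x)) * (∫⁻ x, ENNReal.ofReal (v x)) ≤
      (∫⁻ x, ENNReal.ofReal (w x)) ^ 2 := by
  have sup : ∀ f : ℝ → ℝ, (∀ x, 0 ≤ f x) → (∀ x, f x ≤ N) →
      (∀ x, f x = 0) ∨ ∃ U > 0, (∀ x, f x ≤ U) ∧ ∀ t < 1, ∃ x, t < f x / U := by
    intro f h0 h1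
    by_cases hz : ∀ x, f x = 0
    · exact Or.inl hz
    push Not at hz
    obtain ⟨x0, hx0⟩ := hz
    have hb : BddAbove (Set.range f) := ⟨N, by rintro _ ⟨x, rfl⟩; exact h1 x⟩
    have hp : 0 < ⨆ x, f x := lt_of_lt_of_le (lt_of_le_of_ne (h0 x0) (Ne.symm hx0)) (le_ciSup hb x0)
    refine Or.inr ⟨⨆ x, f x, hp, fun x => le_ciSup hb x, ?_⟩
    intro t ht
    obtain ⟨x, hx⟩ := exists_lt_of_lt_ciSup (show t * (⨆ x, f x) < ⨆ x, f x by nlinarith)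
    exact ⟨x, by rwa [lt_div_iff₀ hp]⟩
  rcases sup u hu0 hu1 with hz | ⟨U, hU, hU1, hU2⟩
  · simp [hz]
  rcases sup v hv0 hv1 with hz | ⟨V, hV, hV1, hV2⟩
  · simp [hz]
  have hs : 0 < Real.sqrt (U * V) := Real.sqrt_pos.2 (mul_pos hU hV)
  have key := pl_norm (fun x => u x / U) (fun x => v x / V) (fun x => w x / Real.sqrt (U * V))
    (hu.div_const _) (hv.div_const _) (hw.div_const _)
    (fun x => div_nonneg (hu0 x) hU.le) (fun x => div_nonneg (hv0 x) hV.le)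
    (fun x => div_nonneg (hw0 x) hs.le)
    (fun x => (div_le_one hU).2 (hU1 x)) (fun x => (div_le_one hV).2 (hV1 x)) hU2 hV2 (by
      intro x y
      rw [div_pow, Real.sq_sqrt (mul_pos hU hV).le, div_mul_div_comm]
      exact div_le_div_of_nonneg_right (h x y) (mul_pos hU hV).le)
  have e : ∀ (f : ℝ → ℝ) (c : ℝ), 0 < c → Measurable f → ∫⁻ x, ENNReal.ofReal (f x)
      = ENNReal.ofReal c * ∫⁻ x, ENNReal.ofReal (f x / c) := by
    intro f c hc hf
    rw [← lintegral_const_mul _ (by fun_prop)]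
    congr 1
    ext x
    rw [← ENNReal.ofReal_mul hc.le]
    congr 1
    field_simp
  rw [e u U hU hu, e v V hV hv, e w _ hs hw, mul_pow, ← ENNReal.ofReal_pow hs.le,
    Real.sq_sqrt (mul_pos hU hV).le, ENNReal.ofReal_mul hU.le]
  calc _ = ENNReal.ofReal U * ENNReal.ofReal V * ((∫⁻ x, ENNReal.ofReal (u x / U)) *
        (∫⁻ x, ENNReal.ofReal (v x / V))) := by ring
    _ ≤ _ := by gcongr

/-- One-dimensional midpoint Prekopa-Leindler. -/
lemma pl_one (u v w : ℝ → ENNReal) (hu : Measurable u) (hv : Measurable v) (hw : Measurable w)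
    (h : ∀ x y, u x * v y ≤ w ((x + y) / 2) ^ 2) :
    (∫⁻ x, u x) * (∫⁻ x, v x) ≤ (∫⁻ x, w x) ^ 2 := by
  have trunc : ∀ N : ℕ, (∫⁻ x, min (u x) N) * (∫⁻ x, min (v x) N) ≤ (∫⁻ x, w x) ^ 2 := by
    intro N
    have hne : ∀ (f : ℝ → ENNReal) x, min (f x) N ≠ ⊤ := fun f x =>
      (lt_of_le_of_lt (min_le_right _ _) (ENNReal.natCast_lt_top N)).ne
    have key := pl_bdd (fun x => (min (u x) N).toReal) (fun x => (min (v x) N).toReal)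
      (fun x => (min (w x) N).toReal)
      (by fun_prop) (by fun_prop) (by fun_prop) (fun x => ENNReal.toReal_nonneg)
      (fun x => ENNReal.toReal_nonneg) (fun x => ENNReal.toReal_nonneg) N
      (fun x => by
        have := ENNReal.toReal_mono (ENNReal.natCast_ne_top N) (min_le_right (u x) (N : ENNReal))
        simpa using this)
      (fun x => by
        have := ENNReal.toReal_mono (ENNReal.natCast_ne_top N) (min_le_right (v x) (N : ENNReal))
        simpa using this)
      (by
        intro x y
        rw [← ENNReal.toReal_mul, ← ENNReal.toReal_pow]
        apply ENNReal.toReal_mono (ENNReal.pow_ne_top (hne w _))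
        rcases le_total (w ((x + y) / 2)) N with h1 | h1
        · rw [min_eq_left h1]
          exact le_trans (mul_le_mul' (min_le_left _ _) (min_le_left _ _)) (h x y)
        · rw [min_eq_right h1, sq]
          exact mul_le_mul' (min_le_right _ _) (min_le_right _ _))
    simp only [ENNReal.ofReal_toReal (hne _ _)] at key
    refine key.trans ?_
    gcongr
    exact min_le_left _ _
  have lim : ∀ f : ℝ → ENNReal, Measurable f →
      Filter.Tendsto (fun N : ℕ => ∫⁻ x, min (f x) N) Filter.atTop (nhds (∫⁻ x, f x)) := by
    intro f hf
    apply lintegral_tendsto_of_tendsto_of_monotone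
    · intro N; fun_prop
    · refine Filter.Eventually.of_forall fun x => ?_
      intro N M hNM
      exact min_le_min_left _ (by exact_mod_cast hNM)
    · refine Filter.Eventually.of_forall fun x => ?_
      have : Filter.Tendsto (fun N : ℕ => min (f x) (N : ENNReal)) Filter.atTop
          (nhds (min (f x) ⊤)) := Filter.Tendsto.min tendsto_const_nhds ENNReal.tendsto_nat_nhds_top
      simpa using this
  by_cases hu0 : ∫⁻ x, u x = 0
  · simp [hu0]
  by_cases hv0 : ∫⁻ x, v x = 0
  · simp [hv0]
  exact le_of_tendsto (ENNReal.Tendsto.mul (lim u hu) (Or.inl hu0) (lim v hv) (Or.inl hv0))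
    (Filter.Eventually.of_forall trunc)

/-- Midpoint Prekopa-Leindler on `Fin k → ℝ`. -/
lemma pl_pi (k : ℕ) : ∀ (u v w : (Fin k → ℝ) → ENNReal), Measurable u → Measurable v →
    Measurable w → (∀ x y, u x * v y ≤ w ((1/2 : ℝ) • (x + y)) ^ 2) →
    (∫⁻ x, u x) * (∫⁻ x, v x) ≤ (∫⁻ x, w x) ^ 2 := by
  induction k with
  | zero =>
    intro u v w hu hv hw h
    simp only [Measure.volume_pi_eq_dirac (0 : Fin 0 → ℝ)]
    rw [lintegral_dirac, lintegral_dirac, lintegral_dirac]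
    have := h 0 0
    simpa using this
  | succ k ih =>
    intro u v w hu hv hw h
    have hcons : ∀ z : ℝ × (Fin k → ℝ),
        (MeasurableEquiv.piFinSuccAbove (fun _ : Fin (k+1) => ℝ) 0).symm z
          = (Fin.cons z.1 z.2 : Fin (k+1) → ℝ) := by
      intro z
      simp [MeasurableEquiv.piFinSuccAbove]
      rfl
    have e : ∀ f : (Fin (k+1) → ℝ) → ENNReal, Measurable f →
        ∫⁻ x, f x = ∫⁻ a : ℝ, ∫⁻ y : Fin k → ℝ, f (Fin.cons a y) := by
      intro f hf
      have h1 := (volume_preserving_piFinSuccAbove (fun _ : Fin (k+1) => ℝ) 0).symm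
      rw [← h1.lintegral_comp hf]
      have h2 : Measurable fun z : ℝ × (Fin k → ℝ) =>
          f ((MeasurableEquiv.piFinSuccAbove (fun _ : Fin (k+1) => ℝ) 0).symm z) :=
        hf.comp (MeasurableEquiv.measurable _)
      rw [Measure.volume_eq_prod, lintegral_prod _ h2.aemeasurable]
      simp only [hcons]
    have hmc : ∀ f : (Fin (k+1) → ℝ) → ENNReal, Measurable f →
        Measurable fun z : ℝ × (Fin k → ℝ) => f (Fin.cons z.1 z.2) := by
      intro f hf
      simp only [← hcons]
      exact hf.comp ((MeasurableEquiv.piFinSuccAbove (fun _ : Fin (k+1) => ℝ) 0).symm.measurable)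
    have hmi : ∀ f : (Fin (k+1) → ℝ) → ENNReal, Measurable f →
        Measurable fun a : ℝ => ∫⁻ y : Fin k → ℝ, f (Fin.cons a y) := by
      intro f hf
      exact (hmc f hf).lintegral_prod_right'
    rw [e u hu, e v hv, e w hw]
    apply pl_one _ _ _ (hmi u hu) (hmi v hv) (hmi w hw)
    intro a b
    apply ih _ _ _ ((hmc u hu).comp (by fun_prop : Measurable fun y : Fin k → ℝ => (a, y)))
      ((hmc v hv).comp (by fun_prop : Measurable fun y : Fin k → ℝ => (b, y)))
      ((hmc w hw).comp (by fun_prop : Measurable fun y : Fin k → ℝ => ((a + b) / 2, y)))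
    intro x y
    have h1 := h (Fin.cons a x) (Fin.cons b y)
    have h2 : (1/2 : ℝ) • ((Fin.cons a x : Fin (k+1) → ℝ) + (Fin.cons b y : Fin (k+1) → ℝ))
        = (Fin.cons ((a + b) / 2) ((1/2 : ℝ) • (x + y)) : Fin (k+1) → ℝ) := by
      ext i
      refine Fin.cases ?_ (fun i => ?_) i
      · simp; ring
      · simp; ring
    rw [h2] at h1
    exact h1


/-- Smooth, positive, even, midpoint log-concave functions bounded by one. -/
structure Nice {k : ℕ} (f : EuclideanSpace ℝ (Fin k) → ℝ) : Prop where
  smooth : ContDiff ℝ 2 f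
  pos : ∀ x, 0 < f x
  le_one : ∀ x, f x ≤ 1
  even : ∀ x, f (-x) = f x
  lc : ∀ x y, f x * f y ≤ f ((1/2 : ℝ) • (x + y)) ^ 2

lemma Nice.comp {k : ℕ} {f : EuclideanSpace ℝ (Fin k) → ℝ} (hf : Nice f)
    (T : EuclideanSpace ℝ (Fin k) →L[ℝ] EuclideanSpace ℝ (Fin k)) : Nice (fun x => f (T x)) where
  smooth := hf.smooth.comp T.contDiff
  pos x := hf.pos _
  le_one x := hf.le_one _
  even x := by simp [hf.even]
  lc x y := by
    have := hf.lc (T x) (T y)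
    simpa [map_add, map_smul] using this

lemma pl_euclid (k : ℕ) (u v w : EuclideanSpace ℝ (Fin k) → ENNReal) (hu : Measurable u)
    (hv : Measurable v) (hw : Measurable w)
    (h : ∀ x y, u x * v y ≤ w ((1/2 : ℝ) • (x + y)) ^ 2) :
    (∫⁻ x, u x) * (∫⁻ x, v x) ≤ (∫⁻ x, w x) ^ 2 := by
  have hp := PiLp.volume_preserving_toLp (Fin k)
  rw [← hp.lintegral_comp hu, ← hp.lintegral_comp hv, ← hp.lintegral_comp hw]
  apply pl_pi k _ _ _ (hu.comp hp.measurable) (hv.comp hp.measurable) (hw.comp hp.measurable)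
  intro x y
  exact h (WithLp.toLp 2 x) (WithLp.toLp 2 y)

lemma anderson_set {k : ℕ} {f : EuclideanSpace ℝ (Fin k) → ℝ} (hf : Nice f)
    (S : Set (EuclideanSpace ℝ (Fin k))) (hS : MeasurableSet S)
    (hS1 : ∀ x ∈ S, ∀ y ∈ S, (1/2 : ℝ) • (x + y) ∈ S) (hS2 : ∀ x ∈ S, -x ∈ S)
    (z : EuclideanSpace ℝ (Fin k)) :
    ∫⁻ x, S.indicator (fun x => ENNReal.ofReal (f (x + z))) x ≤
      ∫⁻ x, S.indicator (fun x => ENNReal.ofReal (f x)) x := by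
  have hc : Measurable f := hf.smooth.continuous.measurable
  have key := pl_euclid k (S.indicator (fun x => ENNReal.ofReal (f (x + z))))
    (S.indicator (fun x => ENNReal.ofReal (f (x - z))))
    (S.indicator (fun x => ENNReal.ofReal (f x)))
    ((by fun_prop : Measurable fun x => ENNReal.ofReal (f (x + z))).indicator hS)
    ((by fun_prop : Measurable fun x => ENNReal.ofReal (f (x - z))).indicator hS)
    ((by fun_prop : Measurable fun x => ENNReal.ofReal (f x)).indicator hS) (by
      intro x y
      by_cases hx : x ∈ S
      · by_cases hy : y ∈ S
        · simp only [Set.indicator_of_mem hx, Set.indicator_of_mem hy,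
            Set.indicator_of_mem (hS1 x hx y hy)]
          rw [← ENNReal.ofReal_mul (hf.pos _).le, ← ENNReal.ofReal_pow (hf.pos _).le]
          apply ENNReal.ofReal_le_ofReal
          have := hf.lc (x + z) (y - z)
          have e2 : x + z + (y - z) = x + y := by abel
          rwa [e2] at this
        · simp [hy]
      · simp [hx])
  have e : ∫⁻ x, S.indicator (fun x => ENNReal.ofReal (f (x - z))) x
      = ∫⁻ x, S.indicator (fun x => ENNReal.ofReal (f (x + z))) x := by
    rw [← lintegral_neg_eq_self]
    congr 1
    ext x
    by_cases hx : x ∈ S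
    · rw [Set.indicator_of_mem hx, Set.indicator_of_mem (hS2 x hx)]
      rw [← hf.even]
      congr 2
      abel
    · have hx' : -x ∉ S := fun h => hx (by simpa using hS2 _ h)
      rw [Set.indicator_of_notMem hx, Set.indicator_of_notMem hx']
  rw [e, ← sq] at key
  exact (ENNReal.pow_le_pow_left_iff (by norm_num)).1 key

lemma anderson_fun {k : ℕ} {f : EuclideanSpace ℝ (Fin k) → ℝ} (hf : Nice f)
    (q : EuclideanSpace ℝ (Fin k) → ℝ) (hq : Continuous q) (hq0 : ∀ x, 0 ≤ q x)
    (hqc : HasCompactSupport q)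
    (hq1 : ∀ x y, min (q x) (q y) ≤ q ((1/2 : ℝ) • (x + y))) (hq2 : ∀ x, q (-x) = q x)
    (z : EuclideanSpace ℝ (Fin k)) :
    ∫ x, q x * f (x + z) ≤ ∫ x, q x * f x := by
  have hfc := hf.smooth.continuous
  have hgood : ∀ z, Integrable (fun x => q x * f (x + z)) := fun z =>
    (by fun_prop : Continuous fun x => q x * f (x + z)).integrable_of_hasCompactSupport hqc.mul_right
  have hgood0 : Integrable (fun x => q x * f x) := by simpa using hgood 0
  have L : ∀ z, ∫⁻ x, ENNReal.ofReal (q x * f (x + z)) = ∫⁻ t in Set.Ioi (0:ℝ),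
      ∫⁻ x, {x | t < q x}.indicator (fun x => ENNReal.ofReal (f (x + z))) x := by
    intro z
    rw [lintegral_lintegral_swap]
    · congr 1
      ext x
      have : ∀ t, {x | t < q x}.indicator (fun x => ENNReal.ofReal (f (x + z))) x
          = (Set.Iio (q x)).indicator (fun _ => ENNReal.ofReal (f (x + z))) t := by
        intro t
        simp [Set.indicator]
      simp only [this]
      rw [lintegral_indicator measurableSet_Iio, setLIntegral_const,
        Measure.restrict_apply measurableSet_Iio, Set.inter_comm, Set.Ioi_inter_Iio,
        Real.volume_Ioo, ENNReal.ofReal_mul (hq0 x), sub_zero, mul_comm]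
    · apply Measurable.aemeasurable
      have hs : MeasurableSet {p : ℝ × EuclideanSpace ℝ (Fin k) | p.1 < q p.2} :=
        measurableSet_lt measurable_fst (hq.measurable.comp measurable_snd)
      have : Measurable ({p : ℝ × EuclideanSpace ℝ (Fin k) | p.1 < q p.2}.indicator
          (fun p => ENNReal.ofReal (f (p.2 + z)))) := by
        apply Measurable.indicator _ hs
        have := hfc.measurable
        fun_prop
      convert this using 1
      ext p
      simp [Function.uncurry, Set.indicator]
  have L2 : ∫⁻ x, ENNReal.ofReal (q x * f (x + z)) ≤ ∫⁻ x, ENNReal.ofReal (q x * f x) := by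
    have := L 0
    simp only [add_zero] at this
    rw [L z, this]
    apply lintegral_mono
    intro t
    apply anderson_set hf
    · exact measurableSet_lt measurable_const hq.measurable
    · intro x hx y hy
      exact lt_of_lt_of_le (lt_min hx hy) (hq1 x y)
    · intro x hx
      simpa [hq2] using hx
  rw [integral_eq_lintegral_of_nonneg_ae _ (hgood z).aestronglyMeasurable,
    integral_eq_lintegral_of_nonneg_ae _ hgood0.aestronglyMeasurable]
  · apply ENNReal.toReal_mono _ L2
    exact hgood0.lintegral_lt_top.ne
  · exact Filter.Eventually.of_forall fun x => mul_nonneg (hq0 x) (hf.pos _).le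
  · exact Filter.Eventually.of_forall fun x => mul_nonneg (hq0 x) (hf.pos _).le


lemma int_deriv {k : ℕ} (q : EuclideanSpace ℝ (Fin k) → ℝ) (hq : Continuous q)
    (hqc : HasCompactSupport q) (G G' : ℝ → EuclideanSpace ℝ (Fin k) → ℝ)
    (hG : Continuous (Function.uncurry G)) (hG' : Continuous (Function.uncurry G'))
    (hd : ∀ s x, HasDerivAt (fun s => G s x) (G' s x) s) (s : ℝ) :
    HasDerivAt (fun s => ∫ x, q x * G s x) (∫ x, q x * G' s x) s := by
  obtain ⟨M, hM⟩ := (((isCompact_Icc (a := s - 1) (b := s + 1)).prod hqc.isCompact).image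
    hG'.norm).bddAbove
  have hGs : ∀ s, Continuous (G s) := fun s => hG.comp (by fun_prop : Continuous fun x => (s, x))
  have hGs' : ∀ s, Continuous (G' s) := fun s => hG'.comp (by fun_prop : Continuous fun x => (s, x))
  refine (hasDerivAt_integral_of_dominated_loc_of_deriv_le (s := Set.Icc (s - 1) (s + 1))
    (bound := fun x => |q x| * M) (F := fun s x => q x * G s x) (F' := fun s x => q x * G' s x)
    (Icc_mem_nhds (by linarith) (by linarith)) ?_ ?_ ?_ ?_ ?_ ?_).2
  · exact Filter.Eventually.of_forall fun t => (hq.mul (hGs t)).aestronglyMeasurable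
  · exact (hq.mul (hGs s)).integrable_of_hasCompactSupport hqc.mul_right
  · exact (hq.mul (hGs' s)).aestronglyMeasurable
  · refine Filter.Eventually.of_forall fun x t ht => ?_
    rw [norm_mul, Real.norm_eq_abs]
    by_cases hx : x ∈ tsupport q
    · gcongr
      exact hM ⟨(t, x), ⟨ht, hx⟩, rfl⟩
    · rw [image_eq_zero_of_notMem_tsupport hx]; simp
  · exact (hq.abs.mul continuous_const).integrable_of_hasCompactSupport
      ((hqc.comp_left (g := fun t : ℝ => |t|) (by simp)).mul_right)
  · exact Filter.Eventually.of_forall fun x t ht => (hd t x).const_mul (q x)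

lemma second_test (Ψ Ψ1 Ψ2 : ℝ → ℝ) (h1 : ∀ z, HasDerivAt Ψ (Ψ1 z) z)
    (h2 : ∀ z, HasDerivAt Ψ1 (Ψ2 z) z) (hmax : ∀ z, Ψ z ≤ Ψ 0) : Ψ2 0 ≤ 0 := by
  have d1 : deriv Ψ = Ψ1 := funext fun z => (h1 z).deriv
  have d2 : deriv Ψ1 = Ψ2 := funext fun z => (h2 z).deriv
  by_contra hcon
  push Not at hcon
  have hm : IsLocalMax Ψ 0 := Filter.Eventually.of_forall hmax
  have hn : IsLocalMin Ψ 0 := isLocalMin_of_deriv_deriv_pos (by rw [d1, d2]; exact hcon)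
    hm.deriv_eq_zero (h1 0).continuousAt
  have hc : Ψ =ᶠ[nhds 0] fun _ => Ψ 0 := by
    filter_upwards [hn] with z hz using le_antisymm (hmax z) hz
  have hc1 : Ψ1 =ᶠ[nhds 0] fun _ => 0 := by
    rw [← d1]
    have := hc.deriv
    simpa using this
  have := hc1.deriv_eq
  rw [d2] at this
  simp at this
  linarith

lemma grad_prod_nonneg {k : ℕ} {f : EuclideanSpace ℝ (Fin k) → ℝ} (hf : Nice f)
    (q : EuclideanSpace ℝ (Fin k) → ℝ) (hq : ContDiff ℝ 1 q) (hq0 : ∀ x, 0 ≤ q x)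
    (hqc : HasCompactSupport q)
    (hq1 : ∀ x y, min (q x) (q y) ≤ q ((1/2 : ℝ) • (x + y))) (hq2 : ∀ x, q (-x) = q x)
    (e : EuclideanSpace ℝ (Fin k)) :
    0 ≤ ∫ x, fderiv ℝ q x e * fderiv ℝ f x e := by
  have hf1 : ContDiff ℝ 1 (fun x => fderiv ℝ f x e) :=
    (hf.smooth.fderiv_right (m := 1) (by norm_num)).clm_apply contDiff_const
  have hf2 : Continuous (fun x => fderiv ℝ (fun x => fderiv ℝ f x e) x e) :=
    (hf1.continuous_fderiv (by norm_num)).clm_apply continuous_const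
  have line : ∀ (x : EuclideanSpace ℝ (Fin k)) (z : ℝ), HasDerivAt (fun z : ℝ => x + z • e) e z := by
    intro x z
    simpa using ((hasDerivAt_id z).smul_const e).const_add x
  have hcl : Continuous (fun p : ℝ × EuclideanSpace ℝ (Fin k) => p.2 + p.1 • e) := by fun_prop
  have D1 := int_deriv q hq.continuous hqc (fun z x => f (x + z • e))
    (fun z x => fderiv ℝ f (x + z • e) e) (hf.smooth.continuous.comp hcl)
    (hf1.continuous.comp hcl) (fun z x =>
      ((hf.smooth.differentiable (by norm_num) _).hasFDerivAt.comp_hasDerivAt z (line x z)))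
  have D2 := int_deriv q hq.continuous hqc (fun z x => fderiv ℝ f (x + z • e) e)
    (fun z x => fderiv ℝ (fun x => fderiv ℝ f x e) (x + z • e) e) (hf1.continuous.comp hcl)
    (hf2.comp hcl) (fun z x => by
      have h0 : HasFDerivAt (fun x => fderiv ℝ f x e)
        (fderiv ℝ (fun x => fderiv ℝ f x e) (x + z • e)) (x + z • e) :=
        (hf1.differentiable (by norm_num) (x + z • e)).hasFDerivAt
      exact h0.comp_hasDerivAt z (line x z))
  have T := second_test _ _ _ D1 D2 (by
    intro z
    simpa using anderson_fun hf q hq.continuous hq0 hqc hq1 hq2 (z • e))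
  simp only [zero_smul, add_zero] at T
  rw [integral_mul_fderiv_eq_neg_fderiv_mul_of_integrable] at T
  · linarith
  · have hqd : Continuous (fun x => fderiv ℝ q x e) :=
      (hq.continuous_fderiv (by norm_num)).clm_apply continuous_const
    exact (hqd.mul hf1.continuous).integrable_of_hasCompactSupport
      (hqc.fderiv_apply (𝕜 := ℝ) e).mul_right
  · exact (hq.continuous.mul hf2).integrable_of_hasCompactSupport hqc.mul_right
  · exact (hq.continuous.mul hf1.continuous).integrable_of_hasCompactSupport hqc.mul_right
  · exact fun x _ => hq.differentiable (by norm_num) x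
  · exact fun x _ => hf1.differentiable (by norm_num) x

/-- A smooth cutoff on the half-line. -/
noncomputable def cut (a b s : ℝ) : ℝ := Real.smoothTransition ((b - s) / (b - a))

lemma cut_contDiff (a b : ℝ) : ContDiff ℝ 2 (cut a b) := by
  unfold cut
  exact (Real.smoothTransition.contDiff (n := 2)).comp (by fun_prop)

lemma cut_anti {a b : ℝ} (hab : a < b) : Antitone (cut a b) := by
  intro s t hst
  apply Real.smoothTransition.monotone
  have : 0 < b - a := by linarith
  gcongr

lemma cut_zero {a b s : ℝ} (hab : a < b) (hs : b ≤ s) : cut a b s = 0 := by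
  apply Real.smoothTransition.zero_of_nonpos
  apply div_nonpos_of_nonpos_of_nonneg <;> linarith

lemma cut_one {a b s : ℝ} (hab : a < b) (hs : s ≤ a) : cut a b s = 1 := by
  apply Real.smoothTransition.one_of_one_le
  rw [le_div_iff₀ (by linarith)]
  linarith

/-- The radial weight. -/
noncomputable def wt (a b s : ℝ) : ℝ := - deriv (cut a b) s

lemma wt_nonneg {a b : ℝ} (hab : a < b) (s : ℝ) : 0 ≤ wt a b s := by
  unfold wt
  have := (cut_anti hab).deriv_nonpos (x := s)
  linarith

lemma wt_cont (a b : ℝ) : Continuous (wt a b) :=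
  ((cut_contDiff a b).continuous_deriv (by norm_num)).neg

lemma wt_zero {a b s : ℝ} (hab : a < b) (hs : s < a ∨ b < s) : wt a b s = 0 := by
  unfold wt
  rcases hs with hs | hs
  · have : cut a b =ᶠ[nhds s] fun _ => 1 := by
      filter_upwards [Iio_mem_nhds hs] with t ht using cut_one hab (le_of_lt ht)
    rw [this.deriv_eq]; simp
  · have : cut a b =ᶠ[nhds s] fun _ => 0 := by
      filter_upwards [Ioi_mem_nhds hs] with t ht using cut_zero hab (le_of_lt ht)
    rw [this.deriv_eq]; simp

lemma wt_pos {a b : ℝ} (hab : a < b) : ∃ s ∈ Set.Ioo a b, 0 < wt a b s := by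
  obtain ⟨s, hs, h⟩ := exists_deriv_eq_slope (cut a b) hab (cut_contDiff a b).continuous.continuousOn
    ((cut_contDiff a b).differentiable (by norm_num)).differentiableOn
  refine ⟨s, hs, ?_⟩
  unfold wt
  rw [h, cut_zero hab le_rfl, cut_one hab le_rfl]
  have : 0 < b - a := by linarith
  rw [zero_sub, neg_div, neg_neg]
  positivity

lemma radial_compact {k : ℕ} (p : ℝ → ℝ) (b : ℝ) (hp : ∀ s, b < s → p s = 0) :
    HasCompactSupport (fun x : EuclideanSpace ℝ (Fin k) => p (‖x‖ ^ 2)) := by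
  apply HasCompactSupport.intro (isCompact_closedBall (0 : EuclideanSpace ℝ (Fin k)) (|b| + 1))
  intro x hx
  apply hp
  simp only [Metric.mem_closedBall, dist_zero_right, not_le] at hx
  have := le_abs_self b
  have := abs_nonneg b
  nlinarith

lemma radial_deriv {k : ℕ} {f : EuclideanSpace ℝ (Fin k) → ℝ} (hf : Nice f)
    {a b : ℝ} (hab : a < b) (e : EuclideanSpace ℝ (Fin k)) :
    ∫ x, wt a b (‖x‖ ^ 2) * (inner ℝ x e * fderiv ℝ f x e) ≤ 0 := by
  have hq : ContDiff ℝ 1 (fun x : EuclideanSpace ℝ (Fin k) => cut a b (‖x‖ ^ 2)) :=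
    ((cut_contDiff a b).of_le (by norm_num)).comp (contDiff_norm_sq ℝ)
  have key := grad_prod_nonneg hf (fun x => cut a b (‖x‖ ^ 2)) hq
    (fun x => Real.smoothTransition.nonneg _)
    (radial_compact _ b fun s hs => cut_zero hab hs.le)
    (by
      intro x y
      rw [← (cut_anti hab).map_max]
      apply cut_anti hab
      have h1 : ‖(1/2 : ℝ) • (x + y)‖ ≤ max ‖x‖ ‖y‖ := by
        rw [norm_smul]
        have := norm_add_le x y
        have h2 := le_max_left ‖x‖ ‖y‖
        have h3 := le_max_right ‖x‖ ‖y‖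
        have h4 : ‖(1/2 : ℝ)‖ = 1/2 := by norm_num
        rw [h4]
        linarith
      rcases le_total ‖x‖ ‖y‖ with h | h
      · rw [max_eq_right h] at h1
        exact le_trans (by gcongr) (le_max_right _ _)
      · rw [max_eq_left h] at h1
        exact le_trans (by gcongr) (le_max_left _ _))
    (by intro x; simp) e
  have hfd : ∀ x : EuclideanSpace ℝ (Fin k),
      fderiv ℝ (fun x => cut a b (‖x‖ ^ 2)) x e = - 2 * (wt a b (‖x‖ ^ 2) * inner ℝ x e) := by
    intro x
    have h1 : HasFDerivAt (fun x : EuclideanSpace ℝ (Fin k) => ‖x‖ ^ 2) (2 • innerSL ℝ x) x :=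
      (hasStrictFDerivAt_norm_sq x).hasFDerivAt
    have h2 := (((cut_contDiff a b).differentiable (by norm_num) (‖x‖^2)).hasDerivAt).comp_hasFDerivAt x h1
    have h3 : HasFDerivAt (fun x => cut a b (‖x‖ ^ 2)) _ x := h2
    rw [h3.fderiv]
    simp [wt]
    ring
  simp only [hfd] at key
  have e2 : ∀ x, - 2 * (wt a b (‖x‖ ^ 2) * inner ℝ x e) * fderiv ℝ f x e
      = (-2) * (wt a b (‖x‖ ^ 2) * (inner ℝ x e * fderiv ℝ f x e)) := fun x => by ring
  simp only [e2] at key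
  rw [integral_const_mul] at key
  linarith

/-- scaling by `lam` in the direction `e` -/
noncomputable def scl {k : ℕ} (e : EuclideanSpace ℝ (Fin k)) (lam : ℝ) :
    EuclideanSpace ℝ (Fin k) →L[ℝ] EuclideanSpace ℝ (Fin k) :=
  ContinuousLinearMap.id ℝ _ + (lam - 1) • (innerSL ℝ e).smulRight e

lemma scl_apply {k : ℕ} (e : EuclideanSpace ℝ (Fin k)) (lam : ℝ) (x : EuclideanSpace ℝ (Fin k)) :
    scl e lam x = x + ((lam - 1) * inner ℝ x e) • e := by
  simp [scl, smul_smul, real_inner_comm]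

lemma radial_scl {k : ℕ} {f : EuclideanSpace ℝ (Fin k) → ℝ} (hf : Nice f)
    {a b : ℝ} (hab : a < b) (e : EuclideanSpace ℝ (Fin k)) (he : ‖e‖ = 1) (lam : ℝ)
    (h0 : 0 ≤ lam) (h1 : lam ≤ 1) :
    ∫ x : EuclideanSpace ℝ (Fin k), wt a b (‖x‖ ^ 2) * f x ≤
      ∫ x : EuclideanSpace ℝ (Fin k), wt a b (‖x‖ ^ 2) * f (scl e lam x) := by
  have hwc : Continuous (fun x : EuclideanSpace ℝ (Fin k) => wt a b (‖x‖ ^ 2)) :=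
    (wt_cont a b).comp (by fun_prop)
  have hws : HasCompactSupport (fun x : EuclideanSpace ℝ (Fin k) => wt a b (‖x‖ ^ 2)) :=
    radial_compact _ b fun s hs => wt_zero hab (Or.inr hs)
  have hf1 : Continuous (fderiv ℝ f) := hf.smooth.continuous_fderiv (by norm_num)
  have hcl : Continuous (fun p : ℝ × EuclideanSpace ℝ (Fin k) => p.2 + ((p.1 - 1) * inner ℝ p.2 e) • e) := by
    fun_prop
  have D := int_deriv (fun x => wt a b (‖x‖ ^ 2)) hwc hws
    (fun l x => f (x + ((l - 1) * inner ℝ x e) • e))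
    (fun l x => fderiv ℝ f (x + ((l - 1) * inner ℝ x e) • e) ((inner ℝ x e : ℝ) • e))
    (hf.smooth.continuous.comp hcl) ((hf1.comp hcl).clm_apply (by fun_prop))
    (by
      intro l x
      apply (hf.smooth.differentiable (by norm_num) _).hasFDerivAt.comp_hasDerivAt l
      have := ((((hasDerivAt_id l).sub_const 1).mul_const (inner ℝ x e)).smul_const e).const_add x
      simpa using this)
  have anti : AntitoneOn (fun l => ∫ x : EuclideanSpace ℝ (Fin k),
      wt a b (‖x‖ ^ 2) * f (x + ((l - 1) * inner ℝ x e) • e)) (Set.Icc 0 1) := by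
    apply antitoneOn_of_deriv_nonpos (convex_Icc 0 1)
    · exact fun l _ => (D l).continuousAt.continuousWithinAt
    · exact fun l _ => (D l).differentiableAt.differentiableWithinAt
    · intro l hl
      rw [interior_Icc] at hl
      rw [(D l).deriv]
      have R := radial_deriv (hf.comp (scl e l)) hab e
      have hfd : ∀ x, fderiv ℝ (fun x => f (scl e l x)) x e
          = l * fderiv ℝ f (x + ((l - 1) * inner ℝ x e) • e) e := by
        intro x
        have h2 : HasFDerivAt (fun x => f (scl e l x)) _ x :=
          (hf.smooth.differentiable (by norm_num) (scl e l x)).hasFDerivAt.comp x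
            (scl e l).hasFDerivAt
        rw [h2.fderiv, ContinuousLinearMap.comp_apply]
        have h3 : scl e l e = l • e := by
          rw [scl_apply, real_inner_self_eq_norm_sq, he]
          module
        rw [h3, map_smul, scl_apply, smul_eq_mul]
      simp only [hfd] at R
      have e3 : ∀ x, wt a b (‖x‖ ^ 2) * (inner ℝ x e *
            (l * fderiv ℝ f (x + ((l - 1) * inner ℝ x e) • e) e))
          = l * (wt a b (‖x‖ ^ 2) *
            fderiv ℝ f (x + ((l - 1) * inner ℝ x e) • e) ((inner ℝ x e : ℝ) • e)) := by
        intro x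
        rw [map_smul, smul_eq_mul]; ring
      simp only [e3] at R
      rw [integral_const_mul] at R
      by_contra hc
      push Not at hc
      have := mul_pos hl.1 hc
      linarith
  have := anti ⟨h0, h1⟩ (Set.right_mem_Icc.2 zero_le_one) h1
  simpa [scl_apply] using this


/-- The radial absolutely continuous measure with density `wt`. -/
noncomputable def rad (k : ℕ) (a b : ℝ) : Measure (EuclideanSpace ℝ (Fin k)) :=
  volume.withDensity (fun x => ENNReal.ofReal (wt a b (‖x‖ ^ 2)))

lemma rad_integral {k : ℕ} {a b : ℝ} (hab : a < b) {F : Type*} [NormedAddCommGroup F]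
    [NormedSpace ℝ F] (g : EuclideanSpace ℝ (Fin k) → F) :
    ∫ x, g x ∂(rad k a b) = ∫ x : EuclideanSpace ℝ (Fin k), wt a b (‖x‖ ^ 2) • g x := by
  have hwc : Continuous (fun x : EuclideanSpace ℝ (Fin k) => wt a b (‖x‖ ^ 2)) :=
    (wt_cont a b).comp (by fun_prop)
  unfold rad
  rw [integral_withDensity_eq_integral_toReal_smul hwc.measurable.ennreal_ofReal (by simp)]
  congr 1
  ext x
  rw [ENNReal.toReal_ofReal (wt_nonneg hab _)]

lemma rad_finite {k : ℕ} {a b : ℝ} (hab : a < b) : IsFiniteMeasure (rad k a b) := by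
  have hwc : Continuous (fun x : EuclideanSpace ℝ (Fin k) => wt a b (‖x‖ ^ 2)) :=
    (wt_cont a b).comp (by fun_prop)
  have hws : HasCompactSupport (fun x : EuclideanSpace ℝ (Fin k) => wt a b (‖x‖ ^ 2)) :=
    radial_compact _ b fun s hs => wt_zero hab (Or.inr hs)
  exact isFiniteMeasure_withDensity_ofReal (hwc.integrable_of_hasCompactSupport hws).2

lemma rad_charFun {k : ℕ} {a b : ℝ} (hab : a < b) (v v' : EuclideanSpace ℝ (Fin k))
    (h : ‖v‖ = ‖v'‖) : charFun (rad k a b) v = charFun (rad k a b) v' := by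
  rw [charFun_apply, charFun_apply, rad_integral hab, rad_integral hab]
  set R := Submodule.reflection (ℝ ∙ (v - v'))ᗮ with hR
  have hRv : R v = v' := Submodule.reflection_sub h
  rw [← R.measurePreserving.integral_comp R.toHomeomorph.measurableEmbedding
    (fun x => wt a b (‖x‖ ^ 2) • Complex.exp ((inner ℝ x v' : ℝ) * Complex.I))]
  congr 1
  ext x
  rw [R.norm_map, ← hRv, R.inner_map_map]

lemma swap_law {k : ℕ} (m ν : Measure (EuclideanSpace ℝ (Fin k))) [IsFiniteMeasure m]
    [IsFiniteMeasure ν] (hm : ∀ v v', ‖v‖ = ‖v'‖ → charFun m v = charFun m v')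
    (hν : ∀ v v', ‖v‖ = ‖v'‖ → charFun ν v = charFun ν v') :
    (m.prod ν).map (fun p => ‖p.2‖ • p.1) = (m.prod ν).map (fun p => ‖p.1‖ • p.2) := by
  apply Measure.ext_of_charFun
  ext t
  rw [charFun_apply, charFun_apply]
  have c1 : Continuous fun p : EuclideanSpace ℝ (Fin k) × EuclideanSpace ℝ (Fin k) => ‖p.2‖ • p.1 := by
    fun_prop
  have c2 : Continuous fun p : EuclideanSpace ℝ (Fin k) × EuclideanSpace ℝ (Fin k) => ‖p.1‖ • p.2 := by
    fun_prop
  rw [integral_map c1.aemeasurable (by fun_prop), integral_map c2.aemeasurable (by fun_prop)]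
  have hgood : ∀ g : EuclideanSpace ℝ (Fin k) × EuclideanSpace ℝ (Fin k) → ℝ, Continuous g →
      Integrable (fun p => Complex.exp ((g p : ℝ) * Complex.I)) (m.prod ν) := by
    intro g hg
    apply Integrable.of_bound (C := 1) (by fun_prop)
    exact Filter.Eventually.of_forall fun p => (Complex.norm_exp_ofReal_mul_I _).le
  rw [integral_prod_symm _ (hgood (fun p => inner ℝ (‖p.2‖ • p.1) t) (by fun_prop)),
    integral_prod _ (hgood (fun p => inner ℝ (‖p.1‖ • p.2) t) (by fun_prop))]
  have s1 : ∀ z : EuclideanSpace ℝ (Fin k),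
      ∫ x, Complex.exp ((inner ℝ (‖z‖ • x) t : ℝ) * Complex.I) ∂m
      = ∫ x, Complex.exp ((inner ℝ x (‖t‖ • z) : ℝ) * Complex.I) ∂m := by
    intro z
    have := hm (‖z‖ • t) (‖t‖ • z) (by simp [norm_smul, mul_comm])
    rw [charFun_apply, charFun_apply] at this
    rw [← this]
    simp only [real_inner_smul_left, real_inner_smul_right]
  have s2 : ∀ x : EuclideanSpace ℝ (Fin k),
      ∫ z, Complex.exp ((inner ℝ (‖x‖ • z) t : ℝ) * Complex.I) ∂ν
      = ∫ z, Complex.exp ((inner ℝ x (‖t‖ • z) : ℝ) * Complex.I) ∂ν := by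
    intro x
    have := hν (‖x‖ • t) (‖t‖ • x) (by simp [norm_smul, mul_comm])
    rw [charFun_apply, charFun_apply] at this
    simp only [real_inner_smul_left, real_inner_smul_right] at this ⊢
    rw [this]
    simp only [real_inner_comm]
  simp only [s1, s2]
  rw [← integral_prod_symm (fun p : EuclideanSpace ℝ (Fin k) × EuclideanSpace ℝ (Fin k) =>
      Complex.exp ((inner ℝ p.1 (‖t‖ • p.2) : ℝ) * Complex.I)) (hgood (fun p => inner ℝ p.1 (‖t‖ • p.2)) (by fun_prop)),
    ← integral_prod (fun p : EuclideanSpace ℝ (Fin k) × EuclideanSpace ℝ (Fin k) =>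
      Complex.exp ((inner ℝ p.1 (‖t‖ • p.2) : ℝ) * Complex.I)) (hgood (fun p => inner ℝ p.1 (‖t‖ • p.2)) (by fun_prop))]

lemma spherical_scl {k : ℕ} {f : EuclideanSpace ℝ (Fin k) → ℝ} (hf : Nice f)
    (ν : Measure (EuclideanSpace ℝ (Fin k))) [IsProbabilityMeasure ν]
    (hν : ∀ v v', ‖v‖ = ‖v'‖ → charFun ν v = charFun ν v')
    (e : EuclideanSpace ℝ (Fin k)) (he : ‖e‖ = 1) (lam : ℝ) (h0 : 0 ≤ lam) (h1 : lam ≤ 1) :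
    ∫ x, f x ∂ν ≤ ∫ x, f (scl e lam x) ∂ν := by
  have hfc := hf.smooth.continuous
  have hg := hf.comp (scl e lam)
  have bint : ∀ {g : EuclideanSpace ℝ (Fin k) → ℝ}, Nice g → ∀ {α : Type} [MeasurableSpace α]
      (m : Measure α) [IsFiniteMeasure m] (T : α → EuclideanSpace ℝ (Fin k)), Measurable T →
      Integrable (fun p => g (T p)) m := by
    intro g hg α _ m _ T hT
    apply Integrable.of_bound (C := 1)
    · exact (hg.smooth.continuous.measurable.comp hT).aestronglyMeasurable
    · refine Filter.Eventually.of_forall fun p => ?_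
      rw [Real.norm_eq_abs, abs_of_pos (hg.pos _)]
      exact hg.le_one _
  have Hcont : ∀ {g : EuclideanSpace ℝ (Fin k) → ℝ}, Nice g →
      Continuous (fun r : ℝ => ∫ z, g (r • z) ∂ν) := by
    intro g hg
    have := hg.smooth.continuous
    apply continuous_of_dominated (bound := fun _ => 1)
    · intro r
      exact Continuous.aestronglyMeasurable (by fun_prop)
    · intro r
      refine Filter.Eventually.of_forall fun p => ?_
      rw [Real.norm_eq_abs, abs_of_pos (hg.pos _)]
      exact hg.le_one _
    · exact integrable_const _
    · exact Filter.Eventually.of_forall fun p => by fun_prop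
  by_contra hcon
  push Not at hcon
  set H : ℝ → ℝ := fun r => (∫ z, f (r • z) ∂ν) - ∫ z, f (scl e lam (r • z)) ∂ν with hH
  have hHc : Continuous H := (Hcont hf).sub (Hcont hg)
  have hH1 : 0 < H (Real.sqrt 1) := by
    simp [hH]; exact hcon
  have hev : ∀ᶠ s in nhds (1:ℝ), 0 < H (Real.sqrt s) :=
    (hHc.comp Real.continuous_sqrt).continuousAt.eventually (lt_mem_nhds hH1)
  obtain ⟨δ, hδ, hδ'⟩ := Metric.eventually_nhds_iff.1 hev
  set d := min (δ / 2) (1/2) with hd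
  have hd0 : 0 < d := by positivity
  have hd1 : d < δ := lt_of_le_of_lt (min_le_left _ _) (by linarith)
  have hd2 : d ≤ 1/2 := min_le_right _ _
  have hab : 1 - d < 1 + d := by linarith
  have := rad_finite (k := k) hab
  set m := rad k (1 - d) (1 + d) with hm
  have hpos : ∀ s, wt (1 - d) (1 + d) s ≠ 0 → 0 < H (Real.sqrt s) := by
    intro s hs
    apply hδ'
    have h3 : ¬ (s < 1 - d ∨ 1 + d < s) := fun h => hs (wt_zero hab h)
    push Not at h3
    rw [Real.dist_eq, abs_lt]
    constructor <;> linarith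
  -- the averaged inequality
  have law := swap_law m ν (rad_charFun hab) hν
  have tr : ∀ {g : EuclideanSpace ℝ (Fin k) → ℝ}, Nice g →
      ∫ z, ∫ x, g (‖z‖ • x) ∂m ∂ν = ∫ x, ∫ z, g (‖x‖ • z) ∂ν ∂m := by
    intro g hg
    have hgc := hg.smooth.continuous
    have c1 : Continuous fun p : EuclideanSpace ℝ (Fin k) × EuclideanSpace ℝ (Fin k) => ‖p.2‖ • p.1 := by
      fun_prop
    have c2 : Continuous fun p : EuclideanSpace ℝ (Fin k) × EuclideanSpace ℝ (Fin k) => ‖p.1‖ • p.2 := by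
      fun_prop
    rw [← integral_prod_symm (fun p : EuclideanSpace ℝ (Fin k) × EuclideanSpace ℝ (Fin k) =>
        g (‖p.2‖ • p.1)) (bint hg _ _ c1.measurable),
      ← integral_prod (fun p : EuclideanSpace ℝ (Fin k) × EuclideanSpace ℝ (Fin k) =>
        g (‖p.1‖ • p.2)) (bint hg _ _ c2.measurable),
      ← integral_map c1.aemeasurable hgc.aestronglyMeasurable, law,
      integral_map c2.aemeasurable hgc.aestronglyMeasurable]
  have ineq : ∫ z, ∫ x, f (‖z‖ • x) ∂m ∂ν ≤ ∫ z, ∫ x, f (scl e lam (‖z‖ • x)) ∂m ∂ν := by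
    have ii : ∀ {g : EuclideanSpace ℝ (Fin k) → ℝ}, Nice g →
        Integrable (fun z => ∫ x, g (‖z‖ • x) ∂m) ν := by
      intro g hg
      exact (bint hg (m.prod ν) (fun p => ‖p.2‖ • p.1)
        (by fun_prop : Continuous fun p : EuclideanSpace ℝ (Fin k) × EuclideanSpace ℝ (Fin k) =>
          ‖p.2‖ • p.1).measurable).integral_prod_right
    apply integral_mono (ii hf) (ii hg)
    intro z
    simp only [hm]
    rw [rad_integral hab, rad_integral hab]
    have := radial_scl (hf.comp (‖z‖ • ContinuousLinearMap.id ℝ _)) hab e he lam h0 h1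
    simpa using this
  rw [tr hf, tr hg, rad_integral hab, rad_integral hab] at ineq
  have hwc : Continuous (fun x : EuclideanSpace ℝ (Fin k) => wt (1 - d) (1 + d) (‖x‖ ^ 2)) :=
    (wt_cont _ _).comp (by fun_prop)
  have hws : HasCompactSupport (fun x : EuclideanSpace ℝ (Fin k) => wt (1 - d) (1 + d) (‖x‖ ^ 2)) :=
    radial_compact _ (1 + d) fun s hs => wt_zero hab (Or.inr hs)
  have I1 : ∀ {g : EuclideanSpace ℝ (Fin k) → ℝ}, Nice g →
      Integrable (fun x : EuclideanSpace ℝ (Fin k) =>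
        wt (1 - d) (1 + d) (‖x‖ ^ 2) • ∫ z, g (‖x‖ • z) ∂ν) := by
    intro g hg
    have h2 : Continuous (fun x : EuclideanSpace ℝ (Fin k) => ∫ z, g (‖x‖ • z) ∂ν) :=
      (Hcont hg).comp continuous_norm
    exact (hwc.smul h2).integrable_of_hasCompactSupport hws.smul_right
  have P : 0 < ∫ x : EuclideanSpace ℝ (Fin k), wt (1 - d) (1 + d) (‖x‖ ^ 2) * H ‖x‖ := by
    obtain ⟨s, hs, hsw⟩ := wt_pos hab
    have hs0 : 0 < s := by linarith [hs.1]
    refine Continuous.integral_pos_of_hasCompactSupport_nonneg_nonzero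
      (x := Real.sqrt s • e) (hwc.mul (hHc.comp continuous_norm)) hws.mul_right ?_ ?_
    · intro x
      by_cases hx : wt (1 - d) (1 + d) (‖x‖ ^ 2) = 0
      · simp [hx]
      · have := hpos _ hx
        rw [Real.sqrt_sq (norm_nonneg x)] at this
        exact mul_nonneg (wt_nonneg hab _) this.le
    · have hn : ‖Real.sqrt s • e‖ = Real.sqrt s := by
        rw [norm_smul, he, Real.norm_eq_abs, abs_of_nonneg (Real.sqrt_nonneg s), mul_one]
      rw [hn, Real.sq_sqrt hs0.le]
      exact (mul_pos hsw (hpos s hsw.ne')).ne'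
  have E : ∫ x : EuclideanSpace ℝ (Fin k), wt (1 - d) (1 + d) (‖x‖ ^ 2) * H ‖x‖
      = (∫ x : EuclideanSpace ℝ (Fin k), wt (1 - d) (1 + d) (‖x‖ ^ 2) • ∫ z, f (‖x‖ • z) ∂ν)
       - ∫ x : EuclideanSpace ℝ (Fin k),
          wt (1 - d) (1 + d) (‖x‖ ^ 2) • ∫ z, f (scl e lam (‖x‖ • z)) ∂ν := by
    rw [← integral_sub (I1 hf) (I1 hg)]
    congr 1
    ext x
    simp only [hH, smul_eq_mul]
    ring
  rw [E] at P
  linarith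


lemma spherical_diag {k : ℕ} (ν : Measure (EuclideanSpace ℝ (Fin k))) [IsProbabilityMeasure ν]
    (hν : ∀ v v', ‖v‖ = ‖v'‖ → charFun ν v = charFun ν v')
    (lam : Fin k → ℝ) (h0 : ∀ i, 0 ≤ lam i) (h1 : ∀ i, lam i ≤ 1) (s : Finset (Fin k)) :
    ∃ T : EuclideanSpace ℝ (Fin k) →L[ℝ] EuclideanSpace ℝ (Fin k),
      (∀ x i, T x i = if i ∈ s then lam i * x i else x i) ∧
      ∀ f, Nice f → ∫ x, f x ∂ν ≤ ∫ x, f (T x) ∂ν := by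
  classical
  induction s using Finset.induction_on with
  | empty => exact ⟨ContinuousLinearMap.id ℝ _, by simp, fun f hf => le_rfl⟩
  | insert i s hi ih =>
    obtain ⟨T, hT, hT'⟩ := ih
    refine ⟨T.comp (scl (EuclideanSpace.single i 1) (lam i)), ?_, ?_⟩
    · intro x j
      rw [ContinuousLinearMap.comp_apply, hT, scl_apply]
      by_cases hj : j = i
      · subst hj
        simp [hi, EuclideanSpace.inner_single_right]
        ring
      · simp [hj]
    · intro f hf
      refine (hT' f hf).trans ?_
      have := spherical_scl (hf.comp T) ν hν (EuclideanSpace.single i 1) (by simp) (lam i)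
        (h0 i) (h1 i)
      simpa using this

lemma nice_exp {k : ℕ} {J : Type*} [Fintype J] (l : J → EuclideanSpace ℝ (Fin k) →L[ℝ] ℝ) (N : ℕ) :
    Nice (fun x => Real.exp (- ∑ j, (l j x) ^ (2 * N))) where
  smooth := by
    apply ContDiff.exp
    apply ContDiff.neg
    apply ContDiff.sum
    intro j _
    exact (l j).contDiff.pow _
  pos x := Real.exp_pos _
  le_one x := by
    rw [Real.exp_le_one_iff, neg_nonpos]
    apply Finset.sum_nonneg
    intro j _
    exact (even_two_mul N).pow_nonneg _
  even x := by
    simp only [map_neg, (even_two_mul N).neg_pow]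
  lc x y := by
    rw [← Real.exp_add, ← Real.exp_nat_mul, Real.exp_le_exp]
    have : ∀ j, 2 * (l j ((1/2 : ℝ) • (x + y))) ^ (2 * N)
        ≤ (l j x) ^ (2 * N) + (l j y) ^ (2 * N) := by
      intro j
      have hc := (Even.convexOn_pow (𝕜 := ℝ) (even_two_mul N)).2 (Set.mem_univ (l j x))
        (Set.mem_univ (l j y)) (show (0:ℝ) ≤ 1/2 by norm_num) (show (0:ℝ) ≤ 1/2 by norm_num)
        (by norm_num)
      simp only [smul_eq_mul] at hc
      rw [map_smul, map_add, smul_eq_mul, mul_add]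
      linarith
    have h2 := Finset.sum_le_sum (fun j (_ : j ∈ Finset.univ) => this j)
    rw [← Finset.mul_sum, Finset.sum_add_distrib] at h2
    push_cast
    linarith

lemma core_prob {k : ℕ} (ν : Measure (EuclideanSpace ℝ (Fin k))) [IsProbabilityMeasure ν]
    (T : EuclideanSpace ℝ (Fin k) →L[ℝ] EuclideanSpace ℝ (Fin k))
    (hT : ∀ f, Nice f → ∫ x, f x ∂ν ≤ ∫ x, f (T x) ∂ν)
    {J : Type*} [Fintype J] (l : J → EuclideanSpace ℝ (Fin k) →L[ℝ] ℝ)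
    (t t' : ℝ) (ht : 0 ≤ t) (htt : t < t') :
    ν.real {x | ∀ j, |l j x| ≤ t} ≤ ν.real {x | ∀ j, |l j (T x)| ≤ t'} := by
  set c := (t + t') / 2 with hc
  have hc0 : 0 < c := by rw [hc]; linarith
  have hmA : MeasurableSet {x | ∀ j, |l j x| ≤ t} := by
    have : {x | ∀ j, |l j x| ≤ t} = ⋂ j, {x | |l j x| ≤ t} := by ext; simp
    rw [this]
    refine MeasurableSet.iInter fun j => ?_
    exact measurableSet_le (by fun_prop) measurable_const
  have hmB : MeasurableSet {x | ∀ j, |l j (T x)| ≤ t'} := by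
    have : {x | ∀ j, |l j (T x)| ≤ t'} = ⋂ j, {x | |l j (T x)| ≤ t'} := by ext; simp
    rw [this]
    refine MeasurableSet.iInter fun j => ?_
    exact measurableSet_le (by fun_prop) measurable_const
  set A := {x | ∀ j, |l j x| ≤ t} with hA
  set B := {x | ∀ j, |l j (T x)| ≤ t'} with hB
  have key : ∀ N : ℕ, ν.real A * Real.exp (-(Fintype.card J * (t / c) ^ (2 * N))) ≤
      ν.real B + Real.exp (-(t' / c) ^ (2 * N)) := by
    intro N
    have hn := nice_exp (fun j => c⁻¹ • l j) N
    set F : EuclideanSpace ℝ (Fin k) → ℝ :=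
      fun x => Real.exp (- ∑ j, ((c⁻¹ • l j) x) ^ (2 * N)) with hF
    have bint : ∀ S : EuclideanSpace ℝ (Fin k) →L[ℝ] EuclideanSpace ℝ (Fin k),
        Integrable (fun x => F (S x)) ν := by
      intro S
      apply Integrable.of_bound (C := 1)
      · exact (hn.comp S).smooth.continuous.aestronglyMeasurable
      · refine Filter.Eventually.of_forall fun p => ?_
        rw [Real.norm_eq_abs, abs_of_pos (hn.pos _)]
        exact hn.le_one _
    have i1 : ν.real A * Real.exp (-(Fintype.card J * (t / c) ^ (2 * N))) ≤ ∫ x, F x ∂ν := by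
      rw [← smul_eq_mul, ← integral_indicator_const _ hmA]
      apply integral_mono ((integrable_const _).indicator hmA) (bint (ContinuousLinearMap.id ℝ _))
      intro x
      by_cases hx : x ∈ A
      · simp only [Set.indicator_of_mem hx]
        simp only [hF, ContinuousLinearMap.id_apply]
        rw [Real.exp_le_exp, neg_le_neg_iff]
        have : ∀ j ∈ Finset.univ, ((c⁻¹ • l j) x) ^ (2 * N) ≤ (t / c) ^ (2 * N) := by
          intro j _
          rw [← (even_two_mul N).pow_abs]
          apply pow_le_pow_left₀ (abs_nonneg _)
          rw [_root_.smul_apply, smul_eq_mul, abs_mul, abs_of_pos (inv_pos.2 hc0),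
            inv_mul_eq_div]
          exact div_le_div_of_nonneg_right (hx j) hc0.le
        have h2 := Finset.sum_le_card_nsmul _ _ _ this
        simpa using h2
      · simp only [Set.indicator_of_notMem hx]
        exact (hn.pos _).le
    have i2 : ∫ x, F (T x) ∂ν ≤ ν.real B + Real.exp (-(t' / c) ^ (2 * N)) := by
      have e1 : ν.real B + Real.exp (-(t' / c) ^ (2 * N)) =
          ∫ x, (B.indicator (fun _ => (1:ℝ)) x + Real.exp (-(t' / c) ^ (2 * N))) ∂ν := by
        rw [integral_add ((integrable_const _).indicator hmB) (integrable_const _),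
          integral_indicator_const _ hmB]
        simp
      rw [e1]
      apply integral_mono (bint T)
        (((integrable_const _).indicator hmB).add (integrable_const _))
      intro x
      show F (T x) ≤ B.indicator (fun _ => (1:ℝ)) x + Real.exp (-(t' / c) ^ (2 * N))
      by_cases hx : x ∈ B
      · simp only [Set.indicator_of_mem hx]
        have := hn.le_one (T x)
        have := Real.exp_pos (-(t' / c) ^ (2 * N))
        linarith
      · simp only [Set.indicator_of_notMem hx, zero_add]
        have : ∃ j, t' < |l j (T x)| := by
          by_contra hcon
          push Not at hcon
          exact hx hcon
        obtain ⟨j, hj⟩ := this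
        simp only [hF]
        rw [Real.exp_le_exp, neg_le_neg_iff]
        have h2 : (t' / c) ^ (2 * N) ≤ ((c⁻¹ • l j) (T x)) ^ (2 * N) := by
          rw [← (even_two_mul N).pow_abs ((c⁻¹ • l j) (T x))]
          apply pow_le_pow_left₀ (div_nonneg (by linarith) hc0.le)
          rw [_root_.smul_apply, smul_eq_mul, abs_mul, abs_of_pos (inv_pos.2 hc0),
            inv_mul_eq_div]
          exact div_le_div_of_nonneg_right hj.le hc0.le
        refine h2.trans ?_
        exact Finset.single_le_sum (f := fun j => ((c⁻¹ • l j) (T x)) ^ (2 * N))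
          (fun j _ => (even_two_mul N).pow_nonneg _) (Finset.mem_univ j)
    exact i1.trans ((hT F hn).trans i2)
  have h2N : Filter.Tendsto (fun N : ℕ => 2 * N) Filter.atTop Filter.atTop :=
    Filter.tendsto_id.const_mul_atTop' (by norm_num)
  have l1 : Filter.Tendsto (fun N : ℕ => ν.real A * Real.exp (-(Fintype.card J * (t / c) ^ (2 * N))))
      Filter.atTop (nhds (ν.real A * Real.exp (-(Fintype.card J * 0)))) := by
    apply Filter.Tendsto.const_mul
    apply (Real.continuous_exp.tendsto _).comp
    apply Filter.Tendsto.neg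
    apply Filter.Tendsto.const_mul
    refine (tendsto_pow_atTop_nhds_zero_of_lt_one (div_nonneg ht hc0.le) ?_).comp h2N
    rw [div_lt_one hc0, hc]
    linarith
  have l2 : Filter.Tendsto (fun N : ℕ => ν.real B + Real.exp (-(t' / c) ^ (2 * N)))
      Filter.atTop (nhds (ν.real B + 0)) := by
    apply Filter.Tendsto.const_add
    apply Real.tendsto_exp_neg_atTop_nhds_zero.comp
    refine (tendsto_pow_atTop_atTop_of_one_lt ?_).comp h2N
    rw [one_lt_div hc0, hc]
    linarith
  have := le_of_tendsto_of_tendsto' l1 l2 key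
  simpa using this


lemma psd_factor {n : ℕ} (S : Matrix (Fin n) (Fin n) ℝ) (hS : S.PosSemidef) :
    ∃ (k : ℕ) (B : Matrix (Fin n) (Fin k) ℝ) (L : Matrix (Fin k) (Fin n) ℝ),
      B * Bᵀ = S ∧ L * B = 1 := by
  classical
  set O : Matrix (Fin n) (Fin n) ℝ := (hS.1.eigenvectorUnitary : Matrix (Fin n) (Fin n) ℝ) with hO
  set d := hS.1.eigenvalues with hd
  have hd0 : ∀ i, 0 ≤ d i := hS.eigenvalues_nonneg
  have hOO : Oᵀ * O = 1 := by
    have := (Matrix.mem_unitaryGroup_iff' (A := O)).1 hS.1.eigenvectorUnitary.2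
    simpa [Matrix.star_eq_conjTranspose] using this
  have hSd : S = O * diagonal d * Oᵀ := by
    have := hS.1.spectral_theorem
    rw [Unitary.conjStarAlgAut_apply] at this
    simpa [Matrix.star_eq_conjTranspose, Function.comp_def] using this
  let ι := {a : Fin n // d a ≠ 0}
  let e : ι ≃ Fin (Fintype.card ι) := Fintype.equivFin ι
  refine ⟨Fintype.card ι, Matrix.of fun i a => O i (e.symm a).1 * √(d (e.symm a).1),
    Matrix.of fun a i => O i (e.symm a).1 / √(d (e.symm a).1), ?_, ?_⟩
  · ext i j
    rw [hSd]
    simp only [Matrix.mul_apply, Matrix.transpose_apply, Matrix.of_apply, Matrix.diagonal_apply]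
    rw [Equiv.sum_comp e.symm (fun a : ι => O i a.1 * √(d a.1) * (O j a.1 * √(d a.1)))]
    have h1 : ∀ a : Fin n, O i a * √(d a) * (O j a * √(d a)) = O i a * d a * O j a := by
      intro a
      calc O i a * √(d a) * (O j a * √(d a)) = O i a * (√(d a) * √(d a)) * O j a := by ring
        _ = _ := by rw [Real.mul_self_sqrt (hd0 a)]
    simp only [h1]
    simp only [mul_ite, mul_zero, Finset.sum_ite_eq', Finset.mem_univ, if_true]
    rw [← Finset.sum_subtype (Finset.univ.filter fun a => d a ≠ 0) (by simp)
      (fun a => O i a * d a * O j a)]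
    rw [Finset.sum_filter]
    refine Finset.sum_congr rfl fun a _ => ?_
    by_cases ha : d a = 0
    · simp [ha]
    · simp [ha]
  · ext a b
    simp only [Matrix.mul_apply, Matrix.of_apply, Matrix.one_apply]
    have h2 : ∀ a b, ∑ i, O i a * O i b = if a = b then 1 else 0 := by
      intro a b
      have := congrFun (congrFun hOO a) b
      simpa [Matrix.mul_apply, Matrix.one_apply] using this
    have h3 : ∀ x : Fin n, O x (e.symm a).1 / √(d (e.symm a).1) * (O x (e.symm b).1 * √(d (e.symm b).1))
      = (√(d (e.symm b).1) / √(d (e.symm a).1)) * (O x (e.symm a).1 * O x (e.symm b).1) := by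
      intro x; ring
    simp only [h3]
    rw [← Finset.mul_sum, h2]
    by_cases hab : a = b
    · subst hab
      have : 0 < d (e.symm a).1 := lt_of_le_of_ne (hd0 _) (Ne.symm (e.symm a).2)
      have := Real.sqrt_pos.2 this
      simp [this.ne']
    · have : (e.symm a).1 ≠ (e.symm b).1 := fun h => hab (e.symm.injective (Subtype.ext h))
      simp [hab, this]

lemma psd_pair {n : ℕ} (Sx Sy : Matrix (Fin n) (Fin n) ℝ) (hSx : Sx.PosSemidef)
    (hSy : Sy.PosSemidef) (hle : (Sy - Sx).PosSemidef) :
    ∃ (k : ℕ) (B : Matrix (Fin n) (Fin k) ℝ) (L : Matrix (Fin k) (Fin n) ℝ) (lam : Fin k → ℝ),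
      (∀ i, 0 ≤ lam i) ∧ (∀ i, lam i ≤ 1) ∧ B * Bᵀ = Sy ∧ L * B = 1 ∧
      B * diagonal lam * (B * diagonal lam)ᵀ = Sx := by
  classical
  obtain ⟨k, B, L, hB, hL⟩ := psd_factor Sy hSy
  have hSxT : Sxᵀ = Sx := by simpa [Matrix.IsHermitian] using hSx.1
  have hLT : Bᵀ * Lᵀ = 1 := by rw [← Matrix.transpose_mul, hL, Matrix.transpose_one]
  -- Sx vanishes on the kernel part
  have hker : Sx * (1 - B * L)ᵀ = 0 := by
    refine Matrix.ext_of_mulVec_single fun i => ?_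
    rw [← Matrix.mulVec_mulVec, Matrix.zero_mulVec]
    set w := (1 - B * L)ᵀ *ᵥ Pi.single i (1:ℝ) with hw
    have h1 : Sy *ᵥ w = 0 := by
      have : Sy * (1 - B * L)ᵀ = 0 := by
        rw [Matrix.transpose_sub, Matrix.transpose_one, Matrix.transpose_mul, Matrix.mul_sub,
          Matrix.mul_one, ← hB, Matrix.mul_assoc, ← Matrix.mul_assoc Bᵀ, hLT, Matrix.one_mul,
          sub_self]
      rw [hw, Matrix.mulVec_mulVec, this, Matrix.zero_mulVec]
    have h2 := hle.dotProduct_mulVec_nonneg w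
    have h3 := hSx.dotProduct_mulVec_nonneg w
    rw [Matrix.sub_mulVec, h1, zero_sub, dotProduct_neg] at h2
    exact (hSx.dotProduct_mulVec_zero_iff w).1 (le_antisymm (by linarith) h3)
  have hSx1 : Sx * (Lᵀ * Bᵀ) = Sx := by
    rw [Matrix.transpose_sub, Matrix.transpose_one, Matrix.transpose_mul, Matrix.mul_sub,
      Matrix.mul_one, sub_eq_zero] at hker
    exact hker.symm
  have hSx2 : (B * L) * Sx = Sx := by
    have := congrArg Matrix.transpose hSx1
    simpa [Matrix.transpose_mul, hSxT] using this
  set Q := L * Sx * Lᵀ with hQ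
  have hQp : Q.PosSemidef := by
    have := hSx.mul_mul_conjTranspose_same L
    simpa using this
  have hQ1 : (1 - Q).PosSemidef := by
    have := hle.mul_mul_conjTranspose_same L
    have e : L * (Sy - Sx) * Lᵀ = 1 - Q := by
      rw [Matrix.mul_sub, Matrix.sub_mul, ← hB, ← Matrix.mul_assoc, hL, Matrix.one_mul, hLT]
    simpa [e] using this
  set U : Matrix (Fin k) (Fin k) ℝ := (hQp.1.eigenvectorUnitary : Matrix (Fin k) (Fin k) ℝ) with hU
  set d := hQp.1.eigenvalues with hd
  have hd0 : ∀ i, 0 ≤ d i := hQp.eigenvalues_nonneg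
  have hUU : Uᵀ * U = 1 := by
    have := (Matrix.mem_unitaryGroup_iff' (A := U)).1 hQp.1.eigenvectorUnitary.2
    simpa [Matrix.star_eq_conjTranspose] using this
  have hUU' : U * Uᵀ = 1 := by
    have := (Matrix.mem_unitaryGroup_iff (A := U)).1 hQp.1.eigenvectorUnitary.2
    simpa [Matrix.star_eq_conjTranspose] using this
  have hQd : Q = U * diagonal d * Uᵀ := by
    have := hQp.1.spectral_theorem
    rw [Unitary.conjStarAlgAut_apply] at this
    simpa [Matrix.star_eq_conjTranspose, Function.comp_def] using this
  have hd1 : ∀ i, d i ≤ 1 := by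
    have h := hQ1.mul_mul_conjTranspose_same Uᵀ
    have e : Uᵀ * (1 - Q) * U = diagonal (fun i => 1 - d i) := by
      have : Uᵀ * Q * U = diagonal d := by
        rw [hQd]
        calc Uᵀ * (U * diagonal d * Uᵀ) * U = (Uᵀ * U) * diagonal d * (Uᵀ * U) := by
              simp only [Matrix.mul_assoc]
          _ = _ := by rw [hUU, Matrix.one_mul, Matrix.mul_one]
      rw [Matrix.mul_sub, Matrix.sub_mul, Matrix.mul_one, hUU, this, ← Matrix.diagonal_one,
        Matrix.diagonal_sub]
    have h' : (diagonal (fun i => 1 - d i) : Matrix (Fin k) (Fin k) ℝ).PosSemidef := by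
      rw [← e]; simpa using h
    intro i
    have := (Matrix.posSemidef_diagonal_iff.1 h') i
    linarith
  refine ⟨k, B * U, Uᵀ * L, fun i => √(d i), fun i => Real.sqrt_nonneg _,
    fun i => Real.sqrt_le_one.2 (hd1 i), ?_, ?_, ?_⟩
  · rw [Matrix.transpose_mul]
    calc B * U * (Uᵀ * Bᵀ) = B * (U * Uᵀ) * Bᵀ := by simp only [Matrix.mul_assoc]
      _ = _ := by rw [hUU', Matrix.mul_one, hB]
  · calc Uᵀ * L * (B * U) = Uᵀ * (L * B) * U := by simp only [Matrix.mul_assoc]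
      _ = _ := by rw [hL, Matrix.mul_one, hUU]
  · have hdd : diagonal (fun i => √(d i)) * diagonal (fun i => √(d i)) = diagonal d := by
      rw [Matrix.diagonal_mul_diagonal]
      congr 1
      funext i
      exact Real.mul_self_sqrt (hd0 i)
    rw [Matrix.transpose_mul, Matrix.transpose_mul, Matrix.diagonal_transpose]
    calc B * U * diagonal (fun i => √(d i)) * (diagonal (fun i => √(d i)) * (Uᵀ * Bᵀ))
        = B * (U * (diagonal (fun i => √(d i)) * diagonal (fun i => √(d i))) * Uᵀ) * Bᵀ := by
          simp only [Matrix.mul_assoc]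
      _ = B * Q * Bᵀ := by rw [hdd, ← hQd]
      _ = (B * L) * (Sx * (Lᵀ * Bᵀ)) := by rw [hQ]; simp only [Matrix.mul_assoc]
      _ = Sx := by rw [hSx1, hSx2]

lemma gini_nonneg' {n : ℕ} (x : Fin n → ℝ) : 0 ≤ gini x := by
  unfold gini
  positivity

noncomputable def sgnFun {n : ℕ} (ε : Fin n → Fin n → SignType) (y : Fin n → ℝ) : ℝ :=
  (1 / (n : ℝ) ^ 2) * ∑ i, ∑ j, (ε i j : ℝ) * (y i - y j)

lemma gini_le_iff {n : ℕ} (y : Fin n → ℝ) (t : ℝ) :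
    gini y ≤ t ↔ ∀ ε : Fin n → Fin n → SignType, |sgnFun ε y| ≤ t := by
  constructor
  · intro h ε
    refine le_trans ?_ h
    unfold sgnFun gini
    rw [abs_mul, abs_of_nonneg (by positivity : (0:ℝ) ≤ 1 / (n:ℝ)^2)]
    apply mul_le_mul_of_nonneg_left _ (by positivity)
    refine (Finset.abs_sum_le_sum_abs _ _).trans (Finset.sum_le_sum fun i _ => ?_)
    refine (Finset.abs_sum_le_sum_abs _ _).trans (Finset.sum_le_sum fun j _ => ?_)
    rw [abs_mul]
    have : |((ε i j : SignType) : ℝ)| ≤ 1 := by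
      cases ε i j <;> simp
    nlinarith [abs_nonneg (y i - y j)]
  · intro h
    have := h (fun i j => SignType.sign (y i - y j))
    refine le_trans ?_ ((le_abs_self _).trans this)
    unfold sgnFun gini
    simp only [sign_mul_self]
    exact le_rfl

lemma law_eq {n : ℕ} {Ω Ω' : Type*} [MeasurableSpace Ω] [MeasurableSpace Ω'] (P : Measure Ω)
    [IsProbabilityMeasure P] (P' : Measure Ω') [IsProbabilityMeasure P']
    (X : Ω → Fin n → ℝ) (Y : Ω' → Fin n → ℝ) (hX : Measurable X) (hY : Measurable Y)
    (h : ∀ t, charFn P X t = charFn P' Y t) : P.map X = P'.map Y := by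
  have hm : Measurable (WithLp.toLp 2 : (Fin n → ℝ) → EuclideanSpace ℝ (Fin n)) := by fun_prop
  have hm' : Measurable (WithLp.ofLp : EuclideanSpace ℝ (Fin n) → (Fin n → ℝ)) := by fun_prop
  have key : (P.map X).map (WithLp.toLp 2 : _ → EuclideanSpace ℝ (Fin n)) =
      (P'.map Y).map (WithLp.toLp 2) := by
    have := Measure.isProbabilityMeasure_map (μ := P) hX.aemeasurable
    have := Measure.isProbabilityMeasure_map (μ := P') hY.aemeasurable
    have := Measure.isProbabilityMeasure_map (μ := P.map X) hm.aemeasurable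
    have := Measure.isProbabilityMeasure_map (μ := P'.map Y) hm.aemeasurable
    apply Measure.ext_of_charFun
    funext s
    have := h s.ofLp
    unfold charFn at this
    rw [charFun_apply, charFun_apply, Measure.map_map hm hX, Measure.map_map hm hY,
      integral_map (hm.comp hX).aemeasurable (by fun_prop),
      integral_map (hm.comp hY).aemeasurable (by fun_prop)]
    simpa [PiLp.inner_apply] using this
  have := congrArg (Measure.map (WithLp.ofLp : EuclideanSpace ℝ (Fin n) → (Fin n → ℝ))) key
  rw [Measure.map_map hm' hm, Measure.map_map hm' hm] at this
  simpa [Function.comp_def] using this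

lemma charFn_sub {n : ℕ} {Ω : Type*} [MeasurableSpace Ω] (P : Measure Ω)
    (X : Ω → Fin n → ℝ) (μ : Fin n → ℝ) (t : Fin n → ℝ) (z : ℂ)
    (h : charFn P X t = Complex.exp (((∑ i, t i * μ i : ℝ) : ℂ) * Complex.I) * z) :
    charFn P (fun ω => X ω - μ) t = z := by
  have e : charFn P (fun ω => X ω - μ) t =
      Complex.exp (-(((∑ i, t i * μ i : ℝ) : ℂ) * Complex.I)) * charFn P X t := by
    unfold charFn
    rw [← integral_const_mul]
    congr 1
    funext ω
    rw [← Complex.exp_add]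
    congr 1
    simp only [Pi.sub_apply, mul_sub, Finset.sum_sub_distrib]
    push_cast
    ring
  rw [e, h, ← mul_assoc, ← Complex.exp_add]
  simp

lemma charFn_mulVec {n k : ℕ} {Ω : Type*} [MeasurableSpace Ω] (P : Measure Ω)
    (X : Ω → Fin n → ℝ) (M : Matrix (Fin k) (Fin n) ℝ) (t : Fin k → ℝ) :
    charFn P (fun ω => M *ᵥ X ω) t = charFn P X (Mᵀ *ᵥ t) := by
  unfold charFn
  congr 1
  funext ω
  congr 3
  have := Matrix.dotProduct_mulVec t M (X ω)
  rw [← Matrix.mulVec_transpose] at this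
  exact this

lemma charFn_toLp {k : ℕ} {Ω : Type*} [MeasurableSpace Ω] (P : Measure Ω)
    (Z : Ω → Fin k → ℝ) (hZ : Measurable Z) (s : EuclideanSpace ℝ (Fin k)) :
    charFun (P.map (fun ω => (WithLp.toLp 2 (Z ω) : EuclideanSpace ℝ (Fin k)))) s =
      charFn P Z s.ofLp := by
  have hm : Measurable (fun ω => (WithLp.toLp 2 (Z ω) : EuclideanSpace ℝ (Fin k))) := by fun_prop
  unfold charFn
  rw [charFun_apply, integral_map hm.aemeasurable (by fun_prop)]
  simp [PiLp.inner_apply]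

lemma quad_mul {n k : ℕ} (B : Matrix (Fin n) (Fin k) ℝ) (t : Fin n → ℝ) :
    t ⬝ᵥ (B * Bᵀ) *ᵥ t = (Bᵀ *ᵥ t) ⬝ᵥ (Bᵀ *ᵥ t) := by
  rw [← Matrix.mulVec_mulVec, Matrix.dotProduct_mulVec, ← Matrix.mulVec_transpose]

lemma gini_meas {n : ℕ} : Measurable (gini : (Fin n → ℝ) → ℝ) := by
  unfold gini
  fun_prop

lemma gini_main {Ω : Type*} [MeasurableSpace Ω]
    (P : Measure Ω) [IsProbabilityMeasure P] {n : ℕ}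
    (X Y : Ω → Fin n → ℝ) (hX : Measurable X) (hY : Measurable Y)
    (Sx Sy : Matrix (Fin n) (Fin n) ℝ)
    (hSx : Sx.PosSemidef) (hSy : Sy.PosSemidef)
    (φ : ℝ → ℂ)
    (hXell : ∀ t : Fin n → ℝ, charFn P X t = φ (t ⬝ᵥ Sx *ᵥ t))
    (hYell : ∀ t : Fin n → ℝ, charFn P Y t = φ (t ⬝ᵥ Sy *ᵥ t))
    (hle : (Sy - Sx).PosSemidef) (t t' : ℝ) (ht : 0 ≤ t) (htt : t < t') :
    P.real {ω | gini (Y ω) ≤ t} ≤ P.real {ω | gini (X ω) ≤ t'} := by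
  classical
  obtain ⟨k, B, L, lam, hl0, hl1, hB, hL, hBl⟩ := psd_pair Sx Sy hSx hSy hle
  have hLT : Bᵀ * Lᵀ = 1 := by rw [← Matrix.transpose_mul, hL, Matrix.transpose_one]
  have hmv : ∀ {p q : ℕ} (M : Matrix (Fin p) (Fin q) ℝ),
      Measurable (fun v : Fin q → ℝ => M *ᵥ v) := by
    intro p q M
    exact (Continuous.matrix_mulVec continuous_const continuous_id).measurable
  set Z : Ω → Fin k → ℝ := fun ω => L *ᵥ Y ω with hZ
  have hZm : Measurable Z := (hmv L).comp hY
  have hZc : ∀ s, charFn P Z s = φ (s ⬝ᵥ s) := by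
    intro s
    rw [hZ, charFn_mulVec, hYell, ← hB, quad_mul, Matrix.mulVec_mulVec, hLT, Matrix.one_mulVec]
  set Zt : Ω → EuclideanSpace ℝ (Fin k) := fun ω => WithLp.toLp 2 (Z ω) with hZt
  have hZtm : Measurable Zt := by fun_prop
  set ν := P.map Zt with hν
  have : IsProbabilityMeasure ν := Measure.isProbabilityMeasure_map hZtm.aemeasurable
  have hνc : ∀ v v', ‖v‖ = ‖v'‖ → charFun ν v = charFun ν v' := by
    intro v v' h
    rw [hν, hZt, charFn_toLp P Z hZm, charFn_toLp P Z hZm, hZc, hZc]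
    congr 1
    have e : ∀ v : EuclideanSpace ℝ (Fin k), v.ofLp ⬝ᵥ v.ofLp = ‖v‖ ^ 2 := by
      intro v
      rw [EuclideanSpace.norm_sq_eq]
      simp [dotProduct, sq]
    rw [e, e, h]
  obtain ⟨T, hT, hTn⟩ := spherical_diag ν hνc lam hl0 hl1 Finset.univ
  have hT' : ∀ x : EuclideanSpace ℝ (Fin k), (T x).ofLp = diagonal lam *ᵥ x.ofLp := by
    intro x
    funext i
    rw [hT, Matrix.mulVec_diagonal]
    simp
  have lawY : P.map Y = P.map (fun ω => B *ᵥ Z ω) := by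
    apply law_eq P P _ _ hY ((hmv B).comp hZm)
    intro s
    refine Eq.trans ?_ (charFn_mulVec P Z B s).symm
    rw [hZc, hYell, ← hB, quad_mul]
  have lawX : P.map X = P.map (fun ω => (B * diagonal lam) *ᵥ Z ω) := by
    apply law_eq P P _ _ hX ((hmv _).comp hZm)
    intro s
    refine Eq.trans ?_ (charFn_mulVec P Z (B * diagonal lam) s).symm
    rw [hZc, hXell, ← hBl, quad_mul]
  have hgm : ∀ u : ℝ, MeasurableSet {y : Fin n → ℝ | gini y ≤ u} := fun u =>
    measurableSet_le gini_meas measurable_const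
  have eY : P.real {ω | gini (Y ω) ≤ t} = P.real {ω | gini (B *ᵥ Z ω) ≤ t} := by
    have h1 := map_measureReal_apply (μ := P) hY (hgm t)
    have h2 := map_measureReal_apply (μ := P) ((hmv B).comp hZm) (hgm t)
    refine h1.symm.trans (Eq.trans ?_ h2)
    rw [lawY]
    rfl
  have eX : P.real {ω | gini (X ω) ≤ t'} =
      P.real {ω | gini ((B * diagonal lam) *ᵥ Z ω) ≤ t'} := by
    have h1 := map_measureReal_apply (μ := P) hX (hgm t')
    have h2 := map_measureReal_apply (μ := P) ((hmv (B * diagonal lam)).comp hZm) (hgm t')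
    refine h1.symm.trans (Eq.trans ?_ h2)
    rw [lawX]
    rfl
  let ll : (Fin n → Fin n → SignType) → EuclideanSpace ℝ (Fin k) →L[ℝ] ℝ := fun ε =>
    LinearMap.toContinuousLinearMap
      { toFun := fun x => sgnFun ε (B *ᵥ x.ofLp)
        map_add' := by
          intro x y
          simp only [sgnFun, WithLp.ofLp_add, Matrix.mulVec_add, Pi.add_apply, ← mul_add,
            ← Finset.sum_add_distrib]
          congr 1
          refine Finset.sum_congr rfl fun i _ => Finset.sum_congr rfl fun j _ => ?_
          ring
        map_smul' := by
          intro c x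
          simp only [sgnFun, WithLp.ofLp_smul, Matrix.mulVec_smul, Pi.smul_apply, smul_eq_mul,
            RingHom.id_apply]
          rw [mul_left_comm]
          congr 1
          rw [Finset.mul_sum]
          refine Finset.sum_congr rfl fun i _ => ?_
          rw [Finset.mul_sum]
          refine Finset.sum_congr rfl fun j _ => ?_
          ring }
  have hll : ∀ ε x, ll ε x = sgnFun ε (B *ᵥ x.ofLp) := fun ε x => rfl
  have main := core_prob ν T hTn ll t t' ht htt
  have hBm : Measurable (fun x : EuclideanSpace ℝ (Fin k) => B *ᵥ x.ofLp) :=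
    (hmv B).comp (by fun_prop)
  have s1 : {x | ∀ j, |ll j x| ≤ t} = {x | gini (B *ᵥ x.ofLp) ≤ t} := by
    ext x
    simp only [Set.mem_ofPred_eq, hll, gini_le_iff]
  have s2 : {x | ∀ j, |ll j (T x)| ≤ t'} = {x | gini (B *ᵥ (T x).ofLp) ≤ t'} := by
    ext x
    simp only [Set.mem_ofPred_eq, hll, gini_le_iff]
  have m1 := map_measureReal_apply (μ := P) hZtm (hBm (hgm t))
  have m2 := map_measureReal_apply (μ := P) hZtm ((hBm.comp T.continuous.measurable) (hgm t'))
  have e2 : P.real {ω | gini ((B * diagonal lam) *ᵥ Z ω) ≤ t'} =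
      P.real {ω | gini (B *ᵥ (T (Zt ω)).ofLp) ≤ t'} := by
    simp only [hT', Matrix.mulVec_mulVec, hZt]
  rw [s1, s2] at main
  rw [eY, eX, e2]
  exact (m1.symm.le.trans main).trans m2.le

lemma gini_main' {Ω : Type*} [MeasurableSpace Ω]
    (P : Measure Ω) [IsProbabilityMeasure P] {n : ℕ}
    (X Y : Ω → Fin n → ℝ) (hX : Measurable X) (hY : Measurable Y)
    (Sx Sy : Matrix (Fin n) (Fin n) ℝ)
    (hSx : Sx.PosSemidef) (hSy : Sy.PosSemidef)
    (φ : ℝ → ℂ)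
    (hXell : ∀ t : Fin n → ℝ, charFn P X t = φ (t ⬝ᵥ Sx *ᵥ t))
    (hYell : ∀ t : Fin n → ℝ, charFn P Y t = φ (t ⬝ᵥ Sy *ᵥ t))
    (hle : (Sy - Sx).PosSemidef) (t : ℝ) :
    P {ω | t < gini (X ω)} ≤ P {ω | t < gini (Y ω)} := by
  rcases lt_or_ge t 0 with ht | ht
  · have : {ω | t < gini (Y ω)} = Set.univ := by
      ext ω
      simpa using lt_of_lt_of_le ht (gini_nonneg' (Y ω))
    rw [this]
    exact measure_mono (Set.subset_univ _)
  · have step : ∀ t', t < t' → P {ω | t' < gini (X ω)} ≤ P {ω | t < gini (Y ω)} := by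
      intro t' htt
      have h := gini_main P X Y hX hY Sx Sy hSx hSy φ hXell hYell hle t t' ht htt
      have c1 : {ω | t' < gini (X ω)} = {ω | gini (X ω) ≤ t'}ᶜ := by ext; simp
      have c2 : {ω | t < gini (Y ω)} = {ω | gini (Y ω) ≤ t}ᶜ := by ext; simp
      have m1 : MeasurableSet {ω | gini (X ω) ≤ t'} :=
        measurableSet_le (gini_meas.comp hX) measurable_const
      have m2 : MeasurableSet {ω | gini (Y ω) ≤ t} :=
        measurableSet_le (gini_meas.comp hY) measurable_const
      rw [c1, c2, prob_compl_eq_one_sub m1, prob_compl_eq_one_sub m2]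
      apply tsub_le_tsub_left
      exact (ENNReal.toReal_le_toReal (measure_ne_top _ _) (measure_ne_top _ _)).1 h
    have hU : {ω | t < gini (X ω)} = ⋃ m : ℕ, {ω | t + 1 / ((m:ℝ) + 1) < gini (X ω)} := by
      ext ω
      simp only [Set.mem_ofPred_eq, Set.mem_iUnion]
      constructor
      · intro h
        obtain ⟨m, hm⟩ := exists_nat_one_div_lt (sub_pos.2 h)
        exact ⟨m, by linarith⟩
      · rintro ⟨m, hm⟩
        have : (0:ℝ) < 1 / ((m:ℝ) + 1) := by positivity
        linarith
    have hmono : Monotone (fun m : ℕ => {ω | t + 1 / ((m:ℝ) + 1) < gini (X ω)}) := by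
      intro a b hab ω hω
      have := one_div_le_one_div_of_le (by positivity : (0:ℝ) < (a:ℝ) + 1)
        (by have : (a:ℝ) ≤ b := by exact_mod_cast hab
            linarith : (a:ℝ) + 1 ≤ (b:ℝ) + 1)
      simp only [Set.mem_ofPred_eq] at hω ⊢
      linarith
    rw [hU, hmono.measure_iUnion]
    apply iSup_le
    intro m
    apply step
    have : (0:ℝ) < 1 / ((m:ℝ) + 1) := by positivity
    linarith

theorem gini_st_order_elliptical {Ω : Type*} [MeasurableSpace Ω]
    (P : Measure Ω) [IsProbabilityMeasure P] {n : ℕ}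
    (X Y : Ω → Fin n → ℝ) (hX : Measurable X) (hY : Measurable Y)
    (μ : Fin n → ℝ) (Sx Sy : Matrix (Fin n) (Fin n) ℝ)
    (hSx : Sx.PosSemidef) (hSy : Sy.PosSemidef)
    (φ : ℝ → ℂ)
    (hXell : ∀ t : Fin n → ℝ,
      charFn P X t = Complex.exp (((∑ i, t i * μ i : ℝ) : ℂ) * Complex.I) * φ (t ⬝ᵥ Sx *ᵥ t))
    (hYell : ∀ t : Fin n → ℝ,
      charFn P Y t = Complex.exp (((∑ i, t i * μ i : ℝ) : ℂ) * Complex.I) * φ (t ⬝ᵥ Sy *ᵥ t))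
    (hle : (Sy - Sx).PosSemidef) :
    (∀ t : ℝ, P {ω | t < gini (X ω - μ)} ≤ P {ω | t < gini (Y ω - μ)}) ∧
    (∀ c : ℝ, μ = (fun _ => c) →
      ∀ t : ℝ, P {ω | t < gini (X ω)} ≤ P {ω | t < gini (Y ω)}) := by
  have h1 : ∀ t : ℝ, P {ω | t < gini (X ω - μ)} ≤ P {ω | t < gini (Y ω - μ)} :=
    gini_main' P (fun ω => X ω - μ) (fun ω => Y ω - μ) (hX.sub_const μ) (hY.sub_const μ)
      Sx Sy hSx hSy φ (fun t => charFn_sub P X μ t _ (hXell t))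
      (fun t => charFn_sub P Y μ t _ (hYell t)) hle
  refine ⟨h1, ?_⟩
  intro c hc t
  have h2 : ∀ x : Fin n → ℝ, gini (x - μ) = gini x := by
    intro x
    simp [gini, hc]
  simpa only [h2] using h1 t
end
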